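/- Let b>0 and B<3 be fixed real constants, and let m:ℕ→ℕ satisfy bn ≤ m(n) ≤ Bn for all sufficiently large n. Then there exists a constant α>0 (depending only on b and B) such that, for all sufficiently large n, the probability that P_{n,m(n)} has fewer than αn pendant edges is less than e^{−αn}. -/

import Mathlib

/-!
Write `L` for the number of vertices of degree one. Since `L ≤ 2 * pendantCount`, it suffices that
planar graphs with `L ≤ α n` are exponentially rare (`low_rare`). Two arguments cover the
range `b n ≤ m ≤ B n`.

**Many edges, `m ≥ (1 + ε) n`** (`global_case`). Gluing two connected planar graphs along a new edge
shows that the normalised number `gg n m` of connected planar graphs is supermultiplicative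
(`gg_mul`). It is at most exponential, because there are at most `C ^ n * n!` planar graphs
(`smallness`), and at least exponential strictly inside the cone of possible densities (`gg_lower`).
Fekete's lemma then gives `gg (n + k) (m + k + j) ≤ exp (K δ n) * gg n m` for `j ≤ k ≤ δ n`, with `K`
not depending on `δ` (`gg_ratio`); joining up components transfers this to all planar
graphs (`planar_ratio`). On the other hand, attaching `k ≈ δ n` new pendant vertices to a graph with
few leaves can be done in about `n ^ k` ways up to relabelling, while only about `(3 δ n) ^ k` such
operations lead to the same graph, as the attached vertices are among its few leaves
(`attach_iter`). So graphs with few leaves make up a proportion of at most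
`(3 δ) ^ k * exp (K δ n)`, which is exponentially small once `δ` is small.

**Few edges, `m ≤ 1.01 n`** (`local_case`). A graph with few leaves has linearly many isolated
vertices, vertices of degree two with non-adjacent neighbours, or triangle components (`some_move`).
In each case there is a planarity-preserving switching with the same `n` and `m` that creates a
leaf and at most four in total (`move_iso`, `move_path`, `move_tri`), and each round gains a
factor of order `n / L`; `δ n` rounds give an exponential factor.

Planarity means the absence of `K₅`- and `K₃,₃`-minors; what is used of it is closure under
subgraphs, contractions, disjoint unions and added bridges, a linear bound on the number of edges
(through `mader`), and the planarity of the graphs `gad n`, which have at least `3 n - 9` edges.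
-/


open SimpleGraph Filter Asymptotics

/-- `H` is a minor of `G`: to each vertex of `H` we can assign a connected nonempty
branch set in `G`, pairwise disjoint, with an edge of `G` between the branch sets of
any two adjacent vertices of `H`. -/
def IsMinor {α β : Type*} (H : SimpleGraph α) (G : SimpleGraph β) : Prop :=
  ∃ f : α → Set β,
    (∀ a, (G.induce (f a)).Connected) ∧
    (∀ a b, a ≠ b → Disjoint (f a) (f b)) ∧
    (∀ a b, H.Adj a b → ∃ u ∈ f a, ∃ v ∈ f b, G.Adj u v)

/-- A graph is planar iff it has neither a `K₅`-minor nor a `K₃,₃`-minor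
(Wagner's theorem). -/
def IsPlanar {V : Type*} (G : SimpleGraph V) : Prop :=
  ¬ IsMinor (completeGraph (Fin 5)) G ∧
    ¬ IsMinor (completeBipartiteGraph (Fin 3) (Fin 3)) G

/-- The number of edges of a graph. -/
noncomputable def edgeCount {V : Type*} (G : SimpleGraph V) : ℕ :=
  G.edgeSet.ncard

/-- The degree of a vertex. -/
noncomputable def vertexDegree {V : Type*} (G : SimpleGraph V) (v : V) : ℕ :=
  (G.neighborSet v).ncard

/-- `𝒫(n,m)`: the set of labelled planar graphs on `{1,…,n}` with exactly `m` edges. -/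
def planarSet (n m : ℕ) : Set (SimpleGraph (Fin n)) :=
  {G | IsPlanar G ∧ edgeCount G = m}

/-- The probability that the uniform random planar graph `P_{n,m}` satisfies `P`. -/
noncomputable def planarProb (n m : ℕ) (P : SimpleGraph (Fin n) → Prop) : ℝ :=
  ({G ∈ planarSet n m | P G}.ncard : ℝ) / ((planarSet n m).ncard : ℝ)

/-- The number of pendant edges (edges incident to a vertex of degree 1). -/
noncomputable def pendantCount {V : Type*} (G : SimpleGraph V) : ℕ :=
  {e ∈ G.edgeSet | ∃ v ∈ e, vertexDegree G v = 1}.ncard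

/-- The set of addable non-edges of `G`: non-edges whose addition keeps the graph planar. -/
def addableSet {V : Type*} (G : SimpleGraph V) : Set (Sym2 V) :=
  {e | ¬ e.IsDiag ∧ e ∉ G.edgeSet ∧ IsPlanar (G ⊔ SimpleGraph.fromEdgeSet {e})}

/-- `add(n,m)`: the minimum number of addable non-edges over all graphs in `𝒫(n,m)`. -/
noncomputable def addMin (n m : ℕ) : ℕ :=
  sInf ((fun G => (addableSet G).ncard) '' planarSet n m)

/-- `W` carries an induced order-preserving copy of `H` in `G`: the increasing bijection
from `{1,…,h}` to `W` is an isomorphism between `H` and the induced subgraph `G[W]`. -/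
def IsOrderCopy {h n : ℕ} (H : SimpleGraph (Fin h)) (G : SimpleGraph (Fin n))
    (W : Finset (Fin n)) : Prop :=
  ∃ hW : W.card = h,
    ∀ i j : Fin h,
      H.Adj i j ↔ G.Adj ((W.orderIsoOfFin hW i : Fin n)) ((W.orderIsoOfFin hW j : Fin n))

/-- `W` is the vertex set of a connected component of `G`. -/
def IsComponent {V : Type*} (G : SimpleGraph V) (W : Finset V) : Prop :=
  (G.induce (W : Set V)).Connected ∧ ∀ v ∈ W, ∀ u, G.Adj v u → u ∈ W

/-- The number of components of `G` admitting an order-preserving isomorphism to `H`. -/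
noncomputable def numOrderComponents {h n : ℕ} (H : SimpleGraph (Fin h))
    (G : SimpleGraph (Fin n)) : ℕ :=
  {W : Finset (Fin n) | IsComponent G W ∧ IsOrderCopy H G W}.ncard

/-- The number of distinct cycles (as subgraphs, identified with their edge sets) of
length at most `k` in `S`. -/
noncomputable def cycleCountLe {V : Type*} (S : SimpleGraph V) (k : ℕ) : ℕ :=
  {E : Set (Sym2 V) | ∃ (v : V) (c : S.Walk v v),
    c.IsCycle ∧ c.length ≤ k ∧ {e | e ∈ c.edges} = E}.ncard

namespace PendantEdges

/-! ### Minors and planarity-preserving operations -/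

/-- `s` is nonempty and any two of its points are joined by a walk of `G` inside `s`. -/
def ConnOn {V : Type*} (G : SimpleGraph V) (s : Set V) : Prop :=
  s.Nonempty ∧ ∀ x ∈ s, ∀ y ∈ s,
    Relation.ReflTransGen (fun p q => G.Adj p q ∧ p ∈ s ∧ q ∈ s) x y

theorem connOn_iff {V : Type*} (G : SimpleGraph V) (s : Set V) :
    (G.induce s).Connected ↔ ConnOn G s := by
  constructor
  · intro h
    obtain ⟨⟨x, hx⟩⟩ := h.nonempty
    refine ⟨⟨x, hx⟩, fun x hx y hy => ?_⟩
    have := h.preconnected ⟨x, hx⟩ ⟨y, hy⟩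
    rw [SimpleGraph.reachable_iff_reflTransGen] at this
    exact this.lift (p := fun p q => G.Adj p q ∧ p ∈ s ∧ q ∈ s) Subtype.val
      (fun a b hab => ⟨hab, a.2, b.2⟩)
  · rintro ⟨⟨x, hx⟩, h⟩
    have : Nonempty s := ⟨⟨x, hx⟩⟩
    refine ⟨?_⟩
    rintro ⟨x, hx⟩ ⟨y, hy⟩
    have key : ∀ z, Relation.ReflTransGen (fun p q => G.Adj p q ∧ p ∈ s ∧ q ∈ s) x z →
        ∀ hz : z ∈ s, (G.induce s).Reachable ⟨x, hx⟩ ⟨z, hz⟩ := by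
      intro z hz
      induction hz with
      | refl => intro _; exact Reachable.refl _
      | tail _ hbc ih =>
        intro hz
        refine (ih hbc.2.1).trans (Adj.reachable ?_)
        exact hbc.1
    exact key y (h x hx y hy) hy

theorem isMinor_iff {α β : Type*} (H : SimpleGraph α) (G : SimpleGraph β) :
    IsMinor H G ↔ ∃ f : α → Set β, (∀ a, ConnOn G (f a)) ∧
      (∀ a b, a ≠ b → Disjoint (f a) (f b)) ∧
      (∀ a b, H.Adj a b → ∃ u ∈ f a, ∃ v ∈ f b, G.Adj u v) := by
  simp only [IsMinor, connOn_iff]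

theorem ConnOn.push {V W : Type*} {G : SimpleGraph V} {G' : SimpleGraph W} {s : Set V}
    (h : ConnOn G s) (φ : V → W)
    (hφ : ∀ x ∈ s, ∀ y ∈ s, G.Adj x y → φ x = φ y ∨ G'.Adj (φ x) (φ y)) :
    ConnOn G' (φ '' s) := by
  refine ⟨h.1.image _, ?_⟩
  rintro _ ⟨x, hx, rfl⟩ _ ⟨y, hy, rfl⟩
  have := h.2 x hx y hy
  clear hy
  induction this with
  | refl => exact Relation.ReflTransGen.refl
  | tail _ hbc ih =>
    rcases hφ _ hbc.2.1 _ hbc.2.2 hbc.1 with h1 | h1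
    · rw [← h1]; exact ih
    · exact ih.tail ⟨h1, ⟨_, hbc.2.1, rfl⟩, ⟨_, hbc.2.2, rfl⟩⟩

theorem ConnOn.mono {V : Type*} {G G' : SimpleGraph V} {s : Set V} (h : ConnOn G s)
    (hG : G ≤ G') : ConnOn G' s := by
  have := h.push (G' := G') id (fun x _ y _ hxy => Or.inr (hG hxy))
  simpa using this

theorem connOn_singleton {V : Type*} (G : SimpleGraph V) (v : V) : ConnOn G {v} := by
  refine ⟨⟨v, rfl⟩, ?_⟩
  rintro x rfl y rfl
  exact Relation.ReflTransGen.refl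

theorem ConnOn.exists_adj {V : Type*} {G : SimpleGraph V} {s : Set V} (h : ConnOn G s)
    {x y : V} (hx : x ∈ s) (hy : y ∈ s) (hxy : x ≠ y) : ∃ z ∈ s, G.Adj x z := by
  rcases (h.2 x hx y hy).cases_head with h1 | ⟨z, hz, _⟩
  · exact absurd h1 hxy
  · exact ⟨z, hz.2.2, hz.1⟩

theorem isMinor_mono {α V : Type*} {H : SimpleGraph α} {G G' : SimpleGraph V}
    (h : IsMinor H G) (hG : G ≤ G') : IsMinor H G' := by
  rw [isMinor_iff] at h ⊢
  obtain ⟨f, h1, h2, h3⟩ := h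
  refine ⟨f, fun a => (h1 a).mono hG, h2, fun a b hab => ?_⟩
  obtain ⟨u, hu, v, hv, huv⟩ := h3 a b hab
  exact ⟨u, hu, v, hv, hG huv⟩

/-- Contracting connected fibres of `φ` produces a minor, so a minor of the image graph lifts.
Every vertex of `H` has to have a neighbour because vertices outside the range of `φ` cannot be
lifted. -/
theorem isMinor_of_map {α V W : Type*} {H : SimpleGraph α} {G : SimpleGraph V} (φ : V → W)
    (hφ : ∀ x y, φ x = φ y →
      Relation.ReflTransGen (fun p q => G.Adj p q ∧ φ p = φ x ∧ φ q = φ x) x y)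
    (hH : ∀ a, ∃ b, H.Adj a b) (h : IsMinor H (G.map φ)) : IsMinor H G := by
  rw [isMinor_iff] at h ⊢
  obtain ⟨f, h1, h2, h3⟩ := h
  refine ⟨fun a => φ ⁻¹' (f a), fun a => ⟨?_, ?_⟩, fun a b hab => (h2 a b hab).preimage φ, ?_⟩
  · obtain ⟨b, hb⟩ := hH a
    obtain ⟨u, hu, v, hv, huv⟩ := h3 a b hb
    obtain ⟨_, x, y, _, rfl, _⟩ := huv
    exact ⟨x, hu⟩
  · intro x hx y hy
    have fib : ∀ z w, φ z = φ w → φ z ∈ f a → Relation.ReflTransGen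
        (fun p q => G.Adj p q ∧ p ∈ φ ⁻¹' (f a) ∧ q ∈ φ ⁻¹' (f a)) z w := by
      intro z w hzw hz
      refine (hφ z w hzw).lift id ?_
      rintro p q ⟨h4, h5, h6⟩
      refine ⟨h4, ?_, ?_⟩
      · simpa [h5] using hz
      · simpa [h6] using hz
    have key : ∀ p, Relation.ReflTransGen
        (fun p q => (G.map φ).Adj p q ∧ p ∈ f a ∧ q ∈ f a) (φ x) p → ∀ z, φ z = p →
        Relation.ReflTransGen
        (fun p q => G.Adj p q ∧ p ∈ φ ⁻¹' (f a) ∧ q ∈ φ ⁻¹' (f a)) x z := by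
      intro p hp
      induction hp with
      | refl => intro z hz; exact fib x z hz.symm hx
      | tail _ hbc ih =>
        rintro z rfl
        obtain ⟨⟨_, x', y', hxy, rfl, hy'⟩, hb, hc⟩ := hbc
        refine ((ih x' rfl).tail ⟨hxy, hb, ?_⟩).trans (fib y' z hy' ?_)
        · simpa [hy'] using hc
        · simpa [hy'] using hc
    exact key _ ((h1 a).2 _ hx _ hy) y rfl
  · intro a b hab
    obtain ⟨u, hu, v, hv, _, x, y, hxy, rfl, rfl⟩ := h3 a b hab
    exact ⟨x, hu, y, hv, hxy⟩

theorem isMinor_of_comap {α V W : Type*} {H : SimpleGraph α} {G : SimpleGraph W} (e : V → W)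
    (he : Function.Injective e) (h : IsMinor H (G.comap e)) : IsMinor H G := by
  rw [isMinor_iff] at h ⊢
  obtain ⟨f, h1, h2, h3⟩ := h
  refine ⟨fun a => e '' (f a), fun a => (h1 a).push e (fun x _ y _ h => Or.inr h),
    fun a b hab => (Set.disjoint_image_iff he).2 (h2 a b hab), ?_⟩
  intro a b hab
  obtain ⟨u, hu, v, hv, huv⟩ := h3 a b hab
  exact ⟨e u, ⟨u, hu, rfl⟩, e v, ⟨v, hv, rfl⟩, huv⟩

/-- `H` is 2-connected: no vertex deletion separates `H`, and all degrees are at least two.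
This is what is used of `K₅` and `K₃,₃` when adding a bridge. -/
def TwoConn {α : Type*} (H : SimpleGraph α) : Prop :=
  (∀ (p : α) (S : Set α), p ∉ S → S.Nonempty → (∃ b, b ∉ S ∧ b ≠ p) →
    ∃ c ∈ S, ∃ d, d ∉ S ∧ d ≠ p ∧ H.Adj c d) ∧
  ∀ p, ∃ c d, c ≠ d ∧ H.Adj p c ∧ H.Adj p d

theorem twoConn_K5 : TwoConn (completeGraph (Fin 5)) := by
  constructor
  · rintro p S _ ⟨c, hc⟩ ⟨b, hb, hbp⟩
    refine ⟨c, hc, b, hb, hbp, ?_⟩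
    rintro rfl; exact hb hc
  · intro p
    refine ⟨p + 1, p + 2, ?_, ?_, ?_⟩ <;> revert p <;> decide

theorem twoConn_K33 : TwoConn (completeBipartiteGraph (Fin 3) (Fin 3)) := by
  have other : ∀ p x : Fin 3 ⊕ Fin 3, ∃ r, r ≠ p ∧
      (completeBipartiteGraph (Fin 3) (Fin 3)).Adj x r := by
    intro p x
    rcases x with i | i
    · by_cases h : p = Sum.inr 0
      · exact ⟨Sum.inr 1, by simp [h], by simp⟩
      · exact ⟨Sum.inr 0, fun h' => h h'.symm, by simp⟩
    · by_cases h : p = Sum.inl 0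
      · exact ⟨Sum.inl 1, by simp [h], by simp⟩
      · exact ⟨Sum.inl 0, fun h' => h h'.symm, by simp⟩
  constructor
  · rintro p S hp ⟨c, hc⟩ ⟨b, hb, hbp⟩
    by_cases hcb : (completeBipartiteGraph (Fin 3) (Fin 3)).Adj c b
    · exact ⟨c, hc, b, hb, hbp, hcb⟩
    · obtain ⟨r, hrp, hr⟩ := other p c
      by_cases hrS : r ∈ S
      · refine ⟨r, hrS, b, hb, hbp, ?_⟩
        rcases c with i | i <;> rcases b with j | j <;> rcases r with k | k <;> simp_all
      · exact ⟨c, hc, r, hrS, hrp, hr⟩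
  · rintro (i | i)
    · exact ⟨Sum.inr 0, Sum.inr 1, by simp, by simp, by simp⟩
    · exact ⟨Sum.inl 0, Sum.inl 1, by simp, by simp, by simp⟩

theorem TwoConn.exists_adj {α : Type*} {H : SimpleGraph α} (h : TwoConn H) (a : α) :
    ∃ b, H.Adj a b := by
  obtain ⟨c, _, _, hc, _⟩ := h.2 a
  exact ⟨c, hc⟩

/-- A 2-connected minor survives the deletion of a bridge: all branch sets meet one side of the
bridge, and restricting them to that side gives a minor again. -/
theorem isMinor_of_bridge {α V : Type*} {H : SimpleGraph α} (hH : TwoConn H) {G : SimpleGraph V}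
    {u v : V} (huv : ¬ G.Reachable u v) (h : IsMinor H (G ⊔ edge u v)) : IsMinor H G := by
  classical
  rw [isMinor_iff] at h ⊢
  obtain ⟨f, h1, h2, h3⟩ := h
  have main : ∀ (A : Set V) (u v : V), u ∈ A → v ∉ A →
      (∀ x y, (G ⊔ edge u v).Adj x y → x ∈ A → y ∈ A → G.Adj x y) →
      (∀ x y, (G ⊔ edge u v).Adj x y → x ∈ A → y ∉ A → x = u ∧ y = v) →
      (∀ a, ConnOn (G ⊔ edge u v) (f a)) →
      (∀ a b, H.Adj a b → ∃ x ∈ f a, ∃ y ∈ f b, (G ⊔ edge u v).Adj x y) →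
      (∀ a, (f a ∩ A).Nonempty) →
      ∃ f : α → Set V, (∀ a, ConnOn G (f a)) ∧ (∀ a b, a ≠ b → Disjoint (f a) (f b)) ∧
        (∀ a b, H.Adj a b → ∃ u ∈ f a, ∃ v ∈ f b, G.Adj u v) := by
    intro A u v hu hv hA1 hA2 h1 h3 hne
    -- a branch set meeting both sides contains `u`
    have cross : ∀ a x, x ∈ f a → x ∉ A → u ∈ f a := by
      intro a x hx hxA
      obtain ⟨y, hy, hyA⟩ := hne a
      have := (h1 a).2 y hy x hx
      clear hx
      induction this with
      | refl => exact absurd hyA hxA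
      | @tail b c _ hbc ih =>
        by_cases hb : b ∈ A
        · have := hA2 b c hbc.1 hb hxA
          rw [← this.1]; exact hbc.2.1
        · exact ih hb
    refine ⟨fun a => f a ∩ A, fun a => ?_, fun a b hab =>
      (h2 a b hab).mono Set.inter_subset_left Set.inter_subset_left, ?_⟩
    · have hp := (h1 a).push (G' := G) (fun x => if x ∈ A then x else u) (by
        intro x hx y hy hxy
        by_cases hxA : x ∈ A <;> by_cases hyA : y ∈ A <;> simp only [hxA, hyA, if_true, if_false]
        · right; exact hA1 x y hxy hxA hyA
        · left; exact (hA2 x y hxy hxA hyA).1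
        · left; exact (hA2 y x hxy.symm hyA hxA).1.symm
        · left; trivial)
      convert hp using 1
      ext x
      constructor
      · rintro ⟨hx, hxA⟩
        exact ⟨x, hx, by simp [hxA]⟩
      · rintro ⟨y, hy, rfl⟩
        by_cases hyA : y ∈ A
        · simp only [hyA, if_true]; exact ⟨hy, hyA⟩
        · simp only [hyA, if_false]; exact ⟨cross a y hy hyA, hu⟩
    · intro a b hab
      obtain ⟨x, hx, y, hy, hxy⟩ := h3 a b hab
      have hd : ∀ z, z ∈ f a → z ∉ f b := fun z hz => Set.disjoint_left.1 (h2 a b hab.ne) hz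
      by_cases hxA : x ∈ A <;> by_cases hyA : y ∈ A
      · exact ⟨x, ⟨hx, hxA⟩, y, ⟨hy, hyA⟩, hA1 x y hxy hxA hyA⟩
      · have := hA2 x y hxy hxA hyA
        exact absurd (cross b y hy hyA) (hd u (this.1 ▸ hx))
      · have := hA2 y x hxy.symm hyA hxA
        exact absurd (this.1 ▸ hy) (hd u (cross a x hx hxA))
      · exact absurd (cross b y hy hyA) (hd u (cross a x hx hxA))
  let A : Set V := {x | G.Reachable u x}
  have hu : u ∈ A := Reachable.refl u
  have hv : v ∉ A := huv
  have hne' : u ≠ v := by rintro rfl; exact huv (Reachable.refl _)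
  have hadj : ∀ x y, (G ⊔ edge u v).Adj x y → G.Adj x y ∨ (x = u ∧ y = v) ∨ (x = v ∧ y = u) := by
    intro x y hxy
    rw [sup_adj, edge_adj] at hxy
    rcases hxy with h | ⟨h, _⟩
    · exact Or.inl h
    · rcases h with ⟨rfl, rfl⟩ | ⟨rfl, rfl⟩ <;> simp
  have hA1 : ∀ x y, (G ⊔ edge u v).Adj x y → x ∈ A → y ∈ A → G.Adj x y := by
    intro x y hxy hx hy
    rcases hadj x y hxy with h | ⟨rfl, rfl⟩ | ⟨rfl, rfl⟩
    · exact h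
    · exact absurd hy hv
    · exact absurd hx hv
  have hA2 : ∀ x y, (G ⊔ edge u v).Adj x y → x ∈ A → y ∉ A → x = u ∧ y = v := by
    intro x y hxy hx hy
    rcases hadj x y hxy with h | h | ⟨rfl, rfl⟩
    · exact absurd (Reachable.trans hx h.reachable) hy
    · exact h
    · exact absurd hx hv
  by_cases hall : ∀ a, (f a ∩ A).Nonempty
  · exact main A u v hu hv hA1 hA2 h1 h3 hall
  by_cases hall' : ∀ a, (f a ∩ Aᶜ).Nonempty
  · have hcomm : G ⊔ edge v u = G ⊔ edge u v := by rw [edge_comm]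
    refine main Aᶜ v u hv (by simpa using hu) ?_ ?_ ?_ ?_ hall'
    · intro x y hxy hx hy
      rw [hcomm] at hxy
      rcases hadj x y hxy with h | ⟨rfl, rfl⟩ | ⟨rfl, rfl⟩
      · exact h
      · exact absurd hu hx
      · exact absurd hu hy
    · intro x y hxy hx hy
      rw [hcomm] at hxy
      have := hA2 y x hxy.symm (by simpa using hy) hx
      exact ⟨this.2, this.1⟩
    · intro a; rw [hcomm]; exact h1 a
    · intro a b hab; rw [hcomm]; exact h3 a b hab
  exfalso
  push Not at hall hall'
  obtain ⟨a, ha⟩ := hall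
  obtain ⟨b, hb⟩ := hall'
  have ha' : ∀ x ∈ f a, x ∉ A := fun x hx hxA => by
    have : x ∈ f a ∩ A := ⟨hx, hxA⟩
    simp [ha] at this
  have hb' : ∀ x ∈ f b, x ∈ A := fun x hx => by
    by_contra hxA
    have : x ∈ f b ∩ Aᶜ := ⟨hx, hxA⟩
    simp [hb] at this
  have own : ∀ c d z, z ∈ f c → z ∈ f d → c = d := by
    intro c d z hc hd
    by_contra hcd
    exact Set.disjoint_left.1 (h2 c d hcd) hc hd
  let S : Set α := {c | ∀ x ∈ f c, x ∉ A}
  have haS : a ∈ S := ha'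
  have hbS : b ∉ S := by
    intro h
    obtain ⟨x, hx⟩ := (h1 b).1
    exact h x hx (hb' x hx)
  have edgeST : ∀ c ∈ S, ∀ d, d ∉ S → H.Adj c d → u ∈ f d ∧ ((∀ x ∈ f d, x ∈ A) → v ∈ f c) := by
    intro c hc d hd hcd
    obtain ⟨x, hx, y, hy, hxy⟩ := h3 c d hcd
    by_cases hyA : y ∈ A
    · have := hA2 y x hxy.symm hyA (hc x hx)
      exact ⟨this.1 ▸ hy, fun _ => this.2 ▸ hx⟩
    · refine ⟨?_, fun h => absurd (h y hy) hyA⟩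
      simp only [S, Set.mem_ofPred_eq, not_forall, not_not] at hd
      obtain ⟨z, hz, hzA⟩ := hd
      have := (h1 d).2 z hz y hy
      clear hy hxy
      induction this with
      | refl => exact absurd hzA hyA
      | @tail b c _ hbc ih =>
        by_cases hb : b ∈ A
        · have := hA2 b c hbc.1 hb hyA
          rw [← this.1]; exact hbc.2.1
        · exact ih hb
  -- all edges of `H` leaving `S` end in the branch set of `u`, which must be `b`
  by_cases hub : u ∈ f b
  · obtain ⟨c, d, hcd, hbc, hbd⟩ := hH.2 b
    by_cases hT : ∃ t, t ∉ S ∧ t ≠ b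
    · obtain ⟨c, hc, d, hd, hdb, hcd⟩ := hH.1 b S hbS ⟨a, haS⟩ hT
      exact hdb (own d b u (edgeST c hc d hd hcd).1 hub)
    · push Not at hT
      have hcS : c ∈ S := by
        by_contra h
        exact hbc.ne (hT c h).symm
      have hdS : d ∈ S := by
        by_contra h
        exact hbd.ne (hT d h).symm
      exact hcd (own c d v ((edgeST c hcS b hbS hbc.symm).2 hb')
        ((edgeST d hdS b hbS hbd.symm).2 hb'))
  · by_cases hp : ∃ p, u ∈ f p
    · obtain ⟨p, hp⟩ := hp
      have hpS : p ∉ S := fun h => h u hp hu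
      obtain ⟨c, hc, d, hd, hdb, hcd⟩ := hH.1 p S hpS ⟨a, haS⟩
        ⟨b, hbS, fun h => hub (h ▸ hp)⟩
      exact hdb (own d p u (edgeST c hc d hd hcd).1 hp)
    · obtain ⟨c, d, hcd, hbc, hbd⟩ := hH.2 b
      by_cases hT : ∃ t, t ∉ S ∧ t ≠ b
      · obtain ⟨c, hc, d, hd, hdb, hcd⟩ := hH.1 b S hbS ⟨a, haS⟩ hT
        exact hp ⟨d, (edgeST c hc d hd hcd).1⟩
      · push Not at hT
        have hcS : c ∈ S := by
          by_contra h
          exact hbc.ne (hT c h).symm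
        exact hub (edgeST c hcS b hbS hbc.symm).1

theorem planar_mono {V : Type*} {G G' : SimpleGraph V} (h : IsPlanar G') (hG : G ≤ G') :
    IsPlanar G :=
  ⟨fun h' => h.1 (isMinor_mono h' hG), fun h' => h.2 (isMinor_mono h' hG)⟩

theorem planar_bridge {V : Type*} {G : SimpleGraph V} (h : IsPlanar G) {u v : V}
    (huv : ¬ G.Reachable u v) : IsPlanar (G ⊔ edge u v) :=
  ⟨fun h' => h.1 (isMinor_of_bridge twoConn_K5 huv h'), fun h' => h.2 (isMinor_of_bridge twoConn_K33 huv h')⟩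

theorem planar_map {V W : Type*} {G : SimpleGraph V} (h : IsPlanar G) (φ : V → W)
    (hφ : ∀ x y, φ x = φ y →
      Relation.ReflTransGen (fun p q => G.Adj p q ∧ φ p = φ x ∧ φ q = φ x) x y) :
    IsPlanar (G.map φ) :=
  ⟨fun h' => h.1 (isMinor_of_map φ hφ twoConn_K5.exists_adj h'),
    fun h' => h.2 (isMinor_of_map φ hφ twoConn_K33.exists_adj h')⟩

theorem planar_map_inj {V W : Type*} {G : SimpleGraph V} (h : IsPlanar G) (φ : V → W)
    (hφ : Function.Injective φ) : IsPlanar (G.map φ) := by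
  refine planar_map h φ fun x y hxy => ?_
  rw [hφ hxy]

theorem planar_comap {V W : Type*} {G : SimpleGraph W} (h : IsPlanar G) (e : V → W)
    (he : Function.Injective e) : IsPlanar (G.comap e) :=
  ⟨fun h' => h.1 (isMinor_of_comap e he h'), fun h' => h.2 (isMinor_of_comap e he h')⟩

/-- Contraction of `v` into `u`, on the same vertex type: the edges of `v` are moved to `u`
and `v` becomes isolated. -/
noncomputable def contr {V : Type*} (G : SimpleGraph V) (u v : V) : SimpleGraph V := by
  classical exact G.map (Function.update id v u)

theorem contr_adj {V : Type*} (G : SimpleGraph V) {u v : V} (huv : u ≠ v) (x y : V) :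
    (contr G u v).Adj x y ↔ x ≠ y ∧ x ≠ v ∧ y ≠ v ∧
      (G.Adj x y ∨ (x = u ∧ G.Adj v y) ∨ (y = u ∧ G.Adj v x)) := by
  classical
  have hupd : ∀ z, Function.update id v u z = if z = v then u else z := by
    intro z; by_cases h : z = v <;> simp [h]
  simp only [contr]
  constructor
  · rintro ⟨hne, x', y', hxy, rfl, rfl⟩
    refine ⟨hne, ?_, ?_, ?_⟩
    · rw [hupd]; split_ifs with h
      · exact huv
      · exact h
    · rw [hupd]; split_ifs with h
      · exact huv
      · exact h
    · rw [hupd, hupd]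
      by_cases h1 : x' = v <;> by_cases h2 : y' = v
      · subst h1; subst h2; exact absurd hxy (G.loopless.irrefl _)
      · subst h1; simp [h2, hxy]
      · subst h2; simp [h1, hxy.symm]
      · simp [h1, h2, hxy]
  · rintro ⟨hne, hx, hy, h⟩
    refine ⟨hne, ?_⟩
    rcases h with h | ⟨rfl, h⟩ | ⟨rfl, h⟩
    · exact ⟨x, y, h, by simp [hx], by simp [hy]⟩
    · exact ⟨v, y, h, by simp, by simp [hy]⟩
    · exact ⟨x, v, h.symm, by simp [hx], by simp⟩

theorem planar_contr {V : Type*} {G : SimpleGraph V} (h : IsPlanar G) {u v : V}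
    (huv : G.Adj u v) : IsPlanar (contr G u v) := by
  classical
  refine planar_map h _ ?_
  have hupd : ∀ z, Function.update id v u z = if z = v then u else z := by
    intro z; by_cases h : z = v <;> simp [h]
  intro x y hxy
  simp only [hupd] at hxy ⊢
  have hne := huv.ne
  by_cases h1 : x = v <;> by_cases h2 : y = v <;> simp only [h1, h2, if_true, if_false] at hxy ⊢
  · exact Relation.ReflTransGen.refl
  · subst hxy
    exact Relation.ReflTransGen.single ⟨huv.symm, by simp, by simp [h2]⟩
  · subst hxy
    exact Relation.ReflTransGen.single ⟨huv, by simp, by simp⟩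
  · subst hxy
    exact Relation.ReflTransGen.refl

/-! ### Double counting -/

theorem ncard_dep {α β : Type*} [Finite α] [Finite β] (X : Set α) (D : α → Set β) :
    {p : α × β | p.1 ∈ X ∧ p.2 ∈ D p.1}.ncard = ∑ a ∈ X.toFinite.toFinset, (D a).ncard := by
  classical
  have := Fintype.ofFinite α
  have := Fintype.ofFinite β
  have h : {p : α × β | p.1 ∈ X ∧ p.2 ∈ D p.1} =
      ((X.toFinite.toFinset.sigma fun a => (D a).toFinite.toFinset).map
        (Equiv.sigmaEquivProd α β).toEmbedding : Finset (α × β)) := by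
    ext ⟨a, b⟩
    simp
  rw [h, Set.ncard_coe_finset, Finset.card_map, Finset.card_sigma]
  refine Finset.sum_congr rfl fun a _ => ?_
  rw [Set.ncard_eq_toFinset_card]

theorem ncard_dep_ge {α β : Type*} [Finite α] [Finite β] (X : Set α) (D : α → Set β) (F : ℕ)
    (hF : ∀ a ∈ X, F ≤ (D a).ncard) :
    X.ncard * F ≤ {p : α × β | p.1 ∈ X ∧ p.2 ∈ D p.1}.ncard := by
  rw [ncard_dep, Set.ncard_eq_toFinset_card X, ← smul_eq_mul]
  exact Finset.card_nsmul_le_sum _ _ _ fun a ha => hF a (by simpa using ha)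

theorem ncard_dep_le {α β : Type*} [Finite α] [Finite β] (X : Set α) (D : α → Set β) (F : ℕ)
    (hF : ∀ a ∈ X, (D a).ncard ≤ F) :
    {p : α × β | p.1 ∈ X ∧ p.2 ∈ D p.1}.ncard ≤ X.ncard * F := by
  rw [ncard_dep, Set.ncard_eq_toFinset_card X, ← smul_eq_mul]
  exact Finset.sum_le_card_nsmul _ _ _ fun a ha => hF a (by simpa using ha)

/-- Double counting of moves `a ↦ φ a b`: each `a ∈ X` admits at least `F` moves `b ∈ D a`, and a
move is recovered from its result `φ a b ∈ Y` together with one of at most `R` codes `ψ a b`. -/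
theorem double_count {α β γ ε : Type*} [Finite α] [Finite β] [Finite γ] [Finite ε]
    (X : Set α) (D : α → Set β) (Y : Set γ) (E : γ → Set ε) (φ : α → β → γ) (ψ : α → β → ε)
    (F R : ℕ) (hF : ∀ a ∈ X, F ≤ (D a).ncard) (hE : ∀ c ∈ Y, (E c).ncard ≤ R)
    (h1 : ∀ a ∈ X, ∀ b ∈ D a, φ a b ∈ Y ∧ ψ a b ∈ E (φ a b))
    (inj : ∀ a ∈ X, ∀ b ∈ D a, ∀ a' ∈ X, ∀ b' ∈ D a', φ a b = φ a' b' → ψ a b = ψ a' b' →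
      a = a' ∧ b = b') :
    X.ncard * F ≤ Y.ncard * R := by
  refine (ncard_dep_ge X D F hF).trans (le_trans ?_ (ncard_dep_le Y E R hE))
  refine Set.ncard_le_ncard_of_injOn (fun p => (φ p.1 p.2, ψ p.1 p.2)) ?_ ?_ (Set.toFinite _)
  · rintro ⟨a, b⟩ ⟨ha, hb⟩
    exact h1 a ha b hb
  · rintro ⟨a, b⟩ ⟨ha, hb⟩ ⟨a', b'⟩ ⟨ha', hb'⟩ h
    rw [Prod.mk.injEq] at h
    obtain ⟨rfl, rfl⟩ := inj a ha b hb a' ha' b' hb' h.1 h.2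
    rfl

/-! ### Darts -/

/-- The number of ordered adjacent pairs. -/
noncomputable def dc {V : Type*} (G : SimpleGraph V) : ℕ := {p : V × V | G.Adj p.1 p.2}.ncard

theorem dc_eq_sum {V : Type*} [Fintype V] (G : SimpleGraph V) :
    dc G = ∑ v, vertexDegree G v := by
  classical
  have := ncard_dep (Set.univ : Set V) (fun v => G.neighborSet v)
  simpa [dc, vertexDegree] using this

theorem dc_eq {V : Type*} [Finite V] (G : SimpleGraph V) : dc G = 2 * edgeCount G := by
  classical
  have := Fintype.ofFinite V
  rw [dc_eq_sum, edgeCount, Set.ncard_eq_toFinset_card', ← edgeFinset,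
    ← sum_degrees_eq_twice_card_edges]
  refine Finset.sum_congr rfl fun v _ => ?_
  rw [vertexDegree, Set.ncard_eq_toFinset_card', ← card_neighborFinset_eq_degree]
  rfl

theorem dc_mono {V : Type*} [Finite V] {G G' : SimpleGraph V} (h : G ≤ G') : dc G ≤ dc G' :=
  Set.ncard_le_ncard (fun _ hp => h hp) (Set.toFinite _)

theorem dc_ge {V : Type*} [Finite V] (G : SimpleGraph V) (S : Set V) (d : ℕ)
    (h : ∀ v ∈ S, d ≤ vertexDegree G v) : S.ncard * d ≤ dc G := by
  refine (ncard_dep_ge S (fun v => G.neighborSet v) d h).trans ?_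
  exact Set.ncard_le_ncard (fun p hp => hp.2) (Set.toFinite _)

/-! ### Sparsity of planar graphs -/

theorem isMinor_contr {α V : Type*} {H : SimpleGraph α} {G : SimpleGraph V} {u v : V}
    (huv : G.Adj u v) (hH : ∀ a, ∃ b, H.Adj a b) (h : IsMinor H (contr G u v)) :
    IsMinor H G := by
  classical
  refine isMinor_of_map _ ?_ hH h
  have hupd : ∀ z, Function.update id v u z = if z = v then u else z := by
    intro z; by_cases h : z = v <;> simp [h]
  intro x y hxy
  simp only [hupd] at hxy ⊢
  have hne := huv.ne
  by_cases h1 : x = v <;> by_cases h2 : y = v <;> simp only [h1, h2, if_true, if_false] at hxy ⊢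
  · exact Relation.ReflTransGen.refl
  · subst hxy
    exact Relation.ReflTransGen.single ⟨huv.symm, by simp, by simp [h2]⟩
  · subst hxy
    exact Relation.ReflTransGen.single ⟨huv, by simp, by simp⟩
  · subst hxy
    exact Relation.ReflTransGen.refl

/-- Contracting an edge loses the two darts of the edge and two for each common neighbour. -/
theorem dc_contr {V : Type*} [Finite V] {G : SimpleGraph V} {u v : V} (huv : G.Adj u v) :
    dc G ≤ dc (contr G u v) + 2 * ((G.neighborSet u ∩ G.neighborSet v).ncard + 1) := by
  classical
  have hne := huv.ne
  set C := G.neighborSet u ∩ G.neighborSet v with hC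
  let K : Set (V × V) := ((fun y => (v, y)) '' insert u C) ∪ ((fun y => (y, v)) '' insert u C)
  have hK : K.ncard ≤ 2 * (C.ncard + 1) := by
    refine (Set.ncard_union_le _ _).trans ?_
    have h1 := Set.ncard_image_le (f := fun y => (v, y)) (Set.toFinite (insert u C))
    have h2 := Set.ncard_image_le (f := fun y => (y, v)) (Set.toFinite (insert u C))
    have h3 := Set.ncard_insert_le u C
    omega
  have hR : ({p : V × V | G.Adj p.1 p.2} \ K).ncard ≤ dc (contr G u v) := by
    refine Set.ncard_le_ncard_of_injOn
      (fun p => (if p.1 = v then u else p.1, if p.2 = v then u else p.2)) ?_ ?_ (Set.toFinite _)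
    · rintro ⟨x, y⟩ ⟨hxy, hnK⟩
      simp only [Set.mem_ofPred_eq] at hxy ⊢
      rw [contr_adj G hne]
      by_cases hx : x = v <;> by_cases hy : y = v
      · subst hx; subst hy; exact absurd hxy (G.loopless.irrefl _)
      · subst hx
        have hyu : y ≠ u := by
          rintro rfl; exact hnK (Or.inl ⟨y, by simp, rfl⟩)
        simp [hy, hne, hyu.symm, hxy]
      · subst hy
        have hyu : x ≠ u := by
          rintro rfl; exact hnK (Or.inr ⟨x, by simp, rfl⟩)
        simp [hx, hne, hyu, hxy.symm]
      · simp [hx, hy, hxy, hxy.ne]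
    · rintro ⟨x, y⟩ ⟨hxy, hnK⟩ ⟨x', y'⟩ ⟨hxy', hnK'⟩ h
      simp only [Set.mem_ofPred_eq, Prod.mk.injEq] at hxy hxy' h ⊢
      have a1 : ∀ z, G.Adj v z → (v, z) ∉ K → ¬ G.Adj u z := fun z hz hK' hz' =>
        hK' (Or.inl ⟨z, Or.inr ⟨hz', hz⟩, rfl⟩)
      have a2 : ∀ z, G.Adj z v → (z, v) ∉ K → ¬ G.Adj z u := fun z hz hK' hz' =>
        hK' (Or.inr ⟨z, Or.inr ⟨hz'.symm, hz.symm⟩, rfl⟩)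
      have l := fun z => G.loopless.irrefl z
      by_cases hx : x = v <;> by_cases hy : y = v <;> by_cases hx' : x' = v <;>
        by_cases hy' : y' = v <;> simp only [hx, hy, hx', hy', if_true, if_false] at h hxy hxy' ⊢ <;>
        grind
  have : dc G ≤ ({p : V × V | G.Adj p.1 p.2} \ K).ncard + K.ncard :=
    (Set.ncard_le_ncard (by intro p hp; by_cases h : p ∈ K <;> simp [h] ; exact hp)
      (Set.toFinite _)).trans (Set.ncard_union_le _ _)
  omega

theorem branch_subset_support {α V : Type*} {H : SimpleGraph α} {G : SimpleGraph V}
    {f : α → Set V} (h1 : ∀ a, ConnOn G (f a))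
    (h3 : ∀ a b, H.Adj a b → ∃ u ∈ f a, ∃ v ∈ f b, G.Adj u v) (hH : ∀ a, ∃ b, H.Adj a b)
    (a : α) (x : V) (hx : x ∈ f a) : ∃ y, G.Adj x y := by
  obtain ⟨b, hb⟩ := hH a
  obtain ⟨u, hu, v, hv, huv⟩ := h3 a b hb
  by_cases h : x = u
  · exact ⟨v, h ▸ huv⟩
  · obtain ⟨z, _, hz⟩ := (h1 a).exists_adj hx hu h
    exact ⟨z, hz⟩

/-- Mader's theorem with exponential constant: average degree at least `2 ^ (r + 1)` forces a
`K_{r+2}`-minor. Contract an edge with few common neighbours if there is one; otherwise every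
neighbourhood induces a dense graph. -/
theorem mader (r : ℕ) : ∀ {V : Type} [Finite V] (G : SimpleGraph V), 0 < dc G →
    2 ^ (r + 1) * G.support.ncard ≤ dc G → IsMinor (completeGraph (Fin (r + 2))) G := by
  induction r with
  | zero =>
    intro V _ G h _
    obtain ⟨⟨x, y⟩, hxy⟩ := (Set.ncard_pos (Set.toFinite _)).1 h
    simp only [Set.mem_ofPred_eq] at hxy
    rw [isMinor_iff]
    refine ⟨![{x}, {y}], ?_, ?_, ?_⟩
    · intro a; fin_cases a <;> simp [connOn_singleton]
    · intro a b hab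
      fin_cases a <;> fin_cases b <;> simp_all [hxy.ne, hxy.ne.symm]
    · intro a b hab
      fin_cases a <;> fin_cases b <;> simp_all [hxy.symm]
  | succ r ih =>
    intro V _ G
    have hH : ∀ k (a : Fin (k + 2)), ∃ b, (completeGraph (Fin (k + 2))).Adj a b := by
      intro k a
      obtain ⟨b, hb⟩ := exists_ne a
      exact ⟨b, hb.symm⟩
    induction hn : G.support.ncard using Nat.strong_induction_on generalizing G with
    | _ n ihn =>
    intro h0 h
    by_cases hc : ∃ u v, G.Adj u v ∧ (G.neighborSet u ∩ G.neighborSet v).ncard < 2 ^ (r + 1)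
    · obtain ⟨u, v, huv, hlt⟩ := hc
      refine isMinor_contr huv (hH _) ?_
      have hd := dc_contr huv
      have hsub : (contr G u v).support ⊆ G.support \ {v} := by
        rintro x ⟨y, hxy⟩
        replace hxy : (contr G u v).Adj x y := hxy
        rw [contr_adj G huv.ne] at hxy
        refine ⟨?_, hxy.2.1⟩
        rcases hxy.2.2.2 with h | ⟨rfl, _⟩ | ⟨_, h⟩
        · exact ⟨y, h⟩
        · exact ⟨v, huv⟩
        · exact ⟨v, h.symm⟩
      have hle := Set.ncard_le_ncard hsub (Set.toFinite _)
      have hv : v ∈ G.support := ⟨u, huv.symm⟩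
      rw [Set.ncard_sdiff_singleton_of_mem hv] at hle
      have h2 : 2 ≤ G.support.ncard := by
        have : ({u, v} : Set V).ncard ≤ G.support.ncard := by
          refine Set.ncard_le_ncard ?_ (Set.toFinite _)
          rintro x (rfl | rfl)
          · exact ⟨v, huv⟩
          · exact ⟨u, huv.symm⟩
        rwa [Set.ncard_pair huv.ne] at this
      have hkey : 2 ^ (r + 1 + 1) * (n - 1) ≤ dc (contr G u v) := by
        have e : 2 ^ (r + 1 + 1) * n = 2 ^ (r + 1 + 1) * (n - 1) + 2 ^ (r + 1 + 1) := by
          obtain ⟨k, rfl⟩ : ∃ k, n = k + 1 := ⟨n - 1, by omega⟩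
          rw [Nat.add_sub_cancel]; ring
        have e2 : (2:ℕ) ^ (r + 1 + 1) = 2 * 2 ^ (r + 1) := by ring
        omega
      refine ihn _ (by omega) _ rfl ?_ ?_
      · refine lt_of_lt_of_le ?_ hkey
        have : 0 < n - 1 := by omega
        positivity
      · refine le_trans (Nat.mul_le_mul_left _ ?_) hkey
        omega
    · push Not at hc
      obtain ⟨⟨v, w⟩, hvw⟩ := (Set.ncard_pos (Set.toFinite _)).1 h0
      simp only [Set.mem_ofPred_eq] at hvw
      let H : SimpleGraph V :=
        { Adj := fun x y => G.Adj x y ∧ G.Adj v x ∧ G.Adj v y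
          symm := ⟨fun x y h => ⟨h.1.symm, h.2.2, h.2.1⟩⟩
          loopless := ⟨fun x h => G.loopless.irrefl x h.1⟩ }
      have hdc : (G.neighborSet v).ncard * 2 ^ (r + 1) ≤ dc H := by
        refine dc_ge H _ _ fun x hx => ?_
        refine (hc v x hx).trans (Set.ncard_le_ncard ?_ (Set.toFinite _))
        rintro y ⟨h1, h2⟩
        exact ⟨h2, hx, h1⟩
      have hsupp : H.support ⊆ G.neighborSet v := by
        rintro x ⟨y, hxy⟩; exact hxy.2.1
      have hpos : 0 < (G.neighborSet v).ncard :=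
        (Set.ncard_pos (Set.toFinite _)).2 ⟨w, hvw⟩
      have := ih H (lt_of_lt_of_le (by positivity) hdc) (by
        refine le_trans ?_ hdc
        rw [mul_comm]
        exact Nat.mul_le_mul_right _ (Set.ncard_le_ncard hsupp (Set.toFinite _)))
      rw [isMinor_iff] at this ⊢
      obtain ⟨f, h1, h2, h3⟩ := this
      have hHG : H ≤ G := fun x y h => h.1
      have hf : ∀ a, ∀ x ∈ f a, G.Adj v x := by
        intro a x hx
        obtain ⟨y, hy⟩ := branch_subset_support h1 h3 (hH _) a x hx
        exact hy.2.1
      refine ⟨Fin.cons {v} f, ?_, ?_, ?_⟩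
      · intro a
        refine Fin.cases ?_ (fun a => ?_) a
        · simpa using connOn_singleton G v
        · simpa using (h1 a).mono hHG
      · have hvf : ∀ a, v ∉ f a := fun a ha => G.loopless.irrefl v (hf a v ha)
        intro a b
        refine Fin.cases ?_ (fun a => ?_) a <;> refine Fin.cases ?_ (fun b => ?_) b
        · simp
        · intro _; simpa using hvf b
        · intro _; simpa using hvf a
        · intro hab; simpa using h2 a b (by simpa using hab)
      · intro a b
        refine Fin.cases ?_ (fun a => ?_) a <;> refine Fin.cases ?_ (fun b => ?_) b
        · simp
        · intro _
          obtain ⟨x, hx⟩ := (h1 b).1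
          exact ⟨v, by simp, x, by simpa using hx, hf b x hx⟩
        · intro _
          obtain ⟨x, hx⟩ := (h1 a).1
          exact ⟨x, by simpa using hx, v, by simp, (hf a x hx).symm⟩
        · intro hab
          obtain ⟨x, hx, y, hy, hxy⟩ := h3 a b (by simpa using hab)
          exact ⟨x, by simpa using hx, y, by simpa using hy, hHG hxy⟩

/-- A planar graph has at most `8` edges per non-isolated vertex. -/
theorem dc_le {V : Type} [Finite V] {G : SimpleGraph V} (h : IsPlanar G) :
    dc G ≤ 16 * G.support.ncard := by
  by_contra hlt
  push Not at hlt
  exact h.1 (mader 3 G (by omega) (by norm_num; omega))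

theorem dc_le_of_support {V : Type} [Finite V] {G : SimpleGraph V} (h : IsPlanar G) (S : Set V)
    (hS : G.support ⊆ S) : dc G ≤ 16 * S.ncard :=
  (dc_le h).trans (Nat.mul_le_mul_left _ (Set.ncard_le_ncard hS (Set.toFinite _)))

/-! ### Bipartite pieces of planar graphs -/

/-- The subgraph of `G` induced on `X`, kept on the same vertex type. -/
def restr {V : Type*} (G : SimpleGraph V) (X : Set V) : SimpleGraph V where
  Adj x y := G.Adj x y ∧ x ∈ X ∧ y ∈ X
  symm := ⟨fun _ _ h => ⟨h.1.symm, h.2.2, h.2.1⟩⟩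
  loopless := ⟨fun x h => G.loopless.irrefl x h.1⟩

theorem restr_le {V : Type*} (G : SimpleGraph V) (X : Set V) : restr G X ≤ G := fun _ _ h => h.1

theorem not_planar_of_K33 {V : Type*} {G : SimpleGraph V} (p q : Fin 3 → V)
    (hp : Function.Injective p) (hq : Function.Injective q) (h : ∀ i j, G.Adj (p i) (q j)) :
    ¬ IsPlanar G := by
  intro hG
  apply hG.2
  rw [isMinor_iff]
  refine ⟨Sum.elim (fun i => {p i}) (fun j => {q j}), ?_, ?_, ?_⟩
  · rintro (a | a) <;> simp [connOn_singleton]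
  · rintro (a | a) (b | b) hab
    · simpa using fun h => hab (by rw [hp h])
    · simpa using (h a b).ne
    · simpa using (h b a).ne.symm
    · simpa using fun h => hab (by rw [hq h])
  · rintro (a | a) (b | b) hab
    · simp at hab
    · exact ⟨p a, by simp, q b, by simp, h a b⟩
    · exact ⟨q a, by simp, p b, by simp, (h b a).symm⟩
    · simp at hab

/-- Few vertices outside `X` can have three neighbours in `X`. If two neighbours in `X` of some
`v ∈ I` are not adjacent, contracting `v` creates an edge inside `X`; otherwise the neighbourhoods
are cliques, and a vertex of small degree in `X` sees only boundedly many elements of `I`. -/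
theorem bip {V : Type} [Finite V] (G : SimpleGraph V) (hG : IsPlanar G) (X I : Set V)
    (hd : Disjoint X I) (hI : ∀ v ∈ I, 3 ≤ (G.neighborSet v ∩ X).ncard) :
    I.ncard + dc (restr G X) ≤ 544 * X.ncard := by
  classical
  induction hn : X.ncard + I.ncard using Nat.strong_induction_on generalizing G X I with
  | _ n ih =>
  by_cases hA : ∃ v ∈ I, ∃ a ∈ X, ∃ b ∈ X, G.Adj v a ∧ G.Adj v b ∧ a ≠ b ∧ ¬ G.Adj a b
  · obtain ⟨v, hv, a, ha, b, hb, hva, hvb, hab, hnab⟩ := hA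
    have hvX : ∀ x ∈ X, x ≠ v := fun x hx h => Set.disjoint_left.1 hd hx (h ▸ hv)
    have hne : a ≠ v := hvX a ha
    have hadj := contr_adj G hne
    have hI' : (I \ {v}).ncard + 1 = I.ncard := Set.ncard_sdiff_singleton_add_one hv
    have := ih (X.ncard + (I \ {v}).ncard) (by omega) (contr G a v) (planar_contr hG hva.symm) X
      (I \ {v}) (hd.mono_right Set.sdiff_subset) (by
        rintro w ⟨hw, hwv⟩
        refine (hI w hw).trans (Set.ncard_le_ncard ?_ (Set.toFinite _))
        rintro y ⟨hy, hyX⟩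
        refine ⟨?_, hyX⟩
        exact (hadj w y).2 ⟨G.ne_of_adj hy, hwv, hvX y hyX, Or.inl hy⟩) rfl
    have hlt : dc (restr G X) < dc (restr (contr G a v) X) := by
      refine Set.ncard_lt_ncard ?_ (Set.toFinite _)
      refine (Set.ssubset_iff_of_subset ?_).2 ⟨(a, b), ?_, ?_⟩
      · rintro ⟨x, y⟩ ⟨h1, h2, h3⟩
        exact ⟨(hadj x y).2 ⟨h1.ne, hvX x h2, hvX y h3, Or.inl h1⟩, h2, h3⟩
      · exact ⟨(hadj a b).2 ⟨hab, hne, hvX b hb, Or.inr (Or.inl ⟨rfl, hvb⟩)⟩, ha, hb⟩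
      · rintro ⟨h, _⟩
        exact hnab h
    omega
  · push Not at hA
    have hsupp : (restr G X).support ⊆ X := by rintro x ⟨y, hxy⟩; exact hxy.2.1
    have hdc := dc_le_of_support (planar_mono hG (restr_le G X)) X hsupp
    rcases X.eq_empty_or_nonempty with rfl | hX
    · have : I = ∅ := by
        by_contra h
        obtain ⟨v, hv⟩ := Set.nonempty_iff_ne_empty.2 h
        have := hI v hv
        simp at this
      subst this
      simpa using hdc
    · obtain ⟨x, hx, hdx⟩ : ∃ x ∈ X, vertexDegree (restr G X) x ≤ 16 := by
        by_contra hcon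
        push Not at hcon
        have := dc_ge (restr G X) X 17 hcon
        have := (Set.ncard_pos (Set.toFinite X)).2 hX
        omega
      set T := (restr G X).neighborSet x with hT
      set J := {v ∈ I | G.Adj v x} with hJ
      have hpick : ∀ v ∈ J, ∃ y z, y ≠ z ∧ y ∈ T ∧ z ∈ T ∧ G.Adj v y ∧ G.Adj v z := by
        rintro v ⟨hv, hvx⟩
        have h3 := hI v hv
        have : 1 < ((G.neighborSet v ∩ X) \ {x}).ncard := by
          rw [Set.ncard_sdiff_singleton_of_mem (show x ∈ G.neighborSet v ∩ X from ⟨hvx, hx⟩)]; omega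
        obtain ⟨y, hy, z, hz, hyz⟩ := (Set.one_lt_ncard (Set.toFinite _)).1 this
        have hm : ∀ w ∈ (G.neighborSet v ∩ X) \ {x}, w ∈ T := fun w hw =>
          ⟨hA v hv x hx w hw.1.2 hvx hw.1.1 (fun h => hw.2 h.symm), hx, hw.1.2⟩
        exact ⟨y, z, hyz, hm y hy, hm z hz, hy.1.1, hz.1.1⟩
      choose! py pz hpne hpy hpz hay haz using hpick
      have hJc : J.ncard ≤ 512 := by
        have h1 : J.ncard ≤ {p : (V × V) × V | p.1 ∈ T ×ˢ T ∧
            p.2 ∈ {v | v ∈ J ∧ (py v, pz v) = p.1}}.ncard := by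
          refine Set.ncard_le_ncard_of_injOn (fun v => ((py v, pz v), v)) ?_ ?_ (Set.toFinite _)
          · intro v hv
            exact ⟨⟨hpy v hv, hpz v hv⟩, hv, rfl⟩
          · intro v _ w _ h
            exact (Prod.mk.inj h).2
        have h2 := ncard_dep_le (T ×ˢ T) (fun q => {v | v ∈ J ∧ (py v, pz v) = q}) 2 (by
          rintro ⟨y, z⟩ _
          by_contra hcon
          push Not at hcon
          obtain ⟨a, b, c, ⟨haJ, ha⟩, ⟨hbJ, hb⟩, ⟨hcJ, hc⟩, hab, hac, hbc⟩ :=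
            (Set.two_lt_ncard_iff (Set.toFinite _)).1 hcon
          simp only [Prod.mk.injEq] at ha hb hc
          have hyT := hpy a haJ
          have hzT := hpz a haJ
          have hyz := hpne a haJ
          have := hay a haJ
          have := haz a haJ
          have := hay b hbJ
          have := haz b hbJ
          have := hay c hcJ
          have := haz c hcJ
          rw [ha.1] at *
          rw [ha.2] at *
          rw [hb.1] at *
          rw [hb.2] at *
          rw [hc.1] at *
          rw [hc.2] at *
          have hxy : x ≠ y := fun h => G.loopless.irrefl x (by simpa [← h] using hyT.1)
          have hxz : x ≠ z := fun h => G.loopless.irrefl x (by simpa [← h] using hzT.1)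
          refine not_planar_of_K33 (G := G) ![a, b, c] ![x, y, z] ?_ ?_ ?_ hG
          · intro i j; fin_cases i <;> fin_cases j <;> simp [hab, hac, hbc, hab.symm, hac.symm, hbc.symm]
          · intro i j; fin_cases i <;> fin_cases j <;> simp [hxy, hxz, hyz, hxy.symm, hxz.symm, hyz.symm]
          · intro i j
            have := haJ.2
            have := hbJ.2
            have := hcJ.2
            fin_cases i <;> fin_cases j <;> assumption)
        have h3 : (T ×ˢ T).ncard ≤ 256 := by
          rw [Set.ncard_prod]
          exact Nat.mul_le_mul hdx hdx
        have h4 : {p : (V × V) × V | p.1 ∈ T ×ˢ T ∧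
            p.2 ∈ {v | v ∈ J ∧ (py v, pz v) = p.1}}.ncard ≤ (T ×ˢ T).ncard * 2 := h2
        omega
      have hX' : (X \ {x}).ncard + 1 = X.ncard := Set.ncard_sdiff_singleton_add_one hx
      have hIJ : I.ncard ≤ (I \ J).ncard + J.ncard :=
        (Set.ncard_le_ncard (by intro v hv; by_cases h : v ∈ J <;> simp [h, hv])
          (Set.toFinite _)).trans (Set.ncard_union_le _ _)
      have hIJ' : (I \ J).ncard ≤ I.ncard := Set.ncard_le_ncard Set.sdiff_subset (Set.toFinite _)
      have hrec := ih ((X \ {x}).ncard + (I \ J).ncard) (by omega) G hG (X \ {x}) (I \ J)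
        (hd.mono Set.sdiff_subset Set.sdiff_subset) (by
          rintro v ⟨hv, hvJ⟩
          refine (hI v hv).trans (Set.ncard_le_ncard ?_ (Set.toFinite _))
          rintro y ⟨hy, hyX⟩
          refine ⟨hy, hyX, ?_⟩
          rintro rfl
          exact hvJ ⟨hv, hy⟩) rfl
      have hdrop : dc (restr G X) ≤ dc (restr G (X \ {x})) + 32 := by
        have h1 : {p : V × V | (restr G X).Adj p.1 p.2} ⊆
            {p : V × V | (restr G (X \ {x})).Adj p.1 p.2} ∪
              (((fun y => (x, y)) '' T) ∪ ((fun y => (y, x)) '' T)) := by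
          rintro ⟨a, b⟩ hab
          by_cases ha : a = x
          · subst ha; right; left; exact ⟨b, hab, rfl⟩
          · by_cases hb : b = x
            · subst hb; right; right; exact ⟨a, (restr G X).symm.symm _ _ hab, rfl⟩
            · left; exact ⟨hab.1, ⟨hab.2.1, ha⟩, hab.2.2, hb⟩
        have h2 := Set.ncard_le_ncard h1 (Set.toFinite _)
        have h3 := Set.ncard_union_le {p : V × V | (restr G (X \ {x})).Adj p.1 p.2}
          (((fun y => (x, y)) '' T) ∪ ((fun y => (y, x)) '' T))
        have h4 := Set.ncard_union_le ((fun y => (x, y)) '' T) ((fun y => (y, x)) '' T)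
        have h5 := Set.ncard_image_le (f := fun y => (x, y)) (Set.toFinite T)
        have h6 := Set.ncard_image_le (f := fun y => (y, x)) (Set.toFinite T)
        have h7 : T.ncard ≤ 16 := hdx
        unfold dc
        omega
      omega

/-! ### The number of planar graphs -/

/-- The planar graphs whose edges lie inside `S`. -/
def planarOn {V : Type*} (S : Set V) : Set (SimpleGraph V) := {G | IsPlanar G ∧ G.support ⊆ S}

/-- The codes recovering `G` from `(v, contr G u v)`: they list `u`, its neighbourhood and the
neighbourhood of `v`. -/
def codes {V : Type*} (D : ℕ) (S : Set V) (p : V × SimpleGraph V) : Set (V × Set V × Set V) :=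
  {(p.1, ∅, ∅)} ∪ (fun u => (u, insert p.1 (p.2.neighborSet u), {u})) '' S ∪
    ((fun d : V × V => (d.1, insert p.1 (p.2.neighborSet d.1), {d.1, d.2})) ''
        {d | p.2.Adj d.1 d.2} ∪
      (fun d : V × V => (d.1, insert p.1 (p.2.neighborSet d.1 \ {d.2}), {d.1, d.2})) ''
        {d | p.2.Adj d.1 d.2}) ∪
    {q | q.1 ∈ {u | u ∈ S ∧ (p.2.neighborSet u).ncard ≤ 2 * D} ∧
      q.2 ∈ 𝒫 (insert q.1 (insert p.1 (p.2.neighborSet q.1))) ×ˢ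
        𝒫 (insert q.1 (insert p.1 (p.2.neighborSet q.1)))}

theorem codes_ncard {V : Type} [Finite V] (D : ℕ) (S : Set V) (p : V × SimpleGraph V)
    (hp : IsPlanar p.2) (hS : p.2.support ⊆ S) (h0 : 0 < S.ncard) :
    (codes D S p).ncard ≤ (34 + 2 ^ (2 * D + 2) * 2 ^ (2 * D + 2)) * S.ncard := by
  have hdc := dc_le_of_support hp S hS
  unfold dc at hdc
  unfold codes
  refine (Set.ncard_union_le _ _).trans ?_
  rw [add_mul]
  refine Nat.add_le_add ?_ ?_
  · refine (Set.ncard_union_le _ _).trans ?_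
    have a1 := Set.ncard_union_le {(p.1, (∅ : Set V), (∅ : Set V))}
      ((fun u => (u, insert p.1 (p.2.neighborSet u), {u})) '' S)
    have a2 := Set.ncard_image_le
      (f := fun u => (u, insert p.1 (p.2.neighborSet u), ({u} : Set V))) (Set.toFinite S)
    have a3 := Set.ncard_union_le
      ((fun d : V × V => (d.1, insert p.1 (p.2.neighborSet d.1), ({d.1, d.2} : Set V))) ''
        {d | p.2.Adj d.1 d.2})
      ((fun d : V × V => (d.1, insert p.1 (p.2.neighborSet d.1 \ {d.2}), ({d.1, d.2} : Set V))) ''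
        {d | p.2.Adj d.1 d.2})
    have a4 := Set.ncard_image_le
      (f := fun d : V × V => (d.1, insert p.1 (p.2.neighborSet d.1), ({d.1, d.2} : Set V)))
      (Set.toFinite {d | p.2.Adj d.1 d.2})
    have a5 := Set.ncard_image_le
      (f := fun d : V × V => (d.1, insert p.1 (p.2.neighborSet d.1 \ {d.2}), ({d.1, d.2} : Set V)))
      (Set.toFinite {d | p.2.Adj d.1 d.2})
    rw [Set.ncard_singleton] at a1
    omega
  · refine (ncard_dep_le _ (fun u => 𝒫 (insert u (insert p.1 (p.2.neighborSet u))) ×ˢ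
        𝒫 (insert u (insert p.1 (p.2.neighborSet u)))) (2 ^ (2 * D + 2) * 2 ^ (2 * D + 2)) ?_).trans ?_
    · rintro u ⟨_, hu⟩
      rw [Set.ncard_prod, Set.ncard_powerset _ (Set.toFinite _)]
      have a1 := Set.ncard_insert_le u (insert p.1 (p.2.neighborSet u))
      have a2 := Set.ncard_insert_le p.1 (p.2.neighborSet u)
      have a3 : 2 ^ (insert u (insert p.1 (p.2.neighborSet u))).ncard ≤ 2 ^ (2 * D + 2) :=
        Nat.pow_le_pow_right (by norm_num) (by omega)
      exact Nat.mul_le_mul a3 a3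
    · rw [mul_comm]
      exact Nat.mul_le_mul_left _ (Set.ncard_le_ncard (fun u hu => hu.1) (Set.toFinite _))

/-- `v` may be removed at the cost of few codes, by contraction into `u` (or as an isolated
vertex if `u = v`). -/
def GoodPair {V : Type*} (D : ℕ) (G : SimpleGraph V) (u v : V) : Prop :=
  (u = v ∧ G.neighborSet v = ∅) ∨ G.Adj u v ∧ (vertexDegree G v ≤ 2 ∨
    vertexDegree G v ≤ D ∧ vertexDegree G u ≤ D)

/-- At least half of the vertices belong to a good pair as the vertex to be removed: there are few
vertices of high degree, hence by `bip` few vertices seeing only those. -/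
theorem good_many {V : Type} [Finite V] {D : ℕ} (hD : D = 545 * 32) {S : Set V}
    {G : SimpleGraph V} (hG : G ∈ planarOn S) :
    S.ncard ≤ 2 * {v | v ∈ S ∧ ∃ u, GoodPair D G u v}.ncard := by
  classical
  set Hi := {v | D ≤ vertexDegree G v} with hHi
  have h1 : Hi.ncard * D ≤ 16 * S.ncard :=
    (dc_ge G Hi D (fun v hv => hv)).trans (dc_le_of_support hG.1 S hG.2)
  set I := {v | v ∉ Hi ∧ 3 ≤ vertexDegree G v ∧ G.neighborSet v ⊆ Hi} with hI
  have h2 := bip G hG.1 Hi I (Set.disjoint_left.2 fun v hv hv' => hv'.1 hv) (by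
    rintro v ⟨_, h3, hsub⟩
    rw [Set.inter_eq_left.2 hsub]; exact h3)
  have hsub : S ⊆ {v | v ∈ S ∧ ∃ u, GoodPair D G u v} ∪ (Hi ∪ I) := by
    intro v hv
    by_cases hvH : v ∈ Hi
    · exact Or.inr (Or.inl hvH)
    by_cases h3 : 3 ≤ vertexDegree G v
    · by_cases hs : G.neighborSet v ⊆ Hi
      · exact Or.inr (Or.inr ⟨hvH, h3, hs⟩)
      · obtain ⟨u, hu, huH⟩ := Set.not_subset.1 hs
        left
        refine ⟨hv, u, Or.inr ⟨G.adj_symm hu, Or.inr ⟨?_, ?_⟩⟩⟩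
        · exact (not_le.1 hvH).le
        · exact (not_le.1 huH).le
    · left
      refine ⟨hv, ?_⟩
      rcases (G.neighborSet v).eq_empty_or_nonempty with he | ⟨u, hu⟩
      · exact ⟨v, Or.inl ⟨rfl, he⟩⟩
      · exact ⟨u, Or.inr ⟨G.adj_symm hu, Or.inl (by omega)⟩⟩
  have h4 := (Set.ncard_le_ncard hsub (Set.toFinite _)).trans (Set.ncard_union_le _ _)
  have h5 := Set.ncard_union_le Hi I
  subst hD
  omega

theorem contr_self {V : Type*} (G : SimpleGraph V) (u : V) : contr G u u = G := by
  classical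
  have : Function.update id u u = (id : V → V) := by
    ext x; by_cases h : x = u <;> simp [h]
  simp only [contr, this]
  exact SimpleGraph.map_id G

theorem contr_adj_off {V : Type*} {D : ℕ} {G : SimpleGraph V} {u v : V} (h : GoodPair D G u v)
    {x y : V} (hx : x ≠ u) (hx' : x ≠ v) (hy : y ≠ u) (hy' : y ≠ v) :
    (contr G u v).Adj x y ↔ G.Adj x y := by
  rcases h with ⟨rfl, _⟩ | ⟨h, _⟩
  · rw [contr_self]
  · rw [contr_adj G h.ne]
    constructor
    · rintro ⟨_, _, _, h | h | h⟩
      · exact h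
      · exact absurd h.1 hx
      · exact absurd h.1 hy
    · intro h
      exact ⟨h.ne, hx', hy', Or.inl h⟩

theorem contr_mem {V : Type*} {D : ℕ} {S : Set V} {G : SimpleGraph V} (hG : G ∈ planarOn S)
    {u v : V} (h : GoodPair D G u v) : contr G u v ∈ planarOn (S \ {v}) := by
  rcases h with ⟨rfl, h⟩ | ⟨h, _⟩
  · have : contr G u u = G := contr_self G u
    rw [this]
    refine ⟨hG.1, fun x hx => ⟨hG.2 hx, ?_⟩⟩
    rintro rfl
    obtain ⟨y, hy⟩ := hx
    have : y ∈ G.neighborSet x := hy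
    simp [h] at this
  · refine ⟨planar_contr hG.1 h, ?_⟩
    rintro x ⟨y, hxy⟩
    replace hxy : (contr G u v).Adj x y := hxy
    rw [contr_adj G h.ne] at hxy
    refine ⟨hG.2 ?_, hxy.2.1⟩
    rcases hxy.2.2.2 with h' | ⟨rfl, _⟩ | ⟨_, h'⟩
    · exact ⟨y, h'⟩
    · exact ⟨v, h⟩
    · exact ⟨v, h'.symm⟩

theorem contr_nbr {V : Type*} {G : SimpleGraph V} {u v : V} (h : G.Adj u v) :
    (contr G u v).neighborSet u = (G.neighborSet u ∪ G.neighborSet v) \ {u, v} := by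
  ext y
  have := contr_adj G h.ne u y
  simp only [mem_neighborSet, Set.mem_sdiff, Set.mem_union, Set.mem_insert_iff,
    Set.mem_singleton_iff] at *
  rw [this]
  have := h.ne
  grind

theorem code_mem {V : Type} [Finite V] {D : ℕ} {S : Set V} {G : SimpleGraph V}
    (hG : G ∈ planarOn S) {u v : V} (h : GoodPair D G u v) :
    (u, G.neighborSet u, G.neighborSet v) ∈ codes D S (v, contr G u v) := by
  classical
  rcases h with ⟨rfl, h⟩ | ⟨h, hd⟩
  · left; left; left
    simp [h]
  · have hn := contr_nbr h
    have huS : u ∈ S := hG.2 ⟨v, h⟩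
    rcases hd with hd | ⟨hd1, hd2⟩
    · have huv : u ∈ G.neighborSet v := h.symm
      have hpos : 0 < (G.neighborSet v).ncard := (Set.ncard_pos (Set.toFinite _)).2 ⟨u, huv⟩
      have hcases : (G.neighborSet v).ncard = 1 ∨ (G.neighborSet v).ncard = 2 := by
        unfold vertexDegree at hd; omega
      rcases hcases with h1 | h2
      · obtain ⟨w, hw⟩ := Set.ncard_eq_one.1 h1
        have : u = w := by simpa [hw] using huv
        subst this
        left; left; right
        refine ⟨u, huS, ?_⟩
        simp only [Prod.mk.injEq, true_and]
        refine ⟨?_, hw.symm⟩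
        rw [hn, hw]
        ext y
        have := h.ne
        have hl := G.loopless.irrefl u
        simp only [mem_neighborSet, Set.mem_sdiff, Set.mem_union, Set.mem_insert_iff,
          Set.mem_singleton_iff]
        grind
      · obtain ⟨a, b, hab, hw⟩ := Set.ncard_eq_two.1 h2
        obtain ⟨w, hwu, hw⟩ : ∃ w, w ≠ u ∧ G.neighborSet v = {u, w} := by
          have : u = a ∨ u = b := by simpa [hw] using huv
          rcases this with rfl | rfl
          · exact ⟨b, hab.symm, hw⟩
          · exact ⟨a, hab, by rw [hw, Set.pair_comm]⟩
        have hvw : G.Adj v w := by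
          have : w ∈ G.neighborSet v := by simp [hw]
          exact this
        have hdart : (contr G u v).Adj u w := by
          rw [contr_adj G h.ne]
          exact ⟨hwu.symm, h.ne, hvw.ne.symm, Or.inr (Or.inl ⟨rfl, hvw⟩)⟩
        have hl := G.loopless.irrefl u
        have := h.ne
        have := hvw.ne
        left; right
        by_cases huw : G.Adj u w
        · left
          refine ⟨(u, w), hdart, ?_⟩
          simp only [Prod.mk.injEq, true_and]
          refine ⟨?_, hw.symm⟩
          rw [hn, hw]
          ext y
          simp only [mem_neighborSet, Set.mem_sdiff, Set.mem_union, Set.mem_insert_iff,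
            Set.mem_singleton_iff]
          grind
        · right
          refine ⟨(u, w), hdart, ?_⟩
          simp only [Prod.mk.injEq, true_and]
          refine ⟨?_, hw.symm⟩
          rw [hn, hw]
          ext y
          simp only [mem_neighborSet, Set.mem_sdiff, Set.mem_union, Set.mem_insert_iff,
            Set.mem_singleton_iff]
          grind
    · right
      refine ⟨⟨huS, ?_⟩, ?_, ?_⟩
      · simp only
        rw [hn]
        have a1 := Set.ncard_le_ncard (s := (G.neighborSet u ∪ G.neighborSet v) \ {u, v})
          (t := G.neighborSet u ∪ G.neighborSet v) Set.sdiff_subset (Set.toFinite _)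
        have a2 := Set.ncard_union_le (G.neighborSet u) (G.neighborSet v)
        unfold vertexDegree at hd1 hd2
        omega
      · intro y hy
        simp only [hn] at *
        simp only [mem_neighborSet, Set.mem_sdiff, Set.mem_union, Set.mem_insert_iff,
            Set.mem_singleton_iff] at *
        tauto
      · intro y hy
        simp only [hn] at *
        simp only [mem_neighborSet, Set.mem_sdiff, Set.mem_union, Set.mem_insert_iff,
            Set.mem_singleton_iff] at *
        tauto

/-- The number of labelled planar graphs on `s` vertices is at most `C ^ s * s!`. -/
theorem smallness : ∃ C : ℕ, 0 < C ∧ ∀ {V : Type} [Finite V] (S : Set V),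
    (planarOn S).ncard ≤ C ^ S.ncard * S.ncard.factorial := by
  classical
  obtain ⟨D, hD⟩ : ∃ D, D = 545 * 32 := ⟨_, rfl⟩
  obtain ⟨K, hK⟩ : ∃ K, K = 34 + 2 ^ (2 * D + 2) * 2 ^ (2 * D + 2) := ⟨_, rfl⟩
  refine ⟨2 * K, by omega, ?_⟩
  intro V _ S
  induction hn : S.ncard generalizing S with
  | zero =>
    rw [Set.ncard_eq_zero (Set.toFinite _)] at hn
    subst hn
    have : planarOn (∅ : Set V) ⊆ {⊥} := by
      rintro G ⟨_, hG⟩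
      simp only [Set.mem_singleton_iff]
      ext x y
      simp only [bot_adj, iff_false]
      intro hxy
      exact hG ⟨y, hxy⟩
    simpa using Set.ncard_le_ncard this (Set.toFinite _)
  | succ s ih =>
    let U : SimpleGraph V → V → V := fun G v =>
      if h : ∃ u, GoodPair D G u v then h.choose else v
    have hU : ∀ G v, (∃ u, GoodPair D G u v) → GoodPair D G (U G v) v := by
      intro G v h
      simp only [U, h, dite_true]
      exact h.choose_spec
    have key := double_count (planarOn S) (fun G => {v | v ∈ S ∧ ∃ u, GoodPair D G u v})
      {p : V × SimpleGraph V | p.1 ∈ S ∧ p.2 ∈ planarOn (S \ {p.1})} (codes D S)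
      (fun G v => (v, contr G (U G v) v)) (fun G v => (U G v, G.neighborSet (U G v), G.neighborSet v))
      ((s + 2) / 2) (K * (s + 1)) ?_ ?_ ?_ ?_
    · have hY : {p : V × SimpleGraph V | p.1 ∈ S ∧ p.2 ∈ planarOn (S \ {p.1})}.ncard ≤
          (s + 1) * ((2 * K) ^ s * s.factorial) := by
        rw [← hn]
        refine ncard_dep_le S (fun v => planarOn (S \ {v})) _ ?_
        intro v hv
        refine ih _ ?_
        rw [Set.ncard_sdiff_singleton_of_mem hv, hn]; rfl
      have h2 : (s + 1) ≤ 2 * ((s + 2) / 2) := by omega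
      have h3 : (planarOn S).ncard * (s + 1) ≤
          ((2 * K) ^ (s + 1) * (s + 1).factorial) * (s + 1) := by
        calc (planarOn S).ncard * (s + 1) ≤ (planarOn S).ncard * (2 * ((s + 2) / 2)) :=
              Nat.mul_le_mul_left _ h2
          _ = 2 * ((planarOn S).ncard * ((s + 2) / 2)) := by ring
          _ ≤ 2 * ((s + 1) * ((2 * K) ^ s * s.factorial) * (K * (s + 1))) :=
              Nat.mul_le_mul_left _ (key.trans (Nat.mul_le_mul_right _ hY))
          _ = _ := by rw [Nat.factorial_succ]; ring
      exact Nat.le_of_mul_le_mul_right h3 (by omega)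
    · intro G hG
      have := good_many hD hG
      omega
    · rintro ⟨v, G⟩ ⟨hv, hG⟩
      rw [← hn, hK]
      exact codes_ncard D S _ hG.1 (hG.2.trans Set.sdiff_subset) (by omega)
    · rintro G hG v ⟨hv, hex⟩
      exact ⟨⟨hv, contr_mem hG (hU G v hex)⟩, code_mem hG (hU G v hex)⟩
    · rintro G hG v ⟨hv, hex⟩ G' hG' v' ⟨hv', hex'⟩ h1 h2
      simp only [Prod.mk.injEq] at h1 h2
      obtain ⟨rfl, h1⟩ := h1
      refine ⟨?_, rfl⟩
      have g1 := hU G v hex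
      have g2 := hU G' v hex'
      obtain ⟨e1, e2, e3⟩ := h2
      rw [← e1] at g2 h1 e2
      generalize U G v = u at *
      have f2 : ∀ y, G.Adj u y ↔ G'.Adj u y := fun y => Set.ext_iff.1 e2 y
      have f3 : ∀ y, G.Adj v y ↔ G'.Adj v y := fun y => Set.ext_iff.1 e3 y
      ext x y
      by_cases a1 : x = u
      · subst a1; exact f2 y
      by_cases a2 : x = v
      · subst a2; exact f3 y
      by_cases a3 : y = u
      · subst a3; rw [G.adj_comm, G'.adj_comm]; exact f2 x
      by_cases a4 : y = v
      · subst a4; rw [G.adj_comm, G'.adj_comm]; exact f3 x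
      rw [← contr_adj_off g1 a1 a2 a3 a4, ← contr_adj_off g2 a1 a2 a3 a4, h1]

/-! ### Dense connected planar graphs -/

/-- Two adjacent apex vertices `0, 1` joined to the path `2, 3, …, n - 1`. -/
def gad (n : ℕ) : SimpleGraph (Fin n) where
  Adj x y := x ≠ y ∧ (x.val < 2 ∨ y.val < 2 ∨ x.val + 1 = y.val ∨ y.val + 1 = x.val)
  symm := ⟨fun x y h => ⟨h.1.symm, by tauto⟩⟩
  loopless := ⟨fun x h => h.1 rfl⟩

/-- The star with centre `0`. -/
def star0 (n : ℕ) : SimpleGraph (Fin n) where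
  Adj x y := x ≠ y ∧ (x.val = 0 ∨ y.val = 0)
  symm := ⟨fun x y h => ⟨h.1.symm, by tauto⟩⟩
  loopless := ⟨fun x h => h.1 rfl⟩

/-- What prevents `H`, after deletion of two vertices, from being a minor of a path: a vertex of
degree three, or a subgraph of minimum degree two. -/
def Hub {α : Type*} (H : SimpleGraph α) : Prop :=
  ∀ p q : α, (∃ a b c d, a ≠ p ∧ a ≠ q ∧ b ≠ p ∧ b ≠ q ∧ c ≠ p ∧ c ≠ q ∧ d ≠ p ∧ d ≠ q ∧
      b ≠ c ∧ b ≠ d ∧ c ≠ d ∧ H.Adj a b ∧ H.Adj a c ∧ H.Adj a d) ∨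
    ((∃ a, a ≠ p ∧ a ≠ q) ∧ ∀ a, a ≠ p → a ≠ q →
      ∃ b c, b ≠ c ∧ b ≠ p ∧ b ≠ q ∧ c ≠ p ∧ c ≠ q ∧ H.Adj a b ∧ H.Adj a c)

theorem hub_K5 : Hub (completeGraph (Fin 5)) := by
  intro p q
  right
  refine ⟨by revert p q; decide, ?_⟩
  have : ∀ p q a : Fin 5, ∃ b c, b ≠ c ∧ b ≠ p ∧ b ≠ q ∧ c ≠ p ∧ c ≠ q ∧ a ≠ b ∧ a ≠ c := by
    decide
  intro a _ _
  exact this p q a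

theorem hub_K33 : Hub (completeBipartiteGraph (Fin 3) (Fin 3)) := by
  have h1 : ∀ i j : Fin 3, ∃ k, k ≠ i ∧ k ≠ j := by decide
  have h2 : ∀ i : Fin 3, ∃ k l, k ≠ l ∧ k ≠ i ∧ l ≠ i := by decide
  rintro (i | i) (j | j)
  · obtain ⟨k, hk⟩ := h1 i j
    exact Or.inl ⟨Sum.inl k, Sum.inr 0, Sum.inr 1, Sum.inr 2, by simp [hk]⟩
  · obtain ⟨k, l, hkl, hk, hl⟩ := h2 i
    obtain ⟨k', l', hkl', hk', hl'⟩ := h2 j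
    refine Or.inr ⟨⟨Sum.inl k, by simp [hk]⟩, ?_⟩
    rintro (a | a) ha ha'
    · exact ⟨Sum.inr k', Sum.inr l', by simp [hkl', hk', hl']⟩
    · exact ⟨Sum.inl k, Sum.inl l, by simp [hkl, hk, hl]⟩
  · obtain ⟨k, l, hkl, hk, hl⟩ := h2 j
    obtain ⟨k', l', hkl', hk', hl'⟩ := h2 i
    refine Or.inr ⟨⟨Sum.inl k, by simp [hk]⟩, ?_⟩
    rintro (a | a) ha ha'
    · exact ⟨Sum.inr k', Sum.inr l', by simp [hkl', hk', hl']⟩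
    · exact ⟨Sum.inl k, Sum.inl l, by simp [hkl, hk, hl]⟩
  · obtain ⟨k, hk⟩ := h1 i j
    exact Or.inl ⟨Sum.inr k, Sum.inl 0, Sum.inl 1, Sum.inl 2, by simp [hk]⟩

/-- At most two branch sets contain the apex vertices; the others would form a minor of a path, whose
branch sets are intervals. -/
theorem gad_no_minor {α : Type} [Finite α] [Nonempty α] {H : SimpleGraph α} (hH : Hub H) (n : ℕ) :
    ¬ IsMinor H (gad n) := by
  classical
  rw [isMinor_iff]
  rintro ⟨f, h1, h2, h3⟩
  -- at most two branch sets contain an apex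
  have own : ∀ t : ℕ, ∃ p, ∀ a, ∀ x ∈ f a, x.val = t → a = p := by
    intro t
    by_cases h : ∃ p, ∃ x ∈ f p, x.val = t
    · obtain ⟨p, x, hx, hxt⟩ := h
      refine ⟨p, fun a y hy hyt => ?_⟩
      by_contra hap
      have : x = y := Fin.ext (by omega)
      exact Set.disjoint_left.1 (h2 a p hap) hy (this ▸ hx)
    · push Not at h
      exact ⟨Classical.arbitrary α, fun a x hx hxt => absurd hxt (h a x hx)⟩
  obtain ⟨p, hp⟩ := own 0
  obtain ⟨q, hq⟩ := own 1
  have hge : ∀ a, a ≠ p → a ≠ q → ∀ x ∈ f a, 2 ≤ x.val := by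
    intro a hap haq x hx
    by_contra hlt
    have : x.val = 0 ∨ x.val = 1 := by omega
    rcases this with h | h
    · exact hap (hp a x hx h)
    · exact haq (hq a x hx h)
  have conv : ∀ a, a ≠ p → a ≠ q → ∀ x ∈ f a, ∀ y ∈ f a, ∀ z, x ≤ z → z ≤ y → z ∈ f a := by
    intro a hap haq x hx y hy z hxz hzy
    have := (h1 a).2 x hx y hy
    clear hy
    induction this with
    | refl => rwa [le_antisymm hzy hxz]
    | @tail b c _ hbc ih =>
      by_cases hzb : z ≤ b
      · exact ih hzb
      · have hb := hge a hap haq b hbc.2.1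
        have hc := hge a hap haq c hbc.2.2
        obtain ⟨hbc', -, hc'⟩ := hbc
        have hh := hbc'.2
        have : z = c := Fin.ext (by
          have := Fin.le_def.1 hzy
          have : ¬ z.val ≤ b.val := fun h => hzb (Fin.le_def.2 h)
          omega)
        rw [this]; exact hc'
  have hlo : ∀ a, ∃ l ∈ f a, ∀ x ∈ f a, l ≤ x := fun a => by
    obtain ⟨l, hl, hl'⟩ := Set.exists_min_image (f a) id (Set.toFinite _) (h1 a).1
    exact ⟨l, hl, hl'⟩
  have hhi : ∀ a, ∃ l ∈ f a, ∀ x ∈ f a, x ≤ l := fun a => by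
    obtain ⟨l, hl, hl'⟩ := Set.exists_max_image (f a) id (Set.toFinite _) (h1 a).1
    exact ⟨l, hl, hl'⟩
  choose lo hlo1 hlo2 using hlo
  choose hi hhi1 hhi2 using hhi
  have disj : ∀ a b x, x ∈ f a → x ∈ f b → a = b := by
    intro a b x ha hb
    by_contra hab
    exact Set.disjoint_left.1 (h2 a b hab) ha hb
  have loinj : ∀ a b, (lo a).val = (lo b).val → a = b := fun a b h =>
    disj a b (lo a) (hlo1 a) (Fin.ext h ▸ hlo1 b)
  have hiinj : ∀ a b, (hi a).val = (hi b).val → a = b := fun a b h =>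
    disj a b (hi a) (hhi1 a) (Fin.ext h ▸ hhi1 b)
  have lohi : ∀ a, (lo a).val ≤ (hi a).val := fun a => Fin.le_def.1 (hlo2 a _ (hhi1 a))
  have step : ∀ a b, a ≠ p → a ≠ q → b ≠ p → b ≠ q → a ≠ b → ∀ x ∈ f a, ∀ y ∈ f b,
      x.val + 1 = y.val → (hi a).val + 1 = (lo b).val := by
    intro a b hap haq hbp hbq hab x hx y hy hxy
    have e1 : hi a = x := by
      have hle := Fin.le_def.1 (hhi2 a x hx)
      by_contra hne
      have : (hi a).val ≠ x.val := fun h => hne (Fin.ext h)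
      exact hab (disj a b y (conv a hap haq x hx _ (hhi1 a) y (Fin.le_def.2 (by omega))
        (Fin.le_def.2 (by omega))) hy)
    have e2 : lo b = y := by
      have hle := Fin.le_def.1 (hlo2 b y hy)
      by_contra hne
      have : (lo b).val ≠ y.val := fun h => hne (Fin.ext h)
      exact hab (disj a b x hx (conv b hbp hbq _ (hlo1 b) y hy x (Fin.le_def.2 (by omega))
        (Fin.le_def.2 (by omega))))
    rw [e1, e2, hxy]
  have nb : ∀ a b, a ≠ p → a ≠ q → b ≠ p → b ≠ q → H.Adj a b →
      (hi a).val + 1 = (lo b).val ∨ (hi b).val + 1 = (lo a).val := by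
    intro a b hap haq hbp hbq hab
    obtain ⟨x, hx, y, hy, hxy⟩ := h3 a b hab
    have hx2 := hge a hap haq x hx
    have hy2 := hge b hbp hbq y hy
    have hh := hxy.2
    have : x.val + 1 = y.val ∨ y.val + 1 = x.val := by omega
    rcases this with h | h
    · exact Or.inl (step a b hap haq hbp hbq hab.ne x hx y hy h)
    · exact Or.inr (step b a hbp hbq hap haq hab.ne.symm y hy x hx h)
  rcases hH p q with ⟨a, b, c, d, hap, haq, hbp, hbq, hcp, hcq, hdp, hdq, hbc, hbd, hcd, hab, hac, had⟩ |
    ⟨⟨a0, ha0p, ha0q⟩, hR⟩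
  · have n1 := nb a b hap haq hbp hbq hab
    have n2 := nb a c hap haq hcp hcq hac
    have n3 := nb a d hap haq hdp hdq had
    have l1 : (lo b).val ≠ (lo c).val := fun h => hbc (loinj b c h)
    have l2 : (lo b).val ≠ (lo d).val := fun h => hbd (loinj b d h)
    have l3 : (lo c).val ≠ (lo d).val := fun h => hcd (loinj c d h)
    have k1 : (hi b).val ≠ (hi c).val := fun h => hbc (hiinj b c h)
    have k2 : (hi b).val ≠ (hi d).val := fun h => hbd (hiinj b d h)
    have k3 : (hi c).val ≠ (hi d).val := fun h => hcd (hiinj c d h)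
    omega
  · obtain ⟨a, ⟨hap, haq⟩, hmin⟩ := Set.exists_min_image {a | a ≠ p ∧ a ≠ q} lo (Set.toFinite _)
      ⟨a0, ha0p, ha0q⟩
    obtain ⟨b, c, hbc, hbp, hbq, hcp, hcq, hab, hac⟩ := hR a hap haq
    have n1 := nb a b hap haq hbp hbq hab
    have n2 := nb a c hap haq hcp hcq hac
    have l1 : (lo b).val ≠ (lo c).val := fun h => hbc (loinj b c h)
    have m1 := Fin.le_def.1 (hmin b ⟨hbp, hbq⟩)
    have m2 := Fin.le_def.1 (hmin c ⟨hcp, hcq⟩)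
    have o1 := lohi b
    have o2 := lohi c
    omega

theorem gad_planar (n : ℕ) : IsPlanar (gad n) :=
  ⟨gad_no_minor hub_K5 n, gad_no_minor hub_K33 n⟩

theorem gad_edges (n : ℕ) : 3 * n - 9 ≤ edgeCount (gad n) := by
  classical
  rcases Nat.lt_or_ge n 3 with h | h
  · omega
  obtain ⟨k, rfl⟩ : ∃ k, n = k + 3 := ⟨n - 3, by omega⟩
  have hlt : ∀ j : Fin k, j.val < k := fun j => j.2
  let g : Fin k × Fin 3 → Sym2 (Fin (k + 3)) := fun p =>
    s(⟨p.1.val + 3, by have := hlt p.1; omega⟩,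
      if p.2 = 0 then ⟨0, by omega⟩ else if p.2 = 1 then ⟨1, by omega⟩ else
        ⟨p.1.val + 2, by have := hlt p.1; omega⟩)
  have h1 : (Set.univ : Set (Fin k × Fin 3)).ncard ≤ (gad (k + 3)).edgeSet.ncard := by
    refine Set.ncard_le_ncard_of_injOn g ?_ ?_ (Set.toFinite _)
    · rintro ⟨j, t⟩ _
      simp only [g, mem_edgeSet]
      fin_cases t <;> simp [gad, Fin.ext_iff]
    · rintro ⟨j, t⟩ _ ⟨j', t'⟩ _ h
      simp only [g, Sym2.eq_iff] at h
      fin_cases t <;> fin_cases t' <;> simp [Fin.ext_iff] at h ⊢ <;> omega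
  rw [Set.ncard_univ, Nat.card_prod] at h1
  simp only [Nat.card_eq_fintype_card, Fintype.card_fin] at h1
  unfold edgeCount
  omega

theorem star0_edges (n : ℕ) : edgeCount (star0 (n + 1)) ≤ n := by
  classical
  have : (star0 (n + 1)).edgeSet ⊆ (fun j : Fin (n + 1) => s(0, j)) '' {j | j ≠ 0} := by
    intro e
    induction e with
    | _ x y =>
      rintro ⟨hne, h⟩
      rcases h with h | h
      · have h0 : x = 0 := Fin.ext h
        subst h0
        exact ⟨y, hne.symm, rfl⟩
      · have h0 : y = 0 := Fin.ext h
        subst h0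
        exact ⟨x, hne, Sym2.eq_swap⟩
  refine (Set.ncard_le_ncard this (Set.toFinite _)).trans ((Set.ncard_image_le (Set.toFinite _)).trans ?_)
  have h2 : {j : Fin (n + 1) | j ≠ 0} = Set.univ \ {0} := by ext; simp
  rw [h2, Set.ncard_sdiff_singleton_of_mem (Set.mem_univ _), Set.ncard_univ]
  simp

theorem star0_connected (n : ℕ) : (star0 (n + 1)).Connected := by
  have h : ∀ x, (star0 (n + 1)).Reachable 0 x := by
    intro x
    by_cases hx : x = 0
    · rw [hx]
    · exact Adj.reachable ⟨fun h => hx h.symm, Or.inl rfl⟩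
  exact ⟨fun x y => (h x).symm.trans (h y)⟩

/-- The connected planar graphs on `Fin n` with `m` edges. -/
def connSet (n m : ℕ) : Set (SimpleGraph (Fin n)) :=
  {G | G.Connected ∧ IsPlanar G ∧ edgeCount G = m}

/-- Interpolate between the spanning star and `gad`. -/
theorem connSet_nonempty (n i : ℕ) (h1 : n ≤ i) (h2 : i ≤ edgeCount (gad (n + 1))) :
    (connSet (n + 1) i).Nonempty := by
  classical
  have hle : (star0 (n + 1)).edgeSet ⊆ (gad (n + 1)).edgeSet := by
    rw [edgeSet_subset_edgeSet]
    rintro x y ⟨hne, h⟩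
    refine ⟨hne, ?_⟩
    omega
  obtain ⟨E, hE1, hE2, hE3⟩ := Set.exists_subsuperset_card_eq hle
    ((star0_edges n).trans h1) h2
  have hdiag : ∀ e ∈ E, ¬ e.IsDiag := fun e he => (gad (n + 1)).not_isDiag_of_mem_edgeSet (hE2 he)
  have hes : (fromEdgeSet E).edgeSet = E := by
    rw [edgeSet_fromEdgeSet]
    ext e
    simp only [Set.mem_sdiff]
    exact ⟨fun h => h.1, fun h => ⟨h, hdiag e h⟩⟩
  refine ⟨fromEdgeSet E, ?_, ?_, ?_⟩
  · refine (star0_connected n).mono ?_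
    rw [← edgeSet_subset_edgeSet, hes]; exact hE1
  · refine planar_mono (gad_planar (n + 1)) ?_
    rw [← edgeSet_subset_edgeSet, hes]; exact hE2
  · rw [edgeCount, hes]; exact hE3

/-! ### Gluing two connected graphs along a new edge -/

theorem TwoConn.cut {α : Type*} {H : SimpleGraph α} (h : TwoConn H) (T : Set α) (hT : T.Nonempty)
    (hT' : ∃ b, b ∉ T) : ∃ c ∈ T, ∃ d, d ∉ T ∧ H.Adj c d := by
  obtain ⟨b, hb⟩ := hT'
  by_cases hp : ∃ p, p ∉ T ∧ b ≠ p
  · obtain ⟨p, hpT, hbp⟩ := hp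
    obtain ⟨c, hc, d, hd, _, hcd⟩ := h.1 p T hpT hT ⟨b, hb, hbp⟩
    exact ⟨c, hc, d, hd, hcd⟩
  · push Not at hp
    obtain ⟨c, hc⟩ := h.exists_adj b
    refine ⟨c, ?_, b, hb, hc.symm⟩
    by_contra hcT
    exact hc.ne (hp c hcT)

/-- A 2-connected minor of a disjoint union lies in one of the two parts. -/
theorem isMinor_of_union {α V : Type*} {H : SimpleGraph α} (hH : TwoConn H) [Nonempty α]
    {A B : SimpleGraph V} {S : Set V} (hA : A.support ⊆ S) (hB : B.support ⊆ Sᶜ)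
    (h : IsMinor H (A ⊔ B)) : IsMinor H A ∨ IsMinor H B := by
  classical
  simp only [isMinor_iff] at h ⊢
  obtain ⟨f, h1, h2, h3⟩ := h
  have hS : ∀ x y, (A ⊔ B).Adj x y → (x ∈ S ↔ y ∈ S) := by
    rintro x y (h | h)
    · exact iff_of_true (hA ⟨y, h⟩) (hA ⟨x, h.symm⟩)
    · exact iff_of_false (hB ⟨y, h⟩) (hB ⟨x, h.symm⟩)
  have hside : ∀ a, ∀ x ∈ f a, ∀ y ∈ f a, (x ∈ S ↔ y ∈ S) := by
    intro a x hx y hy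
    have := (h1 a).2 x hx y hy
    clear hy
    induction this with
    | refl => rfl
    | tail _ hbc ih => exact ih.trans (hS _ _ hbc.1)
  have hAS : ∀ x y, (A ⊔ B).Adj x y → x ∈ S → A.Adj x y := by
    rintro x y (h | h) hx
    · exact h
    · exact absurd hx (hB ⟨y, h⟩)
  have hBS : ∀ x y, (A ⊔ B).Adj x y → x ∉ S → B.Adj x y := by
    rintro x y (h | h) hx
    · exact absurd (hA ⟨y, h⟩) hx
    · exact h
  set T := {a | ∀ x ∈ f a, x ∈ S} with hT
  have hT' : ∀ a, a ∉ T → ∀ x ∈ f a, x ∉ S := by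
    intro a ha x hx hxS
    exact ha fun y hy => (hside a x hx y hy).1 hxS
  by_cases hall : ∀ a, a ∈ T
  · left
    refine ⟨f, fun a => ?_, h2, ?_⟩
    · simpa using (h1 a).push (G' := A) id fun x hx y _ hxy => Or.inr (hAS x y hxy (hall a x hx))
    · intro a b hab
      obtain ⟨u, hu, v, hv, huv⟩ := h3 a b hab
      exact ⟨u, hu, v, hv, hAS u v huv (hall a u hu)⟩
  push Not at hall
  by_cases hne : T.Nonempty
  · obtain ⟨c, hc, d, hd, hcd⟩ := hH.cut T hne hall
    obtain ⟨u, hu, v, hv, huv⟩ := h3 c d hcd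
    exact absurd ((hS u v huv).1 (hc u hu)) (hT' d hd v hv)
  · have hall' : ∀ a, a ∉ T := fun a ha => hne ⟨a, ha⟩
    right
    refine ⟨f, fun a => ?_, h2, ?_⟩
    · simpa using (h1 a).push (G' := B) id fun x hx y _ hxy =>
        Or.inr (hBS x y hxy (hT' a (hall' a) x hx))
    · intro a b hab
      obtain ⟨u, hu, v, hv, huv⟩ := h3 a b hab
      exact ⟨u, hu, v, hv, hBS u v huv (hT' a (hall' a) u hu)⟩

theorem planar_union {V : Type*} {A B : SimpleGraph V} {S : Set V} (hA : A.support ⊆ S)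
    (hB : B.support ⊆ Sᶜ) (pA : IsPlanar A) (pB : IsPlanar B) : IsPlanar (A ⊔ B) :=
  ⟨fun h => (isMinor_of_union twoConn_K5 hA hB h).elim pA.1 pB.1,
    fun h => (isMinor_of_union twoConn_K33 hA hB h).elim pA.2 pB.2⟩

theorem edgeCount_sup_edge {V : Type*} [Finite V] {G : SimpleGraph V} {u v : V} (huv : u ≠ v)
    (h : ¬ G.Adj u v) : edgeCount (G ⊔ edge u v) = edgeCount G + 1 := by
  have : (G ⊔ edge u v).edgeSet = insert s(u, v) G.edgeSet := by
    rw [edgeSet_sup, edgeSet_edge_of_ne huv, Set.union_singleton]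
  rw [edgeCount, this, Set.ncard_insert_of_notMem (by simpa using h) (Set.toFinite _)]
  rfl

theorem map_adj_inj {V W : Type*} {G : SimpleGraph V} {e : V → W} (he : Function.Injective e)
    (a b : V) : (G.map e).Adj (e a) (e b) ↔ G.Adj a b := by
  constructor
  · rintro ⟨_, a', b', h, ha, hb⟩
    rwa [← he ha, ← he hb]
  · intro h
    exact ⟨fun h' => h.ne (he h'), a, b, h, rfl, rfl⟩

theorem map_support {V W : Type*} (G : SimpleGraph V) (e : V → W) :
    (G.map e).support ⊆ Set.range e := by
  rintro x ⟨y, _, a, b, _, rfl, _⟩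
  exact ⟨a, rfl⟩

theorem edgeCount_map {V W : Type*} [Finite V] [Finite W] {G : SimpleGraph V} {e : V → W}
    (he : Function.Injective e) : edgeCount (G.map e) = edgeCount G := by
  have : dc (G.map e) = dc G := by
    unfold dc
    rw [← Set.ncard_image_of_injective _ (he.prodMap he)]
    congr 1
    ext ⟨x, y⟩
    constructor
    · rintro ⟨_, a, b, h, rfl, rfl⟩
      exact ⟨(a, b), h, rfl⟩
    · rintro ⟨⟨a, b⟩, h, h'⟩
      simp only [Prod.map, Prod.mk.injEq] at h'
      obtain ⟨rfl, rfl⟩ := h'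
      exact (map_adj_inj he a b).2 h
  rw [dc_eq, dc_eq] at this
  omega

theorem reachable_map {V W : Type*} {G : SimpleGraph V} {e : V → W} (he : Function.Injective e)
    {a b : V} (h : G.Reachable a b) : (G.map e).Reachable (e a) (e b) := by
  rw [reachable_iff_reflTransGen] at h ⊢
  exact h.lift e fun a b hab => (map_adj_inj he a b).2 hab

section Glue

variable {V₁ V₂ W : Type*} {G₁ : SimpleGraph V₁} {G₂ : SimpleGraph V₂} {e₁ : V₁ → W} {e₂ : V₂ → W}

theorem glue_side {S : Set W} (h1 : Set.range e₁ = S) (h2 : Set.range e₂ = Sᶜ) {x y : W}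
    (h : (G₁.map e₁ ⊔ G₂.map e₂).Reachable x y) : x ∈ S ↔ y ∈ S := by
  rw [reachable_iff_reflTransGen] at h
  induction h with
  | refl => rfl
  | @tail b c _ hbc ih =>
    refine ih.trans ?_
    rcases hbc with h | h
    · exact iff_of_true (h1 ▸ map_support _ _ ⟨_, h⟩) (h1 ▸ map_support _ _ ⟨_, h.symm⟩)
    · have a1 : b ∈ Sᶜ := h2 ▸ map_support G₂ e₂ ⟨_, h⟩
      have a2 : c ∈ Sᶜ := h2 ▸ map_support G₂ e₂ ⟨_, h.symm⟩
      exact iff_of_false a1 a2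

theorem glue_reach {S : Set W} (i1 : Function.Injective e₁)
    (h1 : Set.range e₁ = S) (h2 : Set.range e₂ = Sᶜ) (c1 : G₁.Connected) (x : V₁) :
    {z | (G₁.map e₁ ⊔ G₂.map e₂).Reachable (e₁ x) z} = S := by
  have hx : e₁ x ∈ S := h1 ▸ ⟨x, rfl⟩
  ext z
  constructor
  · intro h
    exact (glue_side h1 h2 h).1 hx
  · intro hz
    rw [← h1] at hz
    obtain ⟨a, rfl⟩ := hz
    exact (reachable_map i1 (c1.preconnected x a)).mono le_sup_left

theorem glue_left {S : Set W} (i1 : Function.Injective e₁)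
    (h1 : Set.range e₁ = S) (h2 : Set.range e₂ = Sᶜ) (a b : V₁) :
    (G₁.map e₁ ⊔ G₂.map e₂).Adj (e₁ a) (e₁ b) ↔ G₁.Adj a b := by
  rw [sup_adj, map_adj_inj i1]
  refine or_iff_left ?_
  intro h
  have a1 : e₁ a ∈ Sᶜ := h2 ▸ map_support G₂ e₂ ⟨_, h⟩
  exact a1 (h1 ▸ ⟨a, rfl⟩)

theorem glue_conn {S : Set W} (i1 : Function.Injective e₁) (i2 : Function.Injective e₂)
    (h1 : Set.range e₁ = S) (h2 : Set.range e₂ = Sᶜ) (c1 : G₁.Connected) (c2 : G₂.Connected)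
    (x : V₁) (y : V₂) : (G₁.map e₁ ⊔ G₂.map e₂ ⊔ edge (e₁ x) (e₂ y)).Connected := by
  have hxy : e₁ x ≠ e₂ y := by
    intro h
    have a1 : e₂ y ∈ Sᶜ := h2 ▸ ⟨y, rfl⟩
    exact a1 (h ▸ h1 ▸ ⟨x, rfl⟩)
  have key : ∀ z, (G₁.map e₁ ⊔ G₂.map e₂ ⊔ edge (e₁ x) (e₂ y)).Reachable (e₁ x) z := by
    intro z
    by_cases hz : z ∈ S
    · rw [← glue_reach (G₂ := G₂) i1 h1 h2 c1 x] at hz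
      exact Reachable.mono le_sup_left hz
    · have : z ∈ Set.range e₂ := by rw [h2]; exact hz
      obtain ⟨b, rfl⟩ := this
      refine Reachable.trans (v := e₂ y) (Adj.reachable ?_) ?_
      · right; rw [edge_adj]; exact ⟨Or.inl ⟨rfl, rfl⟩, hxy⟩
      · exact (reachable_map i2 (c2.preconnected y b)).mono (le_sup_right.trans le_sup_left)
  have : Nonempty W := ⟨e₁ x⟩
  exact ⟨fun a b => (key a).symm.trans (key b)⟩

theorem glue_planar {S : Set W} (i1 : Function.Injective e₁) (i2 : Function.Injective e₂)
    (h1 : Set.range e₁ = S) (h2 : Set.range e₂ = Sᶜ) (p1 : IsPlanar G₁) (p2 : IsPlanar G₂)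
    (x : V₁) (y : V₂) : IsPlanar (G₁.map e₁ ⊔ G₂.map e₂ ⊔ edge (e₁ x) (e₂ y)) := by
  refine planar_bridge (planar_union (S := S) ?_ ?_ (planar_map_inj p1 e₁ i1)
    (planar_map_inj p2 e₂ i2)) ?_
  · rw [← h1]; exact map_support _ _
  · rw [← h2]; exact map_support _ _
  · intro h
    have a1 : e₂ y ∈ Sᶜ := h2 ▸ ⟨y, rfl⟩
    exact a1 ((glue_side h1 h2 h).1 (h1 ▸ ⟨x, rfl⟩))

theorem glue_not_adj {S : Set W} 
    (h1 : Set.range e₁ = S) (h2 : Set.range e₂ = Sᶜ) (x : V₁) (y : V₂) :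
    ¬ (G₁.map e₁ ⊔ G₂.map e₂).Adj (e₁ x) (e₂ y) := by
  intro h
  have a1 : e₂ y ∈ Sᶜ := h2 ▸ ⟨y, rfl⟩
  exact a1 ((glue_side h1 h2 h.reachable).1 (h1 ▸ ⟨x, rfl⟩))

theorem glue_ne {S : Set W} (h1 : Set.range e₁ = S) (h2 : Set.range e₂ = Sᶜ) (x : V₁) (y : V₂) :
    e₁ x ≠ e₂ y := by
  intro h
  have a1 : e₂ y ∈ Sᶜ := h2 ▸ ⟨y, rfl⟩
  exact a1 (h ▸ h1 ▸ ⟨x, rfl⟩)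

theorem glue_edges [Finite V₁] [Finite V₂] [Finite W] {S : Set W} (i1 : Function.Injective e₁)
    (i2 : Function.Injective e₂) (h1 : Set.range e₁ = S) (h2 : Set.range e₂ = Sᶜ)
    (x : V₁) (y : V₂) : edgeCount (G₁.map e₁ ⊔ G₂.map e₂ ⊔ edge (e₁ x) (e₂ y)) =
      edgeCount G₁ + edgeCount G₂ + 1 := by
  rw [edgeCount_sup_edge (glue_ne h1 h2 x y) (glue_not_adj h1 h2 x y)]
  congr 1
  rw [← edgeCount_map i1 (G := G₁), ← edgeCount_map i2 (G := G₂)]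
  unfold edgeCount
  rw [edgeSet_sup, Set.ncard_union_eq ?_ (Set.toFinite _) (Set.toFinite _)]
  rw [Set.disjoint_left]
  intro e
  induction e with
  | _ a b =>
    intro h h'
    have a1 : a ∈ Set.range e₁ := map_support G₁ e₁ ⟨_, h⟩
    have a2 : a ∈ Set.range e₂ := map_support G₂ e₂ ⟨_, h'⟩
    rw [h2, ← h1] at a2
    exact a2 a1

end Glue

theorem sup_edge_cancel {V : Type*} {L L' : SimpleGraph V} {u v : V} (h : ¬ L.Adj u v)
    (h' : ¬ L'.Adj u v) (e : L ⊔ edge u v = L' ⊔ edge u v) : L = L' := by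
  have key : ∀ {L L' : SimpleGraph V}, ¬ L.Adj u v → ¬ L'.Adj u v →
      L ⊔ edge u v = L' ⊔ edge u v → ∀ x y, L.Adj x y → L'.Adj x y := by
    intro L L' h h' e x y hxy
    have : (L' ⊔ edge u v).Adj x y := e ▸ Or.inl hxy
    rcases this with h1 | h1
    · exact h1
    · rw [edge_adj] at h1
      rcases h1.1 with ⟨rfl, rfl⟩ | ⟨rfl, rfl⟩
      · exact absurd hxy h
      · exact absurd hxy.symm h
  ext x y
  exact ⟨key h h' e x y, key h' h e.symm x y⟩

/-- Connected graphs on complementary vertex sets are joined by one of `n₁ n₂` possible edges; the pair is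
recovered from the joining edge, one of at most `16 (n₁ + n₂)` darts of the result. -/
theorem super_mult (n₁ n₂ m₁ m₂ : ℕ) (hn₁ : 1 ≤ n₁) :
    (n₁ + n₂).choose n₁ * ((connSet n₁ m₁).ncard * (connSet n₂ m₂).ncard) * (n₁ * n₂) ≤
      (connSet (n₁ + n₂) (m₁ + m₂ + 1)).ncard * (16 * (n₁ + n₂)) := by
  classical
  have : Nonempty (Fin (n₁ + n₂)) := ⟨⟨0, by omega⟩⟩
  have hex : ∀ S : Finset (Fin (n₁ + n₂)), S.card = n₁ →
      ∃ (e₁ : Fin n₁ → Fin (n₁ + n₂)) (e₂ : Fin n₂ → Fin (n₁ + n₂)), Function.Injective e₁ ∧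
        Function.Injective e₂ ∧ Set.range e₁ = (S : Set (Fin (n₁ + n₂))) ∧
          Set.range e₂ = (S : Set (Fin (n₁ + n₂)))ᶜ := by
    intro S hS
    have hS' : Sᶜ.card = n₂ := by rw [Finset.card_compl]; simp [hS]
    refine ⟨S.orderEmbOfFin hS, Sᶜ.orderEmbOfFin hS', (S.orderEmbOfFin hS).injective,
      (Sᶜ.orderEmbOfFin hS').injective, ?_, ?_⟩
    · simp
    · simp
  choose! e₁ e₂ i1 i2 r1 r2 using hex
  have key := double_count
    (({S : Finset (Fin (n₁ + n₂)) | S.card = n₁}) ×ˢ (connSet n₁ m₁ ×ˢ connSet n₂ m₂))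
    (fun _ => (Set.univ : Set (Fin n₁ × Fin n₂))) (connSet (n₁ + n₂) (m₁ + m₂ + 1))
    (fun G => {p : Fin (n₁ + n₂) × Fin (n₁ + n₂) | G.Adj p.1 p.2})
    (fun a b => a.2.1.map (e₁ a.1) ⊔ a.2.2.map (e₂ a.1) ⊔ edge (e₁ a.1 b.1) (e₂ a.1 b.2))
    (fun a b => (e₁ a.1 b.1, e₂ a.1 b.2)) (n₁ * n₂) (16 * (n₁ + n₂)) ?_ ?_ ?_ ?_
  · rw [Set.ncard_prod, Set.ncard_prod] at key
    have hS : {S : Finset (Fin (n₁ + n₂)) | S.card = n₁}.ncard = (n₁ + n₂).choose n₁ := by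
      have : {S : Finset (Fin (n₁ + n₂)) | S.card = n₁} =
          (Finset.powersetCard n₁ Finset.univ : Finset (Finset (Fin (n₁ + n₂)))) := by
        ext S; simp
      rw [this, Set.ncard_coe_finset, Finset.card_powersetCard]; simp
    rwa [hS] at key
  · intro a _
    rw [Set.ncard_univ]; simp
  · intro G hG
    have := dc_le_of_support hG.2.1 Set.univ (Set.subset_univ _)
    rw [Set.ncard_univ] at this
    simpa [dc] using this
  · rintro ⟨S, G₁, G₂⟩ ⟨hS, hG₁, hG₂⟩ ⟨x, y⟩ _
    refine ⟨⟨glue_conn (i1 S hS) (i2 S hS) (r1 S hS) (r2 S hS) hG₁.1 hG₂.1 x y,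
      glue_planar (i1 S hS) (i2 S hS) (r1 S hS) (r2 S hS) hG₁.2.1 hG₂.2.1 x y, ?_⟩, ?_⟩
    · rw [glue_edges (i1 S hS) (i2 S hS) (r1 S hS) (r2 S hS), hG₁.2.2, hG₂.2.2]
    · right
      rw [edge_adj]
      exact ⟨Or.inl ⟨rfl, rfl⟩, glue_ne (r1 S hS) (r2 S hS) x y⟩
  · rintro ⟨S, G₁, G₂⟩ ⟨hS, hG₁, hG₂⟩ ⟨x, y⟩ _ ⟨S', G₁', G₂'⟩ ⟨hS', hG₁', hG₂'⟩ ⟨x', y'⟩ _ h h'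
    simp only [Prod.mk.injEq] at hS hG₁ hG₂ hS' hG₁' hG₂' h h' ⊢
    have nadj := glue_not_adj (G₁ := G₁) (G₂ := G₂) (r1 S hS) (r2 S hS) x y
    have nadj' := glue_not_adj (G₁ := G₁') (G₂ := G₂') (r1 S' hS') (r2 S' hS') x' y'
    rw [← h'.1, ← h'.2] at h nadj'
    have hL := sup_edge_cancel nadj nadj' h
    have hSS : S = S' := by
      have a1 := glue_reach (G₂ := G₂) (i1 S hS) (r1 S hS) (r2 S hS) hG₁.1 x
      have a2 := glue_reach (G₂ := G₂') (i1 S' hS') (r1 S' hS') (r2 S' hS') hG₁'.1 x'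
      rw [← h'.1, ← hL, a1] at a2
      exact_mod_cast a2
    subst hSS
    have g1 : G₁ = G₁' := by
      ext a b
      rw [← glue_left (G₂ := G₂) (i1 S hS) (r1 S hS) (r2 S hS) a b, hL,
        glue_left (i1 S hS) (r1 S hS) (r2 S hS) a b]
    have g2 : G₂ = G₂' := by
      have r2' : Set.range (e₁ S) = ((S : Set (Fin (n₁ + n₂)))ᶜ)ᶜ := by
        rw [compl_compl]; exact r1 S hS
      ext a b
      rw [← glue_left (G₂ := G₁) (i2 S hS) (r2 S hS) r2' a b, sup_comm, hL, sup_comm,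
        glue_left (i2 S hS) (r2 S hS) r2' a b]
    exact ⟨⟨rfl, g1, g2⟩, i1 S hS h'.1, i2 S hS h'.2⟩

/-! ### The normalised count of connected planar graphs -/

/-- The number of connected planar graphs with `n` vertices and `m - 1` edges, normalised so as
to be supermultiplicative in `(n, m)`. -/
noncomputable def gg (n m : ℕ) : ℝ := (connSet n (m - 1)).ncard / (32 * n.factorial)

theorem gg_nonneg (n m : ℕ) : 0 ≤ gg n m := by unfold gg; positivity

theorem gg_mul (n₁ n₂ m₁ m₂ : ℕ) (hn₁ : 1 ≤ n₁) (hn₂ : 1 ≤ n₂) (hm₁ : 1 ≤ m₁) (hm₂ : 1 ≤ m₂) :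
    gg n₁ m₁ * gg n₂ m₂ ≤ gg (n₁ + n₂) (m₁ + m₂) := by
  have h := super_mult n₁ n₂ (m₁ - 1) (m₂ - 1) hn₁
  have e : m₁ - 1 + (m₂ - 1) + 1 = m₁ + m₂ - 1 := by omega
  rw [e] at h
  unfold gg
  set c₁ := (connSet n₁ (m₁ - 1)).ncard
  set c₂ := (connSet n₂ (m₂ - 1)).ncard
  set c := (connSet (n₁ + n₂) (m₁ + m₂ - 1)).ncard
  have hch : ((n₁ + n₂).choose n₁ : ℝ) * (n₁.factorial * n₂.factorial) = (n₁ + n₂).factorial := by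
    have := Nat.add_choose_mul_factorial_mul_factorial n₁ n₂
    rw [Nat.choose_symm_add, ← this]; push_cast; ring
  have hR : ((n₁ + n₂).choose n₁ : ℝ) * (c₁ * c₂) * (n₁ * n₂) ≤ c * (16 * (n₁ + n₂)) := by
    exact_mod_cast h
  have hn : ((n₁ : ℝ) + n₂) ≤ 2 * (n₁ * n₂) := by
    have a : (1 : ℝ) ≤ n₁ := by exact_mod_cast hn₁
    have b : (1 : ℝ) ≤ n₂ := by exact_mod_cast hn₂
    nlinarith
  have hpos : (0 : ℝ) < n₁ * n₂ := by positivity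
  have h2 : ((n₁ + n₂).choose n₁ : ℝ) * (c₁ * c₂) ≤ 32 * c := by
    have hc : (0 : ℝ) ≤ c := by positivity
    have : ((n₁ + n₂).choose n₁ : ℝ) * (c₁ * c₂) * (n₁ * n₂) ≤ 32 * c * (n₁ * n₂) := by
      refine hR.trans ?_
      nlinarith
    exact le_of_mul_le_mul_right this hpos
  have f1 : (0 : ℝ) < n₁.factorial := by positivity
  have f2 : (0 : ℝ) < n₂.factorial := by positivity
  rw [div_mul_div_comm, div_le_div_iff₀ (by positivity) (by positivity), ← hch]
  nlinarith [mul_le_mul_of_nonneg_right h2 (by positivity : (0:ℝ) ≤ 32 * (n₁.factorial * n₂.factorial))]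

theorem gg_ge_of_nonempty {n m : ℕ} (h : (connSet n (m - 1)).Nonempty) :
    1 / (32 * (n.factorial : ℝ)) ≤ gg n m := by
  unfold gg
  have : 1 ≤ (connSet n (m - 1)).ncard := (Set.ncard_pos (Set.toFinite _)).2 h
  gcongr
  exact_mod_cast this

theorem gg_one : 1 / 32 ≤ gg 1 1 := by
  have := gg_ge_of_nonempty (n := 1) (m := 1) (connSet_nonempty 0 0 le_rfl (Nat.zero_le _))
  simpa using this

/-- A single graph between `star0` and `gad` already bounds the count from below. -/
theorem gg_piece (a i : ℕ) (ha : 1 ≤ a) (h1 : a ≤ i) (h2 : i + 8 ≤ 3 * a) :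
    1 / (32 * (a.factorial : ℝ)) ≤ gg a i := by
  obtain ⟨k, rfl⟩ : ∃ k, a = k + 1 := ⟨a - 1, by omega⟩
  refine gg_ge_of_nonempty (connSet_nonempty k (i - 1) (by omega) (le_trans ?_ (gad_edges _)))
  omega

theorem gg_lower_aux (a d : ℕ) (ha : 1 ≤ a) (hd : a + d + 8 ≤ 3 * a) (t : ℕ) : ∀ x y : ℕ, 1 ≤ x →
    x / a ≤ t → x ≤ y → y ≤ x + d * (x / a) → (1 / (32 * (a.factorial : ℝ))) ^ x ≤ gg x y := by
  have hf : (1 : ℝ) ≤ a.factorial := by exact_mod_cast Nat.one_le_iff_ne_zero.2 (Nat.factorial_ne_zero a)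
  set c : ℝ := 1 / (32 * (a.factorial : ℝ)) with hc
  have hc0 : 0 < c := by positivity
  have hc32 : c ≤ 1 / 32 := by
    rw [hc]; apply one_div_le_one_div_of_le <;> linarith
  have hc1 : c ≤ 1 := by linarith
  have hdiag : ∀ x, 1 ≤ x → c ^ x ≤ gg x x := by
    intro x hx
    induction x, hx using Nat.le_induction with
    | base => simpa using hc32.trans gg_one
    | succ x hx ih =>
      refine le_trans ?_ (gg_mul x 1 x 1 hx le_rfl hx le_rfl)
      rw [pow_succ]
      exact mul_le_mul ih (hc32.trans gg_one) hc0.le (gg_nonneg _ _)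
  induction t with
  | zero =>
    intro x y hx hxt hxy hy
    have : x / a = 0 := Nat.le_zero.1 hxt
    rw [this, mul_zero, add_zero] at hy
    have : y = x := by omega
    rw [this]; exact hdiag x hx
  | succ t ih =>
    intro x y hx hxt hxy hy
    rcases Nat.lt_or_ge x a with hlt | hge
    · rw [Nat.div_eq_of_lt hlt, mul_zero, add_zero] at hy
      have : y = x := by omega
      rw [this]; exact hdiag x hx
    · have hdiv : x / a = (x - a) / a + 1 := by
        rw [Nat.div_eq_sub_div (by omega) hge]
      obtain ⟨δ, hδ1, hδ2, hδ3⟩ : ∃ δ, δ ≤ d ∧ δ ≤ y - x ∧ y - x ≤ δ + d * ((x - a) / a) := by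
        rw [hdiv, mul_add, mul_one] at hy
        refine ⟨min d (y - x), min_le_left _ _, min_le_right _ _, ?_⟩
        rcases le_total d (y - x) with h | h
        · rw [min_eq_left h]; omega
        · rw [min_eq_right h]; omega
      have hp : c ≤ gg a (a + δ) := gg_piece a (a + δ) ha (by omega) (by omega)
      rcases Nat.eq_zero_or_pos (x - a) with h0 | hpos
      · have hxa : x = a := by omega
        subst hxa
        have : y = x + δ := by
          rw [h0, Nat.zero_div, mul_zero] at hδ3; omega
        rw [this]
        refine le_trans ?_ hp
        exact pow_le_of_le_one hc0.le hc1 (by omega)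
      · have hr := ih (x - a) (y - (a + δ)) hpos (by omega) (by omega) (by omega)
        have hm := gg_mul a (x - a) (a + δ) (y - (a + δ)) ha hpos (by omega) (by omega)
        rw [show a + (x - a) = x by omega, show a + δ + (y - (a + δ)) = y by omega] at hm
        refine le_trans ?_ hm
        calc c ^ x = c ^ a * c ^ (x - a) := by rw [← pow_add]; congr 1; omega
          _ ≤ c * c ^ (x - a) := by
            gcongr
            exact pow_le_of_le_one hc0.le hc1 (by omega)
          _ ≤ _ := mul_le_mul hp hr (by positivity) (gg_nonneg _ _)

/-- Exponential lower bound for the normalised count strictly inside the cone of possible edge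
densities. -/
theorem gg_lower (B : ℝ) (hB : B < 3) : ∃ c : ℝ, 0 < c ∧ c ≤ 1 ∧ ∃ x₀ : ℕ, ∀ x y : ℕ, x₀ ≤ x →
    x ≤ y → (y : ℝ) ≤ B * x → c ^ x ≤ gg x y := by
  obtain ⟨a, ha⟩ := exists_nat_gt (16 / (3 - B) + 8)
  have h3 : 0 < 3 - B := by linarith
  have ha8 : (8 : ℝ) < a := by have : 0 < 16 / (3 - B) := by positivity
                               linarith
  have ha8' : 8 < a := by exact_mod_cast ha8
  have ha2 : 16 < (3 - B) * a := by
    have : 16 / (3 - B) < a := by linarith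
    rw [div_lt_iff₀ h3] at this; linarith
  obtain ⟨x₀, hx₀⟩ := exists_nat_gt (4 * a / (3 - B))
  have hf : (1 : ℝ) ≤ a.factorial := by exact_mod_cast Nat.one_le_iff_ne_zero.2 (Nat.factorial_ne_zero a)
  refine ⟨1 / (32 * (a.factorial : ℝ)), by positivity, ?_, x₀ + 1, ?_⟩
  · rw [div_le_one (by positivity)]; linarith
  · intro x y hx hxy hy
    refine gg_lower_aux a (2 * a - 8) (by omega) (by omega) (x / a) x y (by omega) le_rfl hxy ?_
    have hx' : 4 * a < (3 - B) * x := by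
      have : (x₀ : ℝ) ≤ x := by exact_mod_cast (by omega : x₀ ≤ x)
      have : 4 * a / (3 - B) < x := by linarith
      rw [div_lt_iff₀ h3] at this; linarith
    have hq : (x : ℝ) < a * ((x / a : ℕ) : ℝ) + a := by
      have := Nat.lt_mul_div_succ x (by omega : 0 < a)
      have h' : (x : ℝ) < ((a * (x / a + 1) : ℕ) : ℝ) := by exact_mod_cast this
      push_cast at h' ⊢
      linarith
    set q : ℝ := ((x / a : ℕ) : ℝ) with hqdef
    have : (y : ℝ) ≤ x + (2 * a - 8) * q := by
      -- multiply the claim by `a`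
      have hq0 : x - a < a * q := by linarith
      have h1 : (2 * (a : ℝ) - 8) * (x - a) ≤ (2 * a - 8) * (a * q) := by
        apply mul_le_mul_of_nonneg_left hq0.le; linarith
      have hx0 : (0 : ℝ) ≤ x := by positivity
      have h2 : a * (B * x) ≤ a * (x + (2 * a - 8) * q) := by
        nlinarith
      have := le_of_mul_le_mul_left h2 (by linarith)
      linarith
    have hcast : ((x + (2 * a - 8) * (x / a) : ℕ) : ℝ) = x + (2 * a - 8) * q := by
      push_cast [Nat.cast_sub (show 8 ≤ 2 * a by omega)]
      rfl
    rw [← hcast] at this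
    exact_mod_cast this

theorem planarOn_univ_le : ∃ C : ℝ, 1 ≤ C ∧ ∀ n : ℕ,
    ((planarOn (Set.univ : Set (Fin n))).ncard : ℝ) ≤ C ^ n * n.factorial := by
  obtain ⟨C, hC0, hC⟩ := smallness
  refine ⟨C, by exact_mod_cast hC0, fun n => ?_⟩
  have := hC (Set.univ : Set (Fin n))
  rw [Set.ncard_univ] at this
  simp only [Nat.card_eq_fintype_card, Fintype.card_fin] at this
  exact_mod_cast this

theorem gg_upper : ∃ C : ℝ, 1 ≤ C ∧ ∀ n m : ℕ, gg n m ≤ C ^ n := by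
  obtain ⟨C, hC1, hC⟩ := planarOn_univ_le
  refine ⟨C, hC1, fun n m => ?_⟩
  unfold gg
  have h1 : ((connSet n (m - 1)).ncard : ℝ) ≤ (planarOn (Set.univ : Set (Fin n))).ncard := by
    have := Set.ncard_le_ncard (s := connSet n (m - 1)) (t := planarOn Set.univ)
      (fun G hG => ⟨hG.2.1, Set.subset_univ _⟩) (Set.toFinite _)
    exact_mod_cast this
  rw [div_le_iff₀ (by positivity)]
  have h2 : (0 : ℝ) ≤ C ^ n * n.factorial := by positivity
  linarith [hC n]

/-! ### Comparing the connected counts at nearby sizes -/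

/-- Fekete's lemma for the normalised counts along a fixed direction `(M, p)`. -/
theorem fekete_dir (C : ℝ) (hC : 1 ≤ C) (hup : ∀ n m, gg n m ≤ C ^ n) (M p : ℕ) (hM : 1 ≤ M)
    (hp : 1 ≤ p) (hpos : ∀ t : ℕ, 1 ≤ t → 0 < gg (t * M) (t * p)) (ε : ℝ) (hε : 0 < ε) :
    ∃ L : ℝ, L ≤ M * Real.log C ∧ (∀ t : ℕ, 1 ≤ t → gg (t * M) (t * p) ≤ Real.exp (t * L)) ∧
      ∃ t₀ : ℕ, ∀ t : ℕ, t₀ ≤ t → Real.exp (t * (L - ε)) ≤ gg (t * M) (t * p) := by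
  set u : ℕ → ℝ := fun t => if t = 0 then 0 else - Real.log (gg (t * M) (t * p)) with hu
  have hu0 : u 0 = 0 := by simp [hu]
  have hut : ∀ t, 1 ≤ t → u t = - Real.log (gg (t * M) (t * p)) := by
    intro t ht; exact if_neg (by omega)
  have hsub : Subadditive u := by
    intro a b
    rcases Nat.eq_zero_or_pos a with rfl | ha
    · simp [hu0]
    rcases Nat.eq_zero_or_pos b with rfl | hb
    · simp [hu0]
    rw [hut _ ha, hut _ hb, hut _ (by omega)]
    have h := gg_mul (a * M) (b * M) (a * p) (b * p) (Nat.mul_pos ha hM) (Nat.mul_pos hb hM)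
      (Nat.mul_pos ha hp) (Nat.mul_pos hb hp)
    rw [← add_mul, ← add_mul] at h
    have h2 := Real.log_le_log (mul_pos (hpos a ha) (hpos b hb)) h
    rw [Real.log_mul (hpos a ha).ne' (hpos b hb).ne'] at h2
    linarith
  have hlogC : 0 ≤ Real.log C := Real.log_nonneg hC
  have hlb : ∀ t : ℕ, - (M * Real.log C) ≤ u t / t := by
    intro t
    rcases Nat.eq_zero_or_pos t with rfl | ht
    · simp; positivity
    have ht' : (0 : ℝ) < t := by exact_mod_cast ht
    rw [le_div_iff₀ ht', hut t ht]
    have := Real.log_le_log (hpos t ht) (hup (t * M) (t * p))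
    rw [Real.log_pow] at this
    push_cast at this
    linarith
  have hbdd : BddBelow (Set.range fun n : ℕ => u n / n) :=
    ⟨_, by rintro _ ⟨t, rfl⟩; exact hlb t⟩
  have htend := hsub.tendsto_lim hbdd
  refine ⟨- hsub.lim, ?_, ?_, ?_⟩
  · have := ge_of_tendsto' htend hlb
    linarith
  · intro t ht
    have ht' : (0 : ℝ) < t := by exact_mod_cast ht
    have h := hsub.lim_le_div hbdd (n := t) (by omega)
    rw [le_div_iff₀ ht', hut t ht] at h
    rw [← Real.log_le_iff_le_exp (hpos t ht)]
    linarith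
  · have h := (tendsto_order.1 htend).2 (hsub.lim + ε) (by linarith)
    obtain ⟨t₀, h⟩ := eventually_atTop.1 h
    refine ⟨max t₀ 1, fun t ht => ?_⟩
    have ht1 : 1 ≤ t := (le_max_right _ _).trans ht
    have ht' : (0 : ℝ) < t := by exact_mod_cast ht1
    have h := h t ((le_max_left _ _).trans ht)
    rw [div_lt_iff₀ ht', hut t ht1] at h
    rw [← Real.le_log_iff_exp_le (hpos t ht1)]
    linarith

set_option maxHeartbeats 1000000 in
/-- The two difference vectors used in comparing `(n, m)` and `(n + k, m + k + j)` with multiples of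
`(M, p)` lie well inside the cone of admissible densities. -/
theorem cone_arith (B B' ε A δ : ℝ) (hB1 : 1 ≤ B) (hBB : B < B') (hε : 0 < ε) (hA2 : 2 ≤ A)
    (hA : 2 * B / (B' - B) ≤ A - 1) (hA' : 5 / ε ≤ A - 1) (hδ : 0 < δ) (hAδ : A * δ ≤ 1 / 2)
    (n m k j M p s s' : ℝ) (hn : 0 < n) (hnδ : 1 ≤ δ * n) (hm : (1 + ε) * n ≤ m) (hm2 : m ≤ B * n)
    (hk : 0 ≤ k) (hkδ : k ≤ δ * n) (hj : 0 ≤ j) (hjk : j ≤ k) (hM : 1 ≤ δ * M) (hMn : M ≤ δ * n)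
    (hp : p * n ≤ m * M) (hp' : m * M ≤ (p + 1) * n)
    (hs1' : s' * M ≤ (1 - A * δ) * n) (hs2' : (1 - A * δ) * n ≤ (s' + 1) * M)
    (hs1 : (1 + A * δ) * n ≤ s * M) (hs2 : (s - 1) * M ≤ (1 + A * δ) * n) (hs'0 : 0 ≤ s')
    (hs0 : 0 ≤ s) :
    (A - 1) * δ * n ≤ n - s' * M ∧ n - s' * M ≤ (A + 1) * δ * n ∧ n - s' * M ≤ m - s' * p ∧
    m - s' * p ≤ B' * (n - s' * M) ∧
    (A - 1) * δ * n ≤ s * M - (n + k) ∧ s * M - (n + k) ≤ (A + 1) * δ * n ∧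
    s * M - (n + k) ≤ s * p - (m + k + j) ∧
    s * p - (m + k + j) ≤ B' * (s * M - (n + k)) ∧ (s - s') * M ≤ (2 * A + 2) * δ * n := by
  have hMpos : 0 < M := by
    by_contra h
    push Not at h
    nlinarith
  have hδn : 0 < δ * n := by positivity
  set r : ℝ := m / n with hr
  have hrn : m = r * n := by rw [hr]; field_simp
  have hr1 : 1 + ε ≤ r := by rw [hr, le_div_iff₀ hn]; exact hm
  have hr2 : r ≤ B := by rw [hr, div_le_iff₀ hn]; exact hm2
  have hpr : p ≤ r * M := by
    have : p * n ≤ (r * M) * n := by rw [hrn] at hp; linarith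
    exact le_of_mul_le_mul_right this hn
  have hpr' : r * M ≤ p + 1 := by
    have : (r * M) * n ≤ (p + 1) * n := by rw [hrn] at hp'; linarith
    exact le_of_mul_le_mul_right this hn
  clear_value r
  subst hrn
  -- `s'` and `s` are at most of order `δ n`, because `M ≥ 1 / δ`
  have hs'b : s' ≤ δ * n := by
    have h1 : s' * 1 ≤ s' * (δ * M) := mul_le_mul_of_nonneg_left hM hs'0
    have h2 : δ * (s' * M) ≤ δ * ((1 - A * δ) * n) := mul_le_mul_of_nonneg_left hs1' hδ.le
    have h3 : 0 ≤ A * δ * (δ * n) := by positivity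
    linarith
  have hsb : s ≤ 3 * (δ * n) := by
    rcases le_total s 1 with h | h
    · linarith
    have h1 : (s - 1) * 1 ≤ (s - 1) * (δ * M) := mul_le_mul_of_nonneg_left hM (by linarith)
    have h2 : δ * ((s - 1) * M) ≤ δ * ((1 + A * δ) * n) := mul_le_mul_of_nonneg_left hs2 hδ.le
    have h3 : A * δ * (δ * n) ≤ 1 / 2 * (δ * n) := mul_le_mul_of_nonneg_right hAδ hδn.le
    linarith
  have hBB' : 0 < B' - B := by linarith
  rw [div_le_iff₀ hBB'] at hA
  rw [div_le_iff₀ hε] at hA'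
  have x1 : A * (δ * n) ≤ n - s' * M := by linarith
  have x2 : n - s' * M ≤ (A + 1) * (δ * n) := by linarith
  have x3 : (A - 1) * (δ * n) ≤ s * M - (n + k) := by linarith
  have x4 : s * M - (n + k) ≤ (A + 1) * (δ * n) := by linarith
  have hA0 : 0 ≤ A - 1 := by linarith
  have hsp1 : s' * p ≤ r * (s' * M) := by linarith [mul_le_mul_of_nonneg_left hpr hs'0]
  have hsp2 : r * (s' * M) ≤ s' * p + s' := by linarith [mul_le_mul_of_nonneg_left hpr' hs'0]
  have hsp3 : s * p ≤ r * (s * M) := by linarith [mul_le_mul_of_nonneg_left hpr hs0]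
  have hsp4 : r * (s * M) ≤ s * p + s := by linarith [mul_le_mul_of_nonneg_left hpr' hs0]
  set X := n - s' * M with hX
  set X' := s * M - (n + k) with hX'
  have hX0 : 0 ≤ X := le_trans (by positivity) x1
  have hX'0 : 0 ≤ X' := le_trans (by positivity) x3
  have hAd : 2 * B * (δ * n) ≤ (B' - B) * ((A - 1) * (δ * n)) := by
    linarith [mul_le_mul_of_nonneg_right hA hδn.le]
  have hAd' : 5 * (δ * n) ≤ ε * ((A - 1) * (δ * n)) := by
    linarith [mul_le_mul_of_nonneg_right hA' hδn.le]
  have e1 : (B' - B) * ((A - 1) * (δ * n)) ≤ (B' - B) * X :=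
    mul_le_mul_of_nonneg_left (by linarith) hBB'.le
  have e2 : (B' - B) * ((A - 1) * (δ * n)) ≤ (B' - B) * X' :=
    mul_le_mul_of_nonneg_left x3 hBB'.le
  have e3 : ε * ((A - 1) * (δ * n)) ≤ ε * X' := mul_le_mul_of_nonneg_left x3 hε.le
  have f1 : (1 + ε) * X ≤ r * X := mul_le_mul_of_nonneg_right hr1 hX0
  have f2 : r * X ≤ B * X := mul_le_mul_of_nonneg_right hr2 hX0
  have f3 : (1 + ε) * X' ≤ r * X' := mul_le_mul_of_nonneg_right hr1 hX'0
  have f4 : r * X' ≤ B * X' := mul_le_mul_of_nonneg_right hr2 hX'0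
  have f5 : 0 ≤ r * k := mul_nonneg (by linarith) hk
  have f6 : r * k ≤ B * (δ * n) := mul_le_mul hr2 hkδ hk (by linarith)
  have g1 : r * (s' * M) = r * n - r * X := by rw [hX]; ring
  have g2 : r * (s * M) = r * X' + r * n + r * k := by rw [hX']; ring
  have g3 : B * (δ * n) ≥ 1 * (δ * n) := mul_le_mul_of_nonneg_right hB1 hδn.le
  have h0 : 0 ≤ ε * X := by positivity
  refine ⟨by linarith, by linarith, by linarith, by linarith, by linarith, by linarith,
    by linarith, by linarith, ?_⟩
  have : (s - s') * M = X + X' + k := by rw [hX, hX']; ring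
  linarith

set_option maxHeartbeats 2000000 in
/-- Moving from `(n, m)` to `(n + k, m + k + j)` with `j ≤ k ≤ δ n` increases the normalised number of
connected planar graphs by at most a factor `exp (K δ n)`, with `K` independent of `δ`. -/
theorem gg_ratio (B ε : ℝ) (hB1 : 1 ≤ B) (hB : B < 3) (hε : 0 < ε) :
    ∃ K : ℝ, 0 < K ∧ ∃ δ₀ : ℝ, 0 < δ₀ ∧ ∀ δ : ℝ, 0 < δ → δ ≤ δ₀ → ∃ N : ℕ, ∀ n m k j : ℕ, N ≤ n →
      (1 + ε) * n ≤ m → (m : ℝ) ≤ B * n → (k : ℝ) ≤ δ * n → j ≤ k →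
      gg (n + k) (m + k + j) ≤ Real.exp (K * δ * n) * gg n m := by
  set B' : ℝ := (B + 3) / 2 with hB'
  obtain ⟨c, hc0, hc1, x₀, hlow⟩ := gg_lower B' (by rw [hB']; linarith)
  obtain ⟨C, hC1, hup⟩ := gg_upper
  have hBB : B < B' := by rw [hB']; linarith
  set A : ℝ := 2 * B / (B' - B) + 5 / ε + 2 with hAdef
  have hA1 : 0 < 2 * B / (B' - B) := div_pos (by linarith) (by linarith)
  have hA2 : 0 < 5 / ε := by positivity
  have hA3 : 2 ≤ A := by linarith
  have hlogC : 0 ≤ Real.log C := Real.log_nonneg hC1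
  set D : ℝ := - Real.log c with hD
  have hD0 : 0 ≤ D := by have := Real.log_nonpos hc0.le hc1; linarith
  have hcD : ∀ x : ℕ, c ^ x = Real.exp (- (D * x)) := by
    intro x
    rw [hD, ← Real.rpow_natCast, Real.rpow_def_of_pos hc0]; congr 1; ring
  set K : ℝ := (2 * A + 2) * Real.log C + 1 + 2 * (A + 1) * D with hK
  have hK0 : 0 < K := by positivity
  -- the direction length `M` is `⌈1 / δ⌉`; it must exceed `x₀` and `1 / ε`
  refine ⟨K, hK0, min (1 / (2 * A)) (min (1 / (x₀ + 1)) ε), by positivity, fun δ hδ hδ0 => ?_⟩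
  have hd1 : A * δ ≤ 1 / 2 := by
    have : δ ≤ 1 / (2 * A) := hδ0.trans (min_le_left _ _)
    rw [le_div_iff₀ (by positivity)] at this; linarith
  have hd2 : δ * (x₀ + 1) ≤ 1 := by
    have : δ ≤ 1 / (x₀ + 1) := hδ0.trans ((min_le_right _ _).trans (min_le_left _ _))
    rwa [le_div_iff₀ (by positivity)] at this
  have hd3 : δ ≤ ε := hδ0.trans ((min_le_right _ _).trans (min_le_right _ _))
  set M : ℕ := ⌈1 / δ⌉₊ with hM
  have hMδ : 1 ≤ δ * M := by
    have : 1 / δ ≤ M := Nat.le_ceil _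
    rw [div_le_iff₀ hδ] at this; linarith
  have hMpos : 1 ≤ M := by
    rw [Nat.one_le_iff_ne_zero]; intro h
    have : (M : ℝ) = 0 := by exact_mod_cast h
    rw [this] at hMδ; linarith
  have hMx : x₀ ≤ M := by
    by_contra h
    push Not at h
    have h' : (M : ℝ) + 1 ≤ x₀ := by exact_mod_cast h
    have : δ * M < δ * (x₀ + 1) := mul_lt_mul_of_pos_left (by linarith) hδ
    linarith
  have hMε : 1 ≤ ε * M := hMδ.trans (mul_le_mul_of_nonneg_right hd3 (by positivity))
  -- positivity along every admissible direction
  have hpos : ∀ p : ℕ, M ≤ p → (p : ℝ) ≤ B * M → ∀ t : ℕ, 1 ≤ t → 0 < gg (t * M) (t * p) := by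
    intro p hp1 hp2 t ht
    refine lt_of_lt_of_le (by positivity) (hlow (t * M) (t * p) (hMx.trans (Nat.le_mul_of_pos_left _ ht))
      (Nat.mul_le_mul_left _ hp1) ?_)
    push_cast
    have : (p : ℝ) ≤ B' * M := hp2.trans (mul_le_mul_of_nonneg_right hBB.le (by positivity))
    linarith [mul_le_mul_of_nonneg_left this (by positivity : (0 : ℝ) ≤ t)]
  -- a threshold valid for all of the finitely many directions
  have hex : ∀ p : ℕ, ∃ t₀ : ℕ, M ≤ p → (p : ℝ) ≤ B * M → ∃ L : ℝ, L ≤ M * Real.log C ∧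
      (∀ t : ℕ, 1 ≤ t → gg (t * M) (t * p) ≤ Real.exp (t * L)) ∧
      ∀ t : ℕ, t₀ ≤ t → Real.exp (t * (L - δ * M)) ≤ gg (t * M) (t * p) := by
    intro p
    by_cases h : M ≤ p ∧ (p : ℝ) ≤ B * M
    · obtain ⟨L, h1, h2, t₀, h3⟩ := fekete_dir C hC1 hup M p hMpos (hMpos.trans h.1)
        (hpos p h.1 h.2) (δ * M) (by positivity)
      exact ⟨t₀, fun _ _ => ⟨L, h1, h2, h3⟩⟩
    · exact ⟨0, fun h1 h2 => absurd ⟨h1, h2⟩ h⟩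
  choose t₀ ht₀ using hex
  obtain ⟨T, hT⟩ : ∃ T : ℕ, ∀ p ≤ 3 * M, t₀ p ≤ T := by
    refine ⟨(Finset.range (3 * M + 1)).sup t₀, fun p hp => ?_⟩
    exact Finset.le_sup (f := t₀) (Finset.mem_range.2 (by omega))
  obtain ⟨N, hN⟩ := exists_nat_gt (M / δ + 2 * (T + 2) * M + (x₀ + 1) / δ)
  refine ⟨N, fun n m k j hn hm1 hm2 hk hj => ?_⟩
  have hM0 : (0 : ℝ) < M := by exact_mod_cast hMpos
  have hnR : M / δ + 2 * (T + 2) * M + (x₀ + 1) / δ < n := by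
    have : (N : ℝ) ≤ n := by exact_mod_cast hn
    linarith
  have i1 : 0 ≤ M / δ := by positivity
  have i2 : (0 : ℝ) ≤ 2 * (T + 2) * M := by positivity
  have i3 : 0 ≤ (x₀ + 1) / δ := by positivity
  have hn0 : (0 : ℝ) < n := by linarith
  have hMn : (M : ℝ) ≤ δ * n := by
    have : M / δ ≤ n := by linarith
    rw [div_le_iff₀ hδ] at this; linarith
  have hxn : (x₀ : ℝ) + 1 ≤ δ * n := by
    have : (x₀ + 1) / δ ≤ n := by linarith
    rw [div_le_iff₀ hδ] at this; linarith
  have hTn : 2 * (T + 2) * M ≤ (n : ℝ) := by linarith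
  set p : ℕ := m * M / n with hp
  have hnN : 0 < n := by exact_mod_cast hn0
  have hp1 : (p : ℝ) * n ≤ m * M := by exact_mod_cast Nat.div_mul_le_self _ _
  have hp2 : (m : ℝ) * M ≤ (p + 1) * n := by
    have : m * M < (p + 1) * n := by
      rw [mul_comm (p + 1)]; exact Nat.lt_mul_div_succ _ hnN
    exact_mod_cast this.le
  set s' : ℕ := ⌊(1 - A * δ) * n / M⌋₊ with hs'
  set s : ℕ := ⌈(1 + A * δ) * n / M⌉₊ with hs
  have hAδ0 : 0 < A * δ := by positivity
  have q0 : 0 ≤ (1 - A * δ) * n / M := by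
    have : 0 ≤ 1 - A * δ := by linarith
    positivity
  have q1 : (s' : ℝ) * M ≤ (1 - A * δ) * n := by
    rw [← le_div_iff₀ hM0]; exact Nat.floor_le q0
  have q2 : (1 - A * δ) * n ≤ ((s' : ℝ) + 1) * M := by
    rw [← div_le_iff₀ hM0]; exact (Nat.lt_floor_add_one _).le
  have q3 : (1 + A * δ) * n ≤ (s : ℝ) * M := by
    rw [← div_le_iff₀ hM0]; exact Nat.le_ceil _
  have q4 : ((s : ℝ) - 1) * M ≤ (1 + A * δ) * n := by
    rw [← le_div_iff₀ hM0]
    have := Nat.ceil_lt_add_one (show 0 ≤ (1 + A * δ) * n / M by positivity)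
    linarith
  obtain ⟨a1, a2, a3, a4, a5, a6, a7, a8, a9⟩ := cone_arith B B' ε A δ hB1 hBB hε hA3 (by linarith)
    (by linarith) hδ hd1 n m k j M p s s' hn0 (by linarith) hm1 hm2 (by positivity) hk
    (by positivity) (by exact_mod_cast hj) hMδ hMn hp1 hp2 q1 q2 q3 q4 (by positivity)
    (by positivity)
  -- the direction `p` is admissible
  have hpM : M ≤ p := by
    have h1 : (M : ℝ) * n ≤ p * n := by
      have : (1 + ε) * n * M ≤ m * M := mul_le_mul_of_nonneg_right hm1 hM0.le
      have h2 : 1 * (n : ℝ) ≤ ε * M * n := mul_le_mul_of_nonneg_right hMε hn0.le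
      linarith
    exact_mod_cast le_of_mul_le_mul_right h1 hn0
  have hpB : (p : ℝ) ≤ B * M := by
    have h1 : (p : ℝ) * n ≤ (B * M) * n := by
      have : (m : ℝ) * M ≤ B * n * M := mul_le_mul_of_nonneg_right hm2 hM0.le
      linarith
    exact le_of_mul_le_mul_right h1 hn0
  have hp3 : p ≤ 3 * M := by
    have : (p : ℝ) ≤ 3 * M := hpB.trans (mul_le_mul_of_nonneg_right hB.le hM0.le)
    exact_mod_cast this
  obtain ⟨L, hL1, hL2, hL3⟩ := ht₀ p hpM hpB
  have hs'T : T + 1 ≤ s' := by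
    have h1 : ((T : ℝ) + 2) * M ≤ (s' + 1) * M := by
      have : A * δ * n ≤ 1 / 2 * n := mul_le_mul_of_nonneg_right hd1 hn0.le
      linarith
    have h2 : (T : ℝ) + 2 ≤ s' + 1 := le_of_mul_le_mul_right h1 hM0
    have h3 : T + 2 ≤ s' + 1 := by exact_mod_cast h2
    omega
  have hxA : (x₀ : ℝ) + 1 ≤ (A - 1) * δ * n := by
    have : 2 * (δ * n) ≤ A * (δ * n) := mul_le_mul_of_nonneg_right hA3 (by positivity)
    linarith
  -- the complementary vectors as natural numbers
  have b1 : s' * M + x₀ + 1 ≤ n := by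
    have : ((s' * M + x₀ + 1 : ℕ) : ℝ) ≤ n := by push_cast; linarith
    exact_mod_cast this
  have b2 : s' * p ≤ m := by
    have : ((s' * p : ℕ) : ℝ) ≤ m := by push_cast; linarith
    exact_mod_cast this
  have b3 : n + k + x₀ + 1 ≤ s * M := by
    have : ((n + k + x₀ + 1 : ℕ) : ℝ) ≤ (s * M : ℕ) := by push_cast; linarith
    exact_mod_cast this
  have b4 : m + k + j ≤ s * p := by
    have : ((m + k + j : ℕ) : ℝ) ≤ (s * p : ℕ) := by push_cast; linarith
    exact_mod_cast this
  obtain ⟨x, hx⟩ : ∃ x, n = s' * M + x := ⟨n - s' * M, by omega⟩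
  obtain ⟨y, hy⟩ : ∃ y, m = s' * p + y := ⟨m - s' * p, by omega⟩
  obtain ⟨x', hx'⟩ : ∃ x', s * M = n + k + x' := ⟨s * M - (n + k), by omega⟩
  obtain ⟨y', hy'⟩ : ∃ y', s * p = m + k + j + y' := ⟨s * p - (m + k + j), by omega⟩
  have rx : (n : ℝ) - s' * M = x := by rw [hx]; push_cast; ring
  have ry : (m : ℝ) - s' * p = y := by rw [hy]; push_cast; ring
  have rx' : (s : ℝ) * M - (n + k) = x' := by
    have : ((s * M : ℕ) : ℝ) = (n + k + x' : ℕ) := by rw [hx']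
    push_cast at this; linarith
  have ry' : (s : ℝ) * p - (m + k + j) = y' := by
    have : ((s * p : ℕ) : ℝ) = (m + k + j + y' : ℕ) := by rw [hy']
    push_cast at this; linarith
  rw [rx] at a1 a2 a3 a4
  rw [ry] at a3 a4
  rw [rx'] at a5 a6 a7 a8
  rw [ry'] at a7 a8
  have hxx : x ≤ y := by exact_mod_cast a3
  have hxx' : x' ≤ y' := by exact_mod_cast a7
  have l1 := hlow x y (by omega) hxx a4
  have l2 := hlow x' y' (by omega) hxx' a8
  have hs1 : 1 ≤ s := by
    rcases Nat.eq_zero_or_pos s with h | h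
    · rw [h] at b3; omega
    · exact h
  have hs'1 : 1 ≤ s' := by omega
  have hmn : 1 ≤ m := by
    have : 1 ≤ s' * p := Nat.mul_pos hs'1 (hMpos.trans hpM)
    omega
  have up1 := gg_mul (n + k) x' (m + k + j) y' (by omega) (by omega) (by omega) (by omega)
  rw [← hx', ← hy'] at up1
  have up2 := hL2 s hs1
  have lo1 := gg_mul (s' * M) x (s' * p) y (Nat.mul_pos hs'1 hMpos) (by omega)
    (Nat.mul_pos hs'1 (hMpos.trans hpM)) (by omega)
  rw [← hx, ← hy] at lo1
  have lo2 := hL3 s' ((hT p hp3).trans (by omega))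
  rw [hcD] at l1 l2
  have u1 : gg (n + k) (m + k + j) * Real.exp (-(D * x')) ≤ Real.exp (s * L) :=
    (mul_le_mul_of_nonneg_left l2 (gg_nonneg _ _)).trans (up1.trans up2)
  have u2 : gg (n + k) (m + k + j) ≤ Real.exp (s * L + D * x') := by
    have := mul_le_mul_of_nonneg_right u1 (Real.exp_pos (D * x')).le
    rwa [mul_assoc, ← Real.exp_add, neg_add_cancel, Real.exp_zero, mul_one, ← Real.exp_add] at this
  have v1 : Real.exp (s' * (L - δ * M) + -(D * x)) ≤ gg n m := by
    rw [Real.exp_add]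
    exact (mul_le_mul lo2 l1 (Real.exp_pos _).le (gg_nonneg _ _)).trans lo1
  refine u2.trans (le_trans ?_ (mul_le_mul_of_nonneg_left v1 (Real.exp_pos _).le))
  rw [← Real.exp_add, Real.exp_le_exp]
  have hss : (0 : ℝ) ≤ s - s' := by
    have h1 : (s' : ℝ) * M ≤ s * M := by
      have : 0 ≤ A * δ * n := by positivity
      linarith
    linarith [le_of_mul_le_mul_right h1 hM0]
  have z1 : (s - s') * L ≤ (2 * A + 2) * δ * n * Real.log C := by
    calc ((s : ℝ) - s') * L ≤ (s - s') * (M * Real.log C) := mul_le_mul_of_nonneg_left hL1 hss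
      _ = (s - s') * M * Real.log C := by ring
      _ ≤ _ := mul_le_mul_of_nonneg_right a9 hlogC
  have z2 : D * x' ≤ D * ((A + 1) * δ * n) := mul_le_mul_of_nonneg_left a6 hD0
  have z3 : D * x ≤ D * ((A + 1) * δ * n) := mul_le_mul_of_nonneg_left a2 hD0
  have z4 : s' * (δ * M) ≤ δ * n := by
    have h : (s' : ℝ) * M ≤ n := by
      have : 0 ≤ A * δ * n := by positivity
      linarith
    linarith [mul_le_mul_of_nonneg_left h hδ.le]
  have : K * δ * n = (2 * A + 2) * δ * n * Real.log C + δ * n + 2 * (D * ((A + 1) * δ * n)) := by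
    rw [hK]; ring
  rw [this]
  linarith

/-! ### From connected graphs to all graphs -/

theorem reachable_sup_edge {V : Type*} {G : SimpleGraph V} {u v x y : V}
    (h : (G ⊔ edge u v).Reachable x y) :
    G.Reachable x y ∨ (G.Reachable x u ∧ G.Reachable v y) ∨ (G.Reachable x v ∧ G.Reachable u y) := by
  obtain ⟨w⟩ := h
  induction w with
  | nil => exact Or.inl (Reachable.refl _)
  | @cons a b c hab w ih =>
    rw [sup_adj, edge_adj] at hab
    rcases hab with hab | ⟨⟨rfl, rfl⟩ | ⟨rfl, rfl⟩, -⟩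
    · have := hab.reachable
      rcases ih with ih | ⟨h1, h2⟩ | ⟨h1, h2⟩
      · exact Or.inl (this.trans ih)
      · exact Or.inr (Or.inl ⟨this.trans h1, h2⟩)
      · exact Or.inr (Or.inr ⟨this.trans h1, h2⟩)
    · rcases ih with ih | ⟨h1, h2⟩ | ⟨h1, h2⟩
      · exact Or.inr (Or.inl ⟨Reachable.refl _, ih⟩)
      · exact Or.inr (Or.inl ⟨Reachable.refl _, h2⟩)
      · exact Or.inl h2
    · rcases ih with ih | ⟨h1, h2⟩ | ⟨h1, h2⟩
      · exact Or.inr (Or.inr ⟨Reachable.refl _, ih⟩)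
      · exact Or.inl h2
      · exact Or.inr (Or.inr ⟨Reachable.refl _, h2⟩)

theorem card_comp_sup_edge {V : Type*} [Finite V] {G : SimpleGraph V} {u v : V}
    (h : ¬ G.Reachable u v) :
    Nat.card (G ⊔ edge u v).ConnectedComponent + 1 = Nat.card G.ConnectedComponent := by
  set H := G ⊔ edge u v with hH
  have hle : G ≤ H := le_sup_left
  have hne : u ≠ v := fun e => h (e ▸ Reachable.refl _)
  have huv : H.Reachable u v := by
    refine Adj.reachable ?_
    rw [hH, sup_adj, edge_adj]; exact Or.inr ⟨Or.inl ⟨rfl, rfl⟩, hne⟩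
  let S : Set G.ConnectedComponent := {c | c ≠ G.connectedComponentMk v}
  have hS : S.ncard + 1 = Nat.card G.ConnectedComponent := by
    have : S = Set.univ \ {G.connectedComponentMk v} := by ext c; simp [S]
    rw [this, Set.ncard_sdiff_singleton_add_one (Set.mem_univ _) (Set.toFinite _), Set.ncard_univ]
  rw [← hS, ← Set.ncard_univ]
  congr 1
  symm
  refine Set.ncard_congr (fun c _ => c.map (Hom.ofLE hle)) (fun _ _ => Set.mem_univ _) ?_ ?_
  · intro c d hc hd hcd
    induction c using ConnectedComponent.ind with | _ x => ?_
    induction d using ConnectedComponent.ind with | _ y => ?_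
    have hx : ¬ G.Reachable x v := fun hh => hc (ConnectedComponent.sound hh)
    have hy : ¬ G.Reachable y v := fun hh => hd (ConnectedComponent.sound hh)
    have hr : H.Reachable x y := ConnectedComponent.exact hcd
    rcases reachable_sup_edge hr with h1 | ⟨_, h2⟩ | ⟨h1, _⟩
    · exact ConnectedComponent.sound h1
    · exact absurd h2.symm hy
    · exact absurd h1 hx
  · intro c _
    induction c using ConnectedComponent.ind with | _ x => ?_
    by_cases hx : G.Reachable x v
    · refine ⟨G.connectedComponentMk u, fun e => h (ConnectedComponent.exact e), ?_⟩
      exact ConnectedComponent.sound (huv.trans (hx.mono hle).symm)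
    · exact ⟨G.connectedComponentMk x, fun e => hx (ConnectedComponent.exact e), rfl⟩

/-- Planar graphs on `n` vertices with `m` edges and `κ` components. -/
def compSet (κ n m : ℕ) : Set (SimpleGraph (Fin n)) :=
  {G | IsPlanar G ∧ edgeCount G = m ∧ Nat.card G.ConnectedComponent = κ}

/-- There are at least as many ordered pairs of vertices in different components as there are ordered
pairs of distinct components. -/
theorem comp_pairs {V : Type*} [Finite V] (G : SimpleGraph V) :
    Nat.card G.ConnectedComponent * (Nat.card G.ConnectedComponent - 1) ≤
      {p : V × V | ¬ G.Reachable p.1 p.2}.ncard := by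
  classical
  have : Fintype G.ConnectedComponent := Fintype.ofFinite _
  have h : (Finset.univ : Finset G.ConnectedComponent).offDiag.card =
      Nat.card G.ConnectedComponent * (Nat.card G.ConnectedComponent - 1) := by
    rw [Finset.offDiag_card, Finset.card_univ, Nat.card_eq_fintype_card, Nat.mul_sub, mul_one]
  rw [← h, ← Set.ncard_coe_finset]
  have ho : ∀ c : G.ConnectedComponent, G.connectedComponentMk c.out = c := fun c => Quot.out_eq c
  refine Set.ncard_le_ncard_of_injOn (fun p => (p.1.out, p.2.out)) ?_ ?_ (Set.toFinite _)
  · rintro ⟨c, d⟩ hcd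
    have hcd : c ≠ d := by simpa using hcd
    intro hr
    apply hcd
    rw [← ho c, ← ho d]
    exact ConnectedComponent.sound hr
  · rintro ⟨c, d⟩ _ ⟨c', d'⟩ _ he
    simp only [Prod.mk.injEq] at he
    rw [← ho c, ← ho d, ← ho c', ← ho d', he.1, he.2]

/-- Joining two components by an edge, counted in both directions. -/
theorem comp_step (κ n m : ℕ) :
    (compSet (κ + 1) n m).ncard * ((κ + 1) * κ) ≤ (compSet κ n (m + 1)).ncard * (2 * (m + 1)) := by
  refine double_count (compSet (κ + 1) n m) (fun G => {p : Fin n × Fin n | ¬ G.Reachable p.1 p.2})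
    (compSet κ n (m + 1)) (fun H => {p : Fin n × Fin n | H.Adj p.1 p.2})
    (fun G p => G ⊔ edge p.1 p.2) (fun _ p => p) _ _ ?_ ?_ ?_ ?_
  · rintro G ⟨-, -, hG⟩
    have := comp_pairs G
    rwa [hG, Nat.add_sub_cancel] at this
  · rintro H ⟨-, hH, -⟩
    have := dc_eq H
    rw [hH] at this
    exact this.le
  · rintro G ⟨hp, hm, hc⟩ ⟨u, v⟩ (huv : ¬ G.Reachable u v)
    have hne : u ≠ v := fun e => huv (e ▸ Reachable.refl _)
    refine ⟨⟨planar_bridge hp huv, ?_, ?_⟩, ?_⟩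
    · rw [edgeCount_sup_edge hne (fun h => huv h.reachable), hm]
    · have := card_comp_sup_edge huv
      rw [hc] at this
      exact Nat.add_right_cancel this
    · change (G ⊔ edge u v).Adj u v
      rw [sup_adj, edge_adj]; exact Or.inr ⟨Or.inl ⟨rfl, rfl⟩, hne⟩
  · rintro G - ⟨u, v⟩ (huv : ¬ G.Reachable u v) G' - p' hp' he (rfl : (u, v) = p')
    exact ⟨sup_edge_cancel (fun h => huv h.reachable) (fun h => hp' h.reachable) he, rfl⟩

theorem compSet_one (n m : ℕ) : compSet 1 n m = connSet n m := by
  ext G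
  have : Nat.card G.ConnectedComponent = 1 ↔ G.Connected := by
    rw [Nat.card_eq_one_iff_unique, connected_iff]
    constructor
    · rintro ⟨h1, ⟨c⟩⟩
      refine ⟨fun x y => ConnectedComponent.exact (Subsingleton.elim _ _), ⟨c.out⟩⟩
    · rintro ⟨h1, ⟨x⟩⟩
      refine ⟨⟨fun c d => ?_⟩, ⟨G.connectedComponentMk x⟩⟩
      induction c using ConnectedComponent.ind with | _ x => ?_
      induction d using ConnectedComponent.ind with | _ y => ?_
      exact ConnectedComponent.sound (h1 x y)
  simp only [compSet, connSet, Set.mem_ofPred_eq, this]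
  tauto

/-- A graph with `j + 1` components becomes connected after adding `j` edges. -/
theorem comp_le (n R j : ℕ) : ∀ m, 2 * (m + j) ≤ R →
    (compSet (j + 1) n m).ncard * j.factorial ^ 2 ≤ R ^ j * (connSet n (m + j)).ncard := by
  induction j with
  | zero => intro m _; simp [compSet_one]
  | succ j ih =>
    intro m hm
    have h1 := comp_step (j + 1) n m
    have h2 := ih (m + 1) (by omega)
    rw [show m + 1 + j = m + (j + 1) by omega] at h2
    calc (compSet (j + 1 + 1) n m).ncard * (j + 1).factorial ^ 2
        = (compSet (j + 1 + 1) n m).ncard * ((j + 1) * (j + 1)) * j.factorial ^ 2 := by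
          rw [Nat.factorial_succ]; ring
      _ ≤ (compSet (j + 1 + 1) n m).ncard * ((j + 1 + 1) * (j + 1)) * j.factorial ^ 2 := by
          gcongr; omega
      _ ≤ (compSet (j + 1) n (m + 1)).ncard * (2 * (m + 1)) * j.factorial ^ 2 := by gcongr
      _ = (2 * (m + 1)) * ((compSet (j + 1) n (m + 1)).ncard * j.factorial ^ 2) := by ring
      _ ≤ R * (R ^ j * (connSet n (m + (j + 1))).ncard) := by
          gcongr; omega
      _ = _ := by ring

theorem planarSet_le_sum (n m : ℕ) (hn : 1 ≤ n) :
    (planarSet n m).ncard ≤ ∑ j ∈ Finset.range n, (compSet (j + 1) n m).ncard := by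
  have : planarSet n m ⊆ ⋃ j ∈ Finset.range n, compSet (j + 1) n m := by
    intro G hG
    have h1 : Nat.card G.ConnectedComponent ≤ n := by
      have := Nat.card_le_card_of_surjective G.connectedComponentMk Quot.mk_surjective
      simpa using this
    have h2 : 0 < Nat.card G.ConnectedComponent := by
      have : Nonempty G.ConnectedComponent := ⟨G.connectedComponentMk ⟨0, hn⟩⟩
      exact Nat.card_pos
    simp only [Set.mem_iUnion, Finset.mem_range]
    exact ⟨Nat.card G.ConnectedComponent - 1, by omega, hG.1, hG.2, by omega⟩
  exact (Set.ncard_le_ncard this (Set.toFinite _)).trans (Finset.set_ncard_biUnion_le _ _)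

/-- `R ^ j / (j!) ^ 2` is at most `y ^ (-2 j) exp (2 y √R)`. -/
theorem pow_div_fact_sq (R y : ℝ) (hR : 0 ≤ R) (hy : 0 < y) (j : ℕ) :
    R ^ j / (j.factorial : ℝ) ^ 2 ≤ (1 / y) ^ (2 * j) * Real.exp (2 * y * √R) := by
  have h : (y * √R) ^ j / j.factorial ≤ Real.exp (y * √R) :=
    Real.pow_div_factorial_le_exp _ (by positivity) j
  have h2 : ((y * √R) ^ j / j.factorial) ^ 2 ≤ Real.exp (y * √R) ^ 2 := by gcongr
  have e1 : ((y * √R) ^ j / j.factorial) ^ 2 = y ^ (2 * j) * (R ^ j / (j.factorial : ℝ) ^ 2) := by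
    rw [div_pow, mul_pow, mul_pow, ← pow_mul, ← pow_mul, mul_comm j 2, pow_mul (√R), Real.sq_sqrt hR]
    ring
  have e2 : Real.exp (y * √R) ^ 2 = Real.exp (2 * y * √R) := by
    rw [← Real.exp_nat_mul]; congr 1; push_cast; ring
  rw [e1, e2] at h2
  rw [one_div, inv_pow, inv_mul_eq_div, le_div_iff₀ (by positivity)]
  linarith

theorem connSet_eq_gg (n m : ℕ) :
    ((connSet n m).ncard : ℝ) = 32 * n.factorial * gg n (m + 1) := by
  have : (n.factorial : ℝ) ≠ 0 := by exact_mod_cast n.factorial_ne_zero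
  unfold gg
  rw [Nat.add_sub_cancel]
  field_simp

theorem connSet_le_planarSet (n m : ℕ) : (connSet n m).ncard ≤ (planarSet n m).ncard :=
  Set.ncard_le_ncard (fun _ hG => hG.2) (Set.toFinite _)

theorem subexp_aux (δ Y x : ℝ) (hδ : 0 < δ) (hx1 : 1 ≤ x) (hx : ((Y + 3) / δ) ^ 2 ≤ x) :
    2 * x * Real.exp (Y * √x) ≤ Real.exp (δ * x) := by
  set r := √x with hr
  have hr0 : 0 ≤ r := Real.sqrt_nonneg _
  have hrx : x = r ^ 2 := (Real.sq_sqrt (by linarith)).symm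
  have hr1 : 1 ≤ r := by rw [hr]; exact Real.one_le_sqrt.2 hx1
  have hr2 : Y + 3 ≤ δ * r := by
    have : (Y + 3) / δ ≤ r := Real.le_sqrt_of_sq_le hx
    rw [div_le_iff₀ hδ] at this; linarith
  have h1 : r ^ 2 / 2 ≤ Real.exp r := by
    have := Real.pow_div_factorial_le_exp r hr0 2
    simpa using this
  have h2 : (4 : ℝ) ≤ Real.exp 2 := by
    have := Real.add_one_le_exp (1 : ℝ)
    rw [show (2 : ℝ) = 1 + 1 by norm_num, Real.exp_add]; nlinarith
  calc 2 * x * Real.exp (Y * r) ≤ (4 * Real.exp r) * Real.exp (Y * r) := by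
        refine mul_le_mul_of_nonneg_right ?_ (Real.exp_pos _).le
        linarith
    _ ≤ (Real.exp 2 * Real.exp r) * Real.exp (Y * r) := by gcongr
    _ = Real.exp (2 + r + Y * r) := by rw [Real.exp_add, Real.exp_add]
    _ ≤ _ := by
      rw [Real.exp_le_exp, hrx]
      nlinarith [mul_le_mul_of_nonneg_right hr2 hr0]

set_option maxHeartbeats 1000000 in
/-- The analogue of `gg_ratio` for all planar graphs: graphs with few components are compared with
connected ones, and graphs with many components are superexponentially rare. -/
theorem planar_ratio (B ε : ℝ) (hB1 : 1 ≤ B) (hB : B < 3) (hε : 0 < ε) :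
    ∃ K : ℝ, 0 < K ∧ ∃ δ₀ : ℝ, 0 < δ₀ ∧ ∀ δ : ℝ, 0 < δ → δ ≤ δ₀ → ∃ N : ℕ, ∀ n m k : ℕ, N ≤ n →
      (1 + ε) * n ≤ m → (m : ℝ) ≤ B * n → (k : ℝ) ≤ δ * n → δ * n ≤ k + 1 →
      ((planarSet (n + k) (m + k)).ncard : ℝ) / (n + k).factorial ≤
        Real.exp (K * δ * n) * ((planarSet n m).ncard / n.factorial) := by
  set B' : ℝ := (B + 3) / 2 with hB'
  obtain ⟨c, hc0, hc1, x₀, hlow⟩ := gg_lower B' (by rw [hB']; linarith)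
  obtain ⟨C, hC1, hup⟩ := gg_upper
  obtain ⟨K, hK, δ₀, hδ₀, hratio⟩ := gg_ratio B' ε (by rw [hB']; linarith) (by rw [hB']; linarith) hε
  refine ⟨K + 1, by positivity, min δ₀ 1, by positivity, fun δ hδ hδ1 => ?_⟩
  obtain ⟨N₀, hN₀⟩ := hratio δ hδ (hδ1.trans (min_le_left _ _))
  have hδ1' : δ ≤ 1 := hδ1.trans (min_le_right _ _)
  have hlogC : 0 ≤ Real.log C := Real.log_nonneg hC1
  set D : ℝ := - Real.log c with hD
  have hD0 : 0 ≤ D := by have := Real.log_nonpos hc0.le hc1; linarith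
  have hcD : ∀ x : ℕ, c ^ x = Real.exp (- (D * x)) := by
    intro x
    rw [hD, ← Real.rpow_natCast, Real.rpow_def_of_pos hc0]; congr 1; ring
  -- `lam` is chosen so that `exp (-2 lam δ n)` beats both exponential bounds
  set lam : ℝ := (2 * Real.log C + D) / (2 * δ) with hlam
  have hlam0 : 0 ≤ lam := by positivity
  have hlamδ : 2 * lam * δ = 2 * Real.log C + D := by rw [hlam]; field_simp
  set y : ℝ := Real.exp lam with hy
  have hy0 : 0 < y := Real.exp_pos _
  obtain ⟨N₁, hN₁⟩ := exists_nat_gt (((8 * y + 3) / δ) ^ 2 + 2 / (B' - B))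
  refine ⟨N₀ + N₁ + x₀ + 1, fun n m k hn hm1 hm2 hk1 hk2 => ?_⟩
  have hBB : 0 < B' - B := by rw [hB']; linarith
  have hn1 : (1 : ℝ) ≤ n := by exact_mod_cast (by omega : 1 ≤ n)
  have hnN : (N₁ : ℝ) ≤ n := by exact_mod_cast (by omega : N₁ ≤ n)
  have hsq : 0 ≤ ((8 * y + 3) / δ) ^ 2 := by positivity
  have h2B : 0 ≤ 2 / (B' - B) := by positivity
  have hmB' : (m : ℝ) + 1 ≤ B' * n := by
    have h : 2 / (B' - B) ≤ n := by linarith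
    rw [div_le_iff₀ hBB] at h
    linarith
  have hm1' : (1 + ε) * n ≤ (m + 1 : ℕ) := by push_cast; linarith
  have hm2' : ((m + 1 : ℕ) : ℝ) ≤ B' * n := by push_cast; linarith
  have hkn : k ≤ n := by
    have : (k : ℝ) ≤ n := by nlinarith
    exact_mod_cast this
  have hm3 : m ≤ 3 * n := by
    have : (m : ℝ) ≤ 3 * n := by nlinarith
    exact_mod_cast this
  have hnm : n ≤ m + 1 := by
    have : (n : ℝ) ≤ (m + 1 : ℕ) := by nlinarith
    exact_mod_cast this
  set F : ℝ := ((n + k).factorial : ℝ) with hF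
  have hF0 : 0 < F := by rw [hF]; exact_mod_cast Nat.factorial_pos _
  have hf0 : 0 < (n.factorial : ℝ) := by exact_mod_cast Nat.factorial_pos _
  set Q : ℝ := ((planarSet n m).ncard : ℝ) / n.factorial with hQ
  have hQ1 : 32 * gg n (m + 1) ≤ Q := by
    rw [hQ, le_div_iff₀ hf0]
    have h := connSet_eq_gg n m
    have h2 : ((connSet n m).ncard : ℝ) ≤ (planarSet n m).ncard := by
      exact_mod_cast connSet_le_planarSet n m
    linarith
  have hQ2 : 32 * Real.exp (-(D * n)) ≤ Q := by
    have := hlow n (m + 1) (by omega) hnm hm2'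
    rw [hcD] at this
    linarith
  have hQ0 : 0 ≤ Q := by positivity
  set W : ℝ := Real.exp (8 * y * √n) with hW
  have hW0 : 0 < W := Real.exp_pos _
  -- the bound for each number of components
  have key : ∀ j ∈ Finset.range (n + k), ((compSet (j + 1) (n + k) (m + k)).ncard : ℝ) ≤
      F * (W * Real.exp (K * δ * n) * Q) := by
    intro j hj
    rw [Finset.mem_range] at hj
    have h1 := comp_le (n + k) (8 * (n + k)) j (m + k) (by omega)
    have h1' : ((compSet (j + 1) (n + k) (m + k)).ncard : ℝ) * (j.factorial : ℝ) ^ 2 ≤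
        (8 * (n + k) : ℝ) ^ j * ((connSet (n + k) (m + k + j)).ncard : ℝ) := by exact_mod_cast h1
    have hj0 : 0 < (j.factorial : ℝ) := by exact_mod_cast Nat.factorial_pos _
    have h2 : ((compSet (j + 1) (n + k) (m + k)).ncard : ℝ) ≤
        ((8 * (n + k) : ℝ) ^ j / (j.factorial : ℝ) ^ 2) *
          ((connSet (n + k) (m + k + j)).ncard : ℝ) := by
      rw [div_mul_eq_mul_div, le_div_iff₀ (by positivity)]; exact h1'
    have h3 : (8 * (n + k) : ℝ) ^ j / (j.factorial : ℝ) ^ 2 ≤ Real.exp (-(2 * lam * j)) * W := by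
      refine (pow_div_fact_sq (8 * (n + k)) y (by positivity) hy0 j).trans ?_
      refine mul_le_mul ?_ ?_ (Real.exp_pos _).le (Real.exp_pos _).le
      · rw [hy, one_div, ← Real.exp_neg, ← Real.exp_nat_mul]
        push_cast
        exact le_of_eq (by congr 1; ring)
      · rw [hW, Real.exp_le_exp]
        have : √(8 * (n + k) : ℝ) ≤ 4 * √n := by
          rw [Real.sqrt_le_left (by positivity), mul_pow, Real.sq_sqrt (by positivity)]
          have : (k : ℝ) ≤ n := by exact_mod_cast hkn
          linarith
        nlinarith
    have h4 : ((connSet (n + k) (m + k + j)).ncard : ℝ) = 32 * F * gg (n + k) (m + k + j + 1) :=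
      connSet_eq_gg _ _
    have h5 : ((compSet (j + 1) (n + k) (m + k)).ncard : ℝ) ≤
        Real.exp (-(2 * lam * j)) * W * (32 * F * gg (n + k) (m + k + j + 1)) := by
      rw [← h4]
      exact h2.trans (mul_le_mul_of_nonneg_right h3 (by positivity))
    refine h5.trans ?_
    have hg0 := gg_nonneg (n + k) (m + k + j + 1)
    rcases le_or_gt j k with hjk | hjk
    · have h6 := hN₀ n (m + 1) k j (by omega) hm1' hm2' hk1 hjk
      rw [show m + 1 + k + j = m + k + j + 1 by omega] at h6
      have h7 : Real.exp (-(2 * lam * j)) ≤ 1 := by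
        rw [Real.exp_le_one_iff]
        have : 0 ≤ 2 * lam * j := by positivity
        linarith
      calc Real.exp (-(2 * lam * j)) * W * (32 * F * gg (n + k) (m + k + j + 1))
          ≤ 1 * W * (32 * F * (Real.exp (K * δ * n) * gg n (m + 1))) := by gcongr
        _ = F * (W * Real.exp (K * δ * n) * (32 * gg n (m + 1))) := by ring
        _ ≤ _ := by gcongr
    · have h6 := hup (n + k) (m + k + j + 1)
      have h7 : C ^ (n + k) ≤ Real.exp (2 * n * Real.log C) := by
        rw [← Real.rpow_natCast, Real.rpow_def_of_pos (by linarith), Real.exp_le_exp]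
        have : ((n + k : ℕ) : ℝ) ≤ 2 * n := by exact_mod_cast (by omega : n + k ≤ 2 * n)
        nlinarith
      have h8 : Real.exp (-(2 * lam * j)) ≤ Real.exp (-((2 * Real.log C + D) * n)) := by
        rw [Real.exp_le_exp, ← hlamδ]
        have : (k : ℝ) + 1 ≤ j := by exact_mod_cast hjk
        have h9 : 2 * lam * (δ * n) ≤ 2 * lam * j := by gcongr; linarith
        linarith
      calc Real.exp (-(2 * lam * j)) * W * (32 * F * gg (n + k) (m + k + j + 1))
          ≤ Real.exp (-((2 * Real.log C + D) * n)) * W *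
            (32 * F * Real.exp (2 * n * Real.log C)) := by
              gcongr; exact h6.trans h7
        _ = F * (W * 1 * (32 * (Real.exp (-((2 * Real.log C + D) * n)) *
              Real.exp (2 * n * Real.log C)))) := by ring
        _ = F * (W * 1 * (32 * Real.exp (-(D * n)))) := by
              rw [← Real.exp_add]; congr 4; ring
        _ ≤ _ := by
              gcongr
              exact Real.one_le_exp (by positivity)
  have hsum : ((planarSet (n + k) (m + k)).ncard : ℝ) ≤
      (n + k : ℕ) * (F * (W * Real.exp (K * δ * n) * Q)) := by
    have h1 := planarSet_le_sum (n + k) (m + k) (by omega)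
    have h2 : ((planarSet (n + k) (m + k)).ncard : ℝ) ≤
        ∑ j ∈ Finset.range (n + k), ((compSet (j + 1) (n + k) (m + k)).ncard : ℝ) := by
      exact_mod_cast h1
    refine h2.trans ((Finset.sum_le_sum key).trans ?_)
    rw [Finset.sum_const, Finset.card_range, nsmul_eq_mul]
  rw [div_le_iff₀ hF0]
  refine hsum.trans ?_
  have hsub := subexp_aux δ (8 * y) n hδ hn1 (by linarith)
  have hnk : ((n + k : ℕ) : ℝ) ≤ 2 * n := by exact_mod_cast (by omega : n + k ≤ 2 * n)
  calc ((n + k : ℕ) : ℝ) * (F * (W * Real.exp (K * δ * n) * Q))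
      ≤ 2 * n * (F * (W * Real.exp (K * δ * n) * Q)) := by gcongr
    _ = (2 * n * W) * Real.exp (K * δ * n) * Q * F := by ring
    _ ≤ Real.exp (δ * n) * Real.exp (K * δ * n) * Q * F := by gcongr
    _ = _ := by rw [← Real.exp_add]; congr 3; ring

/-! ### Attaching pendant vertices -/

theorem ncard_pair_le {α : Type*} (a b : α) : ({a, b} : Set α).ncard ≤ 2 := by
  refine (Set.ncard_insert_le _ _).trans ?_
  rw [Set.ncard_singleton]

/-- The vertices of degree one. -/
def leaves {V : Type*} (G : SimpleGraph V) : Set V := {v | vertexDegree G v = 1}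

/-- Planar graphs on `n` vertices with `m` edges and at most `q` vertices of degree one. -/
def lowSet (n m q : ℕ) : Set (SimpleGraph (Fin n)) :=
  {G | IsPlanar G ∧ edgeCount G = m ∧ (leaves G).ncard ≤ q}

theorem leaves_le_pendant {V : Type*} [Finite V] (G : SimpleGraph V) :
    (leaves G).ncard ≤ 2 * pendantCount G := by
  have h : ∀ v, ∃ e : Sym2 V, v ∈ leaves G → e ∈ G.edgeSet ∧ v ∈ e := by
    intro v
    by_cases hv : v ∈ leaves G
    · obtain ⟨w, hw⟩ := Set.ncard_eq_one.1 hv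
      have : w ∈ G.neighborSet v := by rw [hw]; rfl
      exact ⟨s(v, w), fun _ => ⟨this, Sym2.mem_mk_left _ _⟩⟩
    · exact ⟨s(v, v), fun h => absurd h hv⟩
  choose f hf using h
  rw [mul_comm]
  refine le_trans ?_ (ncard_dep_le {e ∈ G.edgeSet | ∃ v ∈ e, vertexDegree G v = 1}
    (fun e => {v | v ∈ e}) 2 ?_)
  · refine Set.ncard_le_ncard_of_injOn (fun v => (f v, v)) ?_ ?_ (Set.toFinite _)
    · intro v hv
      exact ⟨⟨(hf v hv).1, v, (hf v hv).2, hv⟩, (hf v hv).2⟩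
    · intro v _ w _ h
      exact congrArg Prod.snd h
  · intro e _
    induction e using Sym2.ind with | _ a b => ?_
    have : {v | v ∈ s(a, b)} = ({a, b} : Set V) := by ext v; simp
    rw [this]
    exact ncard_pair_le a b

/-- Changing the neighbourhoods of the vertices in `S` creates at most `|S|` new leaves. -/
theorem leaves_le_add {V : Type*} [Finite V] {G H : SimpleGraph V} (S : Set V) (s : ℕ)
    (hS : S.ncard ≤ s) (h : ∀ w, w ∉ S → G.neighborSet w = H.neighborSet w) :
    (leaves H).ncard ≤ (leaves G).ncard + s := by
  have : leaves H ⊆ leaves G ∪ S := by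
    intro w hw
    by_cases hwS : w ∈ S
    · exact Or.inr hwS
    · left
      change (G.neighborSet w).ncard = 1
      rw [h w hwS]; exact hw
  refine (Set.ncard_le_ncard this (Set.toFinite _)).trans ((Set.ncard_union_le _ _).trans ?_)
  omega

theorem not_reachable_of_isolated {V : Type*} {G : SimpleGraph V} {v w : V}
    (h : ∀ x, ¬ G.Adj v x) (hw : v ≠ w) : ¬ G.Reachable v w := by
  rintro ⟨p⟩
  cases p with
  | nil => exact hw rfl
  | cons hh _ => exact h _ hh

theorem nbr_sup_edge {V : Type*} {G : SimpleGraph V} {u v w : V} (h1 : w ≠ u) (h2 : w ≠ v) :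
    (G ⊔ edge u v).neighborSet w = G.neighborSet w := by
  ext y
  simp only [mem_neighborSet, sup_adj, edge_adj]
  tauto

section
variable {n : ℕ} (G : SimpleGraph (Fin n)) (v : Fin (n + 1)) (x : Fin n)

theorem attach_isolated (y : Fin (n + 1)) : ¬ (G.map v.succAbove).Adj v y := by
  rintro ⟨-, a, b, -, ha, -⟩
  exact Fin.succAbove_ne v a ha

theorem attach_nbr : (G.map v.succAbove ⊔ edge v (v.succAbove x)).neighborSet v =
    {v.succAbove x} := by
  ext y
  simp only [mem_neighborSet, sup_adj, edge_adj, Set.mem_singleton_iff]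
  constructor
  · rintro (h | ⟨⟨-, h⟩ | ⟨h, -⟩, -⟩)
    · exact absurd h (attach_isolated G v y)
    · exact h
    · exact absurd h.symm (Fin.succAbove_ne v x)
  · rintro rfl
    simp [(Fin.succAbove_ne v x).symm]

theorem attach_leaves : (leaves (G.map v.succAbove ⊔ edge v (v.succAbove x))).ncard ≤
    (leaves G).ncard + 2 := by
  have hi : Function.Injective v.succAbove := Fin.succAbove_right_injective
  have : leaves (G.map v.succAbove ⊔ edge v (v.succAbove x)) ⊆
      v.succAbove '' leaves G ∪ {v, v.succAbove x} := by
    intro w hw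
    by_cases h1 : w = v
    · right; left; exact h1
    by_cases h2 : w = v.succAbove x
    · right; right; exact h2
    obtain ⟨y, rfl⟩ := Fin.exists_succAbove_eq h1
    left
    refine ⟨y, ?_, rfl⟩
    have hw : ((G.map v.succAbove ⊔ edge v (v.succAbove x)).neighborSet (v.succAbove y)).ncard = 1 :=
      hw
    rw [nbr_sup_edge h1 h2] at hw
    have e : (G.map v.succAbove).neighborSet (v.succAbove y) = v.succAbove '' G.neighborSet y := by
      ext z
      constructor
      · rintro ⟨-, a, b, hab, ha, rfl⟩
        rw [hi ha] at hab
        exact ⟨b, hab, rfl⟩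
      · rintro ⟨b, hb, rfl⟩
        exact (map_adj_inj hi y b).2 hb
    rw [e, Set.ncard_image_of_injective _ hi] at hw
    exact hw
  refine (Set.ncard_le_ncard this (Set.toFinite _)).trans ((Set.ncard_union_le _ _).trans ?_)
  have h1 := Set.ncard_image_le (f := v.succAbove) (Set.toFinite (leaves G))
  have h2 := ncard_pair_le v (v.succAbove x)
  omega

end

/-- Insert a new vertex at any of the `n + 1` label positions and attach it to any old vertex; the
new vertex is one of the at most `q + 2` leaves of the result. -/
theorem attach_step (n m q : ℕ) :
    (lowSet n m q).ncard * ((n + 1) * n) ≤ (lowSet (n + 1) (m + 1) (q + 2)).ncard * (q + 2) := by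
  refine double_count (lowSet n m q) (fun _ => (Set.univ : Set (Fin (n + 1) × Fin n)))
    (lowSet (n + 1) (m + 1) (q + 2)) (fun H => leaves H)
    (fun G p => G.map p.1.succAbove ⊔ edge p.1 (p.1.succAbove p.2)) (fun _ p => p.1) _ _ ?_ ?_ ?_ ?_
  · intro G _
    simp [Set.ncard_univ, Nat.card_eq_fintype_card]
  · rintro H ⟨-, -, h⟩; exact h
  · rintro G ⟨hp, hm, hl⟩ ⟨v, x⟩ -
    have hi : Function.Injective v.succAbove := Fin.succAbove_right_injective
    refine ⟨⟨?_, ?_, ?_⟩, ?_⟩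
    · exact planar_bridge (planar_map_inj hp _ hi)
        (not_reachable_of_isolated (attach_isolated G v) (Fin.succAbove_ne v x).symm)
    · rw [edgeCount_sup_edge (Fin.succAbove_ne v x).symm (attach_isolated G v _), edgeCount_map hi, hm]
    · exact (attach_leaves G v x).trans (by omega)
    · change ((G.map v.succAbove ⊔ edge v (v.succAbove x)).neighborSet v).ncard = 1
      rw [attach_nbr, Set.ncard_singleton]
  · rintro G - ⟨v, x⟩ - G' - ⟨v', x'⟩ - he (rfl : v = v')
    simp only at he
    have hi : Function.Injective v.succAbove := Fin.succAbove_right_injective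
    have h1 := attach_nbr G v x
    rw [he, attach_nbr G' v x', Set.singleton_eq_singleton_iff] at h1
    obtain rfl := hi h1
    have h2 := sup_edge_cancel (attach_isolated G v _) (attach_isolated G' v _) he
    refine ⟨?_, rfl⟩
    ext a b
    rw [← map_adj_inj (G := G) hi a b, h2, map_adj_inj hi]

theorem attach_iter (n m q k : ℕ) : ∀ i ≤ k,
    (lowSet n m q).ncard * ((n + i).factorial * n ^ i) ≤
      (lowSet (n + i) (m + i) (q + 2 * i)).ncard * ((q + 2 * k) ^ i * n.factorial) := by
  intro i
  induction i with
  | zero => intro _; simp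
  | succ i ih =>
    intro hi
    have h1 := ih (by omega)
    have h2 := attach_step (n + i) (m + i) (q + 2 * i)
    rw [show q + 2 * i + 2 = q + 2 * (i + 1) by ring] at h2
    calc (lowSet n m q).ncard * ((n + (i + 1)).factorial * n ^ (i + 1))
        = (lowSet n m q).ncard * ((n + i).factorial * n ^ i) * ((n + i + 1) * n) := by
          rw [← add_assoc, Nat.factorial_succ]; ring
      _ ≤ ((lowSet (n + i) (m + i) (q + 2 * i)).ncard * ((q + 2 * k) ^ i * n.factorial)) *
          ((n + i + 1) * (n + i)) := by gcongr; omega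
      _ = ((lowSet (n + i) (m + i) (q + 2 * i)).ncard * ((n + i + 1) * (n + i))) *
          ((q + 2 * k) ^ i * n.factorial) := by ring
      _ ≤ ((lowSet (n + i + 1) (m + i + 1) (q + 2 * (i + 1))).ncard * (q + 2 * (i + 1))) *
          ((q + 2 * k) ^ i * n.factorial) := by gcongr
      _ ≤ ((lowSet (n + i + 1) (m + i + 1) (q + 2 * (i + 1))).ncard * (q + 2 * k)) *
          ((q + 2 * k) ^ i * n.factorial) := by gcongr
      _ = _ := by
          rw [← add_assoc n i 1, ← add_assoc m i 1, pow_succ]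
          ring

theorem lowSet_le_planarSet (n m q : ℕ) : (lowSet n m q).ncard ≤ (planarSet n m).ncard :=
  Set.ncard_le_ncard (fun _ hG => ⟨hG.1, hG.2.1⟩) (Set.toFinite _)

/-- Few leaves are exponentially unlikely when there are more than `(1 + ε) n` edges. -/
theorem global_case (B ε : ℝ) (hB1 : 1 ≤ B) (hB : B < 3) (hε : 0 < ε) :
    ∃ α : ℝ, 0 < α ∧ ∃ N : ℕ, ∀ n m q : ℕ, N ≤ n → (1 + ε) * n ≤ m → (m : ℝ) ≤ B * n →
      (q : ℝ) ≤ α * n →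
      ((lowSet n m q).ncard : ℝ) ≤ Real.exp (-(α * n)) * (planarSet n m).ncard := by
  obtain ⟨K, hK, δ₀, hδ₀, hr⟩ := planar_ratio B ε hB1 hB hε
  set δ : ℝ := min δ₀ (Real.exp (-(K + 3)) / 3) with hδdef
  have hδ : 0 < δ := by positivity
  have hδ3 : 3 * δ ≤ Real.exp (-(K + 3)) := by
    have : δ ≤ Real.exp (-(K + 3)) / 3 := min_le_right _ _
    linarith
  obtain ⟨N₀, hN₀⟩ := hr δ hδ (min_le_left _ _)
  obtain ⟨N₁, hN₁⟩ := exists_nat_gt ((K + 3) / δ + 2 / δ)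
  refine ⟨δ / 2, by positivity, N₀ + N₁ + 1, fun n m q hn hm1 hm2 hq => ?_⟩
  have hn1 : (1 : ℝ) ≤ n := by exact_mod_cast (by omega : 1 ≤ n)
  have hnN : (N₁ : ℝ) ≤ n := by exact_mod_cast (by omega : N₁ ≤ n)
  have i1 : 0 ≤ (K + 3) / δ := by positivity
  have i2 : 0 ≤ 2 / δ := by positivity
  have j1 : K + 3 ≤ δ * n := by
    have : (K + 3) / δ ≤ n := by linarith
    rw [div_le_iff₀ hδ] at this; linarith
  have j2 : 2 ≤ δ * n := by
    have : 2 / δ ≤ n := by linarith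
    rw [div_le_iff₀ hδ] at this; linarith
  set k : ℕ := ⌊δ * n⌋₊ with hk
  have hk1 : (k : ℝ) ≤ δ * n := Nat.floor_le (by positivity)
  have hk2 : δ * n < k + 1 := Nat.lt_floor_add_one _
  have hqk : q ≤ k := by
    have : (q : ℝ) ≤ k := by linarith
    exact_mod_cast this
  have hR := hN₀ n m k (by omega) hm1 hm2 hk1 hk2.le
  have hA := attach_iter n m q k k le_rfl
  have hA2 : (lowSet n m q).ncard * ((n + k).factorial * n ^ k) ≤
      (planarSet (n + k) (m + k)).ncard * ((3 * k) ^ k * n.factorial) := by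
    refine hA.trans ?_
    have h1 := lowSet_le_planarSet (n + k) (m + k) (q + 2 * k)
    have h2 : q + 2 * k ≤ 3 * k := by omega
    gcongr
  have hA3 : ((lowSet n m q).ncard : ℝ) * (((n + k).factorial : ℝ) * n ^ k) ≤
      (planarSet (n + k) (m + k)).ncard * ((3 * k) ^ k * n.factorial) := by exact_mod_cast hA2
  have hF : 0 < ((n + k).factorial : ℝ) := by exact_mod_cast Nat.factorial_pos _
  have hf : 0 < (n.factorial : ℝ) := by exact_mod_cast Nat.factorial_pos _
  have hnk : 0 < (n : ℝ) ^ k := by positivity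
  have h3k : (3 * (k : ℝ)) ^ k ≤ Real.exp (-((K + 3) * k)) * (n : ℝ) ^ k := by
    calc (3 * (k : ℝ)) ^ k ≤ (Real.exp (-(K + 3)) * n) ^ k := by
          refine pow_le_pow_left₀ (by positivity) ?_ _
          calc 3 * (k : ℝ) ≤ 3 * δ * n := by linarith
            _ ≤ _ := by gcongr
      _ = _ := by
          rw [mul_pow, ← Real.exp_nat_mul]; congr 2; ring
  rw [div_le_iff₀ hF] at hR
  have hR' : ((planarSet (n + k) (m + k)).ncard : ℝ) * n.factorial ≤
      Real.exp (K * δ * n) * (planarSet n m).ncard * (n + k).factorial := by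
    calc _ ≤ (Real.exp (K * δ * n) * ((planarSet n m).ncard / n.factorial) * (n + k).factorial) *
          n.factorial := by gcongr
      _ = _ := by field_simp
  have : ((lowSet n m q).ncard : ℝ) * (((n + k).factorial : ℝ) * n ^ k) ≤
      (Real.exp (K * δ * n) * Real.exp (-((K + 3) * k)) * (planarSet n m).ncard) *
        (((n + k).factorial : ℝ) * n ^ k) := by
    calc _ ≤ _ := hA3
      _ = ((planarSet (n + k) (m + k)).ncard * n.factorial) * (3 * (k : ℝ)) ^ k := by ring
      _ ≤ (Real.exp (K * δ * n) * (planarSet n m).ncard * (n + k).factorial) *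
          (Real.exp (-((K + 3) * k)) * (n : ℝ) ^ k) := by gcongr
      _ = _ := by ring
  have := le_of_mul_le_mul_right this (by positivity)
  refine this.trans ?_
  gcongr
  rw [← Real.exp_add, Real.exp_le_exp]
  have : (K + 3) * (δ * n - 1) ≤ (K + 3) * k := by gcongr; linarith
  linarith

/-! ### Local moves for sparse graphs -/

/-- `G` without the edge `ab`. -/
def cut {V : Type*} (G : SimpleGraph V) (a b : V) : SimpleGraph V where
  Adj x y := G.Adj x y ∧ ¬ (x = a ∧ y = b) ∧ ¬ (x = b ∧ y = a)
  symm := ⟨fun _ _ h => ⟨h.1.symm, fun e => h.2.2 ⟨e.2, e.1⟩, fun e => h.2.1 ⟨e.2, e.1⟩⟩⟩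
  loopless := ⟨fun x h => G.loopless.irrefl x h.1⟩

/-- `G` with all edges at `v` removed. -/
def del {V : Type*} (G : SimpleGraph V) (v : V) : SimpleGraph V where
  Adj x y := G.Adj x y ∧ x ≠ v ∧ y ≠ v
  symm := ⟨fun _ _ h => ⟨h.1.symm, h.2.2, h.2.1⟩⟩
  loopless := ⟨fun x h => G.loopless.irrefl x h.1⟩

theorem cut_le {V : Type*} (G : SimpleGraph V) (a b : V) : cut G a b ≤ G := fun _ _ h => h.1

theorem cut_not_adj {V : Type*} (G : SimpleGraph V) (a b : V) : ¬ (cut G a b).Adj a b :=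
  fun h => h.2.1 ⟨rfl, rfl⟩

theorem cut_sup {V : Type*} {G : SimpleGraph V} {a b : V} (h : G.Adj a b) :
    cut G a b ⊔ edge a b = G := by
  ext x y
  rw [sup_adj, edge_adj]
  change (G.Adj x y ∧ ¬ (x = a ∧ y = b) ∧ ¬ (x = b ∧ y = a)) ∨ _ ↔ _
  constructor
  · rintro (h1 | ⟨⟨rfl, rfl⟩ | ⟨rfl, rfl⟩, -⟩)
    · exact h1.1
    · exact h
    · exact h.symm
  · intro h1
    have := h1.ne
    tauto

theorem edgeCount_cut {V : Type*} [Finite V] {G : SimpleGraph V} {a b : V} (h : G.Adj a b) :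
    edgeCount (cut G a b) + 1 = edgeCount G := by
  rw [← edgeCount_sup_edge h.ne (cut_not_adj G a b), cut_sup h]

theorem cut_inj {V : Type*} {G G' : SimpleGraph V} {a b : V} (h : G.Adj a b) (h' : G'.Adj a b)
    (e : cut G a b = cut G' a b) : G = G' := by
  rw [← cut_sup h, ← cut_sup h', e]

theorem nbr_cut {V : Type*} {G : SimpleGraph V} {a b w : V} (h1 : w ≠ a) (h2 : w ≠ b) :
    (cut G a b).neighborSet w = G.neighborSet w := by
  ext y
  change (G.Adj w y ∧ ¬ (w = a ∧ y = b) ∧ ¬ (w = b ∧ y = a)) ↔ G.Adj w y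
  tauto

theorem nbr_pend {V : Type*} {L : SimpleGraph V} {v x : V} (h : ∀ y, ¬ L.Adj v y) (hx : v ≠ x) :
    (L ⊔ edge v x).neighborSet v = {x} := by
  ext y
  simp only [mem_neighborSet, sup_adj, edge_adj, Set.mem_singleton_iff]
  constructor
  · rintro (h1 | ⟨⟨-, h1⟩ | ⟨h1, -⟩, -⟩)
    · exact absurd h1 (h y)
    · exact h1
    · exact absurd h1 hx
  · rintro rfl
    simp [hx]

theorem ncard_four_le {α : Type*} (a b c d : α) : ({a, b, c, d} : Set α).ncard ≤ 4 := by
  have h1 := Set.ncard_insert_le a {b, c, d}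
  have h2 := Set.ncard_insert_le b {c, d}
  have h3 := ncard_pair_le c d
  omega

theorem ncard_ne {n : ℕ} (v : Fin n) : n - 1 ≤ {x : Fin n | x ≠ v}.ncard := by
  have : {x : Fin n | x ≠ v} = Set.univ \ {v} := by ext; simp
  rw [this, Set.ncard_sdiff_singleton_of_mem (Set.mem_univ _), Set.ncard_univ]
  simp

theorem ncard_ne3 {n : ℕ} (v u w : Fin n) : n - 3 ≤ {x : Fin n | x ≠ v ∧ x ≠ u ∧ x ≠ w}.ncard := by
  have : {x : Fin n | x ≠ v ∧ x ≠ u ∧ x ≠ w} = ({v, u, w} : Set (Fin n))ᶜ := by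
    ext; simp
  have h := Set.ncard_add_ncard_compl ({v, u, w} : Set (Fin n))
  rw [Nat.card_eq_fintype_card, Fintype.card_fin] at h
  have h1 := Set.ncard_insert_le v {u, w}
  have h2 := ncard_pair_le u w
  rw [this]
  omega

/-- The isolated vertices. -/
def iso {V : Type*} (G : SimpleGraph V) : Set V := {v | ∀ y, ¬ G.Adj v y}

/-- Vertices of degree two whose neighbours are not adjacent. -/
def pathMid {V : Type*} (G : SimpleGraph V) : Set V :=
  {v | ∃ u w, u ≠ w ∧ G.neighborSet v = {u, w} ∧ ¬ G.Adj u w}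

/-- Vertices of triangle components. -/
def triComp {V : Type*} (G : SimpleGraph V) : Set V :=
  {v | ∃ u w, G.neighborSet v = {u, w} ∧ G.neighborSet u = {v, w} ∧ G.neighborSet w = {v, u}}

/-- Move 1: delete an arbitrary edge `ab` and attach an isolated vertex `v` to an arbitrary `x`. -/
theorem move_iso (n m q a : ℕ) :
    {G ∈ lowSet n m q | a ≤ (iso G).ncard}.ncard * (a * (n - 1) * (2 * m)) ≤
      (lowSet n m (q + 4)).ncard * ((q + 4) * (n * n)) := by
  refine double_count _
    (fun G => {p : Fin n × Fin n | p.1 ∈ iso G ∧ p.2 ∈ {x | x ≠ p.1}} ×ˢ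
      {p : Fin n × Fin n | G.Adj p.1 p.2}) _
    (fun H => leaves H ×ˢ (Set.univ : Set (Fin n × Fin n)))
    (fun G p => cut G p.2.1 p.2.2 ⊔ edge p.1.1 p.1.2) (fun _ p => (p.1.1, p.2)) _ _ ?_ ?_ ?_ ?_
  · rintro G ⟨⟨-, hm, -⟩, ha⟩
    rw [Set.ncard_prod]
    have h1 := ncard_dep_ge (iso G) (fun v => {x : Fin n | x ≠ v}) (n - 1) (fun v _ => ncard_ne v)
    have h2 := dc_eq G
    rw [hm] at h2
    refine Nat.mul_le_mul ((Nat.mul_le_mul_right _ ha).trans h1) h2.ge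
  · rintro H ⟨-, -, hl⟩
    rw [Set.ncard_prod, Set.ncard_univ, Nat.card_prod, Nat.card_eq_fintype_card, Fintype.card_fin]
    exact Nat.mul_le_mul_right _ hl
  · rintro G ⟨⟨hp, hm, hl⟩, -⟩ ⟨⟨v, x⟩, ⟨b, c⟩⟩ ⟨⟨hv, hx⟩, hbc⟩
    replace hv : ∀ y, ¬ G.Adj v y := hv
    replace hx : x ≠ v := hx
    replace hbc : G.Adj b c := hbc
    have hv' : ∀ y, ¬ (cut G b c).Adj v y := fun y h => hv y h.1
    refine ⟨⟨?_, ?_, ?_⟩, ?_, Set.mem_univ _⟩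
    · exact planar_bridge (planar_mono hp (cut_le _ _ _)) (not_reachable_of_isolated hv' hx.symm)
    · rw [edgeCount_sup_edge hx.symm (hv' x), edgeCount_cut hbc, hm]
    · refine (leaves_le_add (G := G) {v, x, b, c} 4 (ncard_four_le _ _ _ _) ?_).trans (by omega)
      intro w hw
      simp only [Set.mem_insert_iff, Set.mem_singleton_iff, not_or] at hw
      rw [nbr_sup_edge hw.1 hw.2.1, nbr_cut hw.2.2.1 hw.2.2.2]
    · change ((cut G b c ⊔ edge v x).neighborSet v).ncard = 1
      rw [nbr_pend hv' hx.symm, Set.ncard_singleton]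
  · rintro G - ⟨⟨v, x⟩, ⟨b, c⟩⟩ ⟨⟨hv, hx⟩, hbc⟩ G' - ⟨⟨v', x'⟩, ⟨b', c'⟩⟩ ⟨⟨hv', hx'⟩, hbc'⟩ he hc
    simp only [Prod.mk.injEq] at hc
    obtain ⟨rfl, rfl, rfl⟩ := hc
    replace hv : ∀ y, ¬ G.Adj v y := hv
    replace hx : x ≠ v := hx
    replace hv' : ∀ y, ¬ G'.Adj v y := hv'
    replace hx' : x' ≠ v := hx'
    replace he : cut G b c ⊔ edge v x = cut G' b c ⊔ edge v x' := he
    have i1 : ∀ y, ¬ (cut G b c).Adj v y := fun y h => hv y h.1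
    have i2 : ∀ y, ¬ (cut G' b c).Adj v y := fun y h => hv' y h.1
    have h1 := nbr_pend i1 hx.symm
    rw [he, nbr_pend i2 hx'.symm, Set.singleton_eq_singleton_iff] at h1
    obtain rfl := h1
    exact ⟨cut_inj hbc hbc' (sup_edge_cancel (i1 _) (i2 _) he), rfl⟩

section
variable {V : Type*} {G : SimpleGraph V} {v u w : V}

theorem del_sup (h : G.neighborSet v = {u, w}) : del G v ⊔ edge v u ⊔ edge v w = G := by
  have hu : G.Adj v u := by change u ∈ G.neighborSet v; rw [h]; simp
  have hw : G.Adj v w := by change w ∈ G.neighborSet v; rw [h]; simp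
  have hn : ∀ y, G.Adj v y → y = u ∨ y = w := by
    intro y hy
    have : y ∈ G.neighborSet v := hy
    rw [h] at this; simpa using this
  ext x y
  simp only [sup_adj, edge_adj]
  change ((G.Adj x y ∧ x ≠ v ∧ y ≠ v) ∨ _) ∨ _ ↔ _
  constructor
  · rintro ((h1 | ⟨⟨rfl, rfl⟩ | ⟨rfl, rfl⟩, -⟩) | ⟨⟨rfl, rfl⟩ | ⟨rfl, rfl⟩, -⟩)
    · exact h1.1
    · exact hu
    · exact hu.symm
    · exact hw
    · exact hw.symm
  · intro h1
    have hne := h1.ne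
    by_cases hx : x = v
    · subst hx
      rcases hn y h1 with rfl | rfl
      · exact Or.inl (Or.inr ⟨Or.inl ⟨rfl, rfl⟩, hne⟩)
      · exact Or.inr ⟨Or.inl ⟨rfl, rfl⟩, hne⟩
    by_cases hy : y = v
    · subst hy
      rcases hn x h1.symm with rfl | rfl
      · exact Or.inl (Or.inr ⟨Or.inr ⟨rfl, rfl⟩, hne⟩)
      · exact Or.inr ⟨Or.inr ⟨rfl, rfl⟩, hne⟩
    exact Or.inl (Or.inl ⟨h1, hx, hy⟩)

theorem contr_eq (huw : u ≠ w) (h : G.neighborSet v = {u, w}) :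
    contr G u v = del G v ⊔ edge u w := by
  have hu : G.Adj v u := by change u ∈ G.neighborSet v; rw [h]; simp
  have hw : G.Adj v w := by change w ∈ G.neighborSet v; rw [h]; simp
  have hn : ∀ y, G.Adj v y ↔ y = u ∨ y = w := by
    intro y
    have : y ∈ G.neighborSet v ↔ y ∈ ({u, w} : Set V) := by rw [h]
    simpa using this
  ext x y
  rw [contr_adj G hu.ne.symm, sup_adj, edge_adj, hn, hn]
  change _ ↔ (G.Adj x y ∧ x ≠ v ∧ y ≠ v) ∨ _
  have := hu.ne
  have := hw.ne
  constructor
  · rintro ⟨hne, hx, hy, h1 | ⟨rfl, h1⟩ | ⟨rfl, h1⟩⟩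
    · exact Or.inl ⟨h1, hx, hy⟩
    · rcases h1 with rfl | rfl
      · exact absurd rfl hne
      · exact Or.inr ⟨Or.inl ⟨rfl, rfl⟩, hne⟩
    · rcases h1 with rfl | rfl
      · exact absurd rfl hne
      · exact Or.inr ⟨Or.inr ⟨rfl, rfl⟩, hne⟩
  · rintro (⟨h1, h2, h3⟩ | ⟨⟨rfl, rfl⟩ | ⟨rfl, rfl⟩, hne⟩)
    · exact ⟨h1.ne, h2, h3, Or.inl h1⟩
    · exact ⟨hne, hu.ne.symm, hw.ne.symm, Or.inr (Or.inl ⟨rfl, Or.inr rfl⟩)⟩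
    · exact ⟨hne, hw.ne.symm, hu.ne.symm, Or.inr (Or.inr ⟨rfl, Or.inr rfl⟩)⟩

end

/-- Move 2: suppress a vertex `v` of degree two with non-adjacent neighbours `u, w` and attach it to
an arbitrary `x`. -/
theorem move_path (n m q a : ℕ) :
    {G ∈ lowSet n m q | a ≤ (pathMid G).ncard}.ncard * (a * (n - 1)) ≤
      (lowSet n m (q + 4)).ncard * ((q + 4) * (2 * m)) := by
  have hch : ∀ (G : SimpleGraph (Fin n)) (v : Fin n), ∃ p : Fin n × Fin n, v ∈ pathMid G →
      p.1 ≠ p.2 ∧ G.neighborSet v = {p.1, p.2} ∧ ¬ G.Adj p.1 p.2 := by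
    intro G v
    by_cases hv : v ∈ pathMid G
    · obtain ⟨u, w, h⟩ := hv
      exact ⟨(u, w), fun _ => h⟩
    · exact ⟨(v, v), fun h => absurd h hv⟩
  choose f hf using hch
  refine double_count _
    (fun G => {p : Fin n × Fin n | p.1 ∈ pathMid G ∧ p.2 ∈ {x | x ≠ p.1}}) _
    (fun H => leaves H ×ˢ {p : Fin n × Fin n | H.Adj p.1 p.2})
    (fun G p => del G p.1 ⊔ edge (f G p.1).1 (f G p.1).2 ⊔ edge p.1 p.2)
    (fun G p => (p.1, f G p.1)) _ _ ?_ ?_ ?_ ?_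
  · rintro G ⟨-, ha⟩
    exact (Nat.mul_le_mul_right _ ha).trans
      (ncard_dep_ge (pathMid G) (fun v => {x : Fin n | x ≠ v}) (n - 1) (fun v _ => ncard_ne v))
  · rintro H ⟨-, hm, hl⟩
    have h2 := dc_eq H
    rw [hm] at h2
    rw [Set.ncard_prod]
    exact Nat.mul_le_mul hl h2.le
  · rintro G ⟨⟨hp, hm, hl⟩, -⟩ ⟨v, x⟩ ⟨hv, hx⟩
    replace hx : x ≠ v := hx
    obtain ⟨h1, h2, h3⟩ := hf G v hv
    dsimp only
    generalize f G v = p at h1 h2 h3 ⊢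
    obtain ⟨u, w⟩ := p
    dsimp only at h1 h2 h3 ⊢
    have hu : G.Adj v u := by change u ∈ G.neighborSet v; rw [h2]; simp
    have hw : G.Adj v w := by change w ∈ G.neighborSet v; rw [h2]; simp
    have hiso : ∀ y, ¬ (del G v ⊔ edge u w).Adj v y := by
      intro y hy
      rw [sup_adj, edge_adj] at hy
      rcases hy with hy | ⟨⟨hy, -⟩ | ⟨hy, -⟩, -⟩
      · exact hy.2.1 rfl
      · exact hu.ne hy
      · exact hw.ne hy
    have hd : edgeCount (del G v) + 2 = m := by
      have e1 : edgeCount (del G v ⊔ edge v u) = edgeCount (del G v) + 1 :=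
        edgeCount_sup_edge hu.ne (fun h => h.2.1 rfl)
      have e2 : edgeCount (del G v ⊔ edge v u ⊔ edge v w) = edgeCount (del G v ⊔ edge v u) + 1 := by
        refine edgeCount_sup_edge hw.ne ?_
        rw [sup_adj, edge_adj]
        rintro (h | ⟨⟨-, h⟩ | ⟨h, -⟩, -⟩)
        · exact h.2.1 rfl
        · exact h1 h.symm
        · exact hu.ne h
      rw [del_sup h2, hm] at e2
      omega
    refine ⟨⟨?_, ?_, ?_⟩, ?_, ?_⟩
    · refine planar_bridge ?_ (not_reachable_of_isolated hiso hx.symm)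
      rw [← contr_eq h1 h2]
      exact planar_contr hp hu.symm
    · rw [edgeCount_sup_edge hx.symm (hiso x), edgeCount_sup_edge h1 (fun h : (del G v).Adj u w => h3 h.1)]
      omega
    · refine (leaves_le_add (G := G) {v, x, u, w} 4 (ncard_four_le _ _ _ _) ?_).trans (by omega)
      intro z hz
      simp only [Set.mem_insert_iff, Set.mem_singleton_iff, not_or] at hz
      rw [nbr_sup_edge hz.1 hz.2.1, nbr_sup_edge hz.2.2.1 hz.2.2.2]
      ext y
      change G.Adj z y ↔ G.Adj z y ∧ z ≠ v ∧ y ≠ v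
      refine ⟨fun h => ⟨h, hz.1, ?_⟩, fun h => h.1⟩
      rintro rfl
      have : z ∈ G.neighborSet y := h.symm
      rw [h2] at this
      rcases this with h | h
      · exact hz.2.2.1 h
      · exact hz.2.2.2 h
    · change ((del G v ⊔ edge u w ⊔ edge v x).neighborSet v).ncard = 1
      rw [nbr_pend hiso hx.symm, Set.ncard_singleton]
    · change (del G v ⊔ edge u w ⊔ edge v x).Adj u w
      rw [sup_adj, sup_adj, edge_adj]
      exact Or.inl (Or.inr ⟨Or.inl ⟨rfl, rfl⟩, h1⟩)
  · rintro G - ⟨v, x⟩ ⟨hv, hx⟩ G' - ⟨v', x'⟩ ⟨hv', hx'⟩ he hc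
    replace hx : x ≠ v := hx
    replace hx' : x' ≠ v' := hx'
    obtain ⟨h1, h2, h3⟩ := hf G v hv
    obtain ⟨h1', h2', h3'⟩ := hf G' v' hv'
    dsimp only at he hc
    rw [Prod.mk.injEq] at hc
    obtain ⟨rfl, hc⟩ := hc
    rw [← hc] at h1' h2' h3' he
    generalize f G v = p at *
    obtain ⟨u, w⟩ := p
    dsimp only at *
    have hu : G.Adj v u := by change u ∈ G.neighborSet v; rw [h2]; simp
    have hw : G.Adj v w := by change w ∈ G.neighborSet v; rw [h2]; simp
    have hiso : ∀ (L : SimpleGraph (Fin n)) (y), ¬ (del L v ⊔ edge u w).Adj v y := by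
      intro L y hy
      rw [sup_adj, edge_adj] at hy
      rcases hy with hy | ⟨⟨hy, -⟩ | ⟨hy, -⟩, -⟩
      · exact hy.2.1 rfl
      · exact hu.ne hy
      · exact hw.ne hy
    have hh := nbr_pend (hiso G) hx.symm
    rw [he, nbr_pend (hiso G') hx'.symm, Set.singleton_eq_singleton_iff] at hh
    obtain rfl := hh
    have e1 := sup_edge_cancel (hiso G _) (hiso G' _) he
    have e2 := sup_edge_cancel (fun h : (del G v).Adj u w => h3 h.1)
      (fun h : (del G' v).Adj u w => h3' h.1) e1
    exact ⟨by rw [← del_sup h2, ← del_sup h2', e2], rfl⟩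

theorem tri_not_reachable {V : Type*} {G : SimpleGraph V} {v u w x : V}
    (h1 : G.neighborSet v = {u, w}) (h2 : G.neighborSet u = {v, w}) (h3 : G.neighborSet w = {v, u})
    (hx : x ≠ v ∧ x ≠ u ∧ x ≠ w) : ¬ G.Reachable v x := by
  have key : ∀ a b, G.Reachable a b → (a = v ∨ a = u ∨ a = w) → (b = v ∨ b = u ∨ b = w) := by
    rintro a b ⟨p⟩
    induction p with
    | nil => exact id
    | @cons a c b hac _ ih =>
      intro ha
      apply ih
      have hc : c ∈ G.neighborSet a := hac
      rcases ha with rfl | rfl | rfl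
      · rw [h1] at hc; rcases hc with h | h
        · exact Or.inr (Or.inl h)
        · exact Or.inr (Or.inr h)
      · rw [h2] at hc; rcases hc with h | h
        · exact Or.inl h
        · exact Or.inr (Or.inr h)
      · rw [h3] at hc; rcases hc with h | h
        · exact Or.inl h
        · exact Or.inr (Or.inl h)
  intro h
  rcases key v x h (Or.inl rfl) with h | h | h
  · exact hx.1 h
  · exact hx.2.1 h
  · exact hx.2.2 h

/-- Neighbourhoods after Move 3. -/
theorem tri_nbr {V : Type*} {G : SimpleGraph V} {v u w x : V}
    (h1 : G.neighborSet v = {u, w}) (h2 : G.neighborSet u = {v, w}) (h3 : G.neighborSet w = {v, u})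
    (hx : x ≠ v ∧ x ≠ u ∧ x ≠ w) :
    (cut G u w ⊔ edge v x).neighborSet u = {v} ∧ (cut G u w ⊔ edge v x).neighborSet w = {v} ∧
      (cut G u w ⊔ edge v x).neighborSet v = {u, w, x} := by
  have hvu : G.Adj v u := by change u ∈ G.neighborSet v; rw [h1]; simp
  have hvw : G.Adj v w := by change w ∈ G.neighborSet v; rw [h1]; simp
  have huw : G.Adj u w := by change w ∈ G.neighborSet u; rw [h2]; simp
  have n1 : ∀ y, G.Adj v y ↔ y = u ∨ y = w := by
    intro y
    have : y ∈ G.neighborSet v ↔ y ∈ ({u, w} : Set V) := by rw [h1]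
    simpa using this
  have n2 : ∀ y, G.Adj u y ↔ y = v ∨ y = w := by
    intro y
    have : y ∈ G.neighborSet u ↔ y ∈ ({v, w} : Set V) := by rw [h2]
    simpa using this
  have n3 : ∀ y, G.Adj w y ↔ y = v ∨ y = u := by
    intro y
    have : y ∈ G.neighborSet w ↔ y ∈ ({v, u} : Set V) := by rw [h3]
    simpa using this
  have a1 := hvu.ne
  have a2 := hvw.ne
  have a3 := huw.ne
  refine ⟨?_, ?_, ?_⟩
  · rw [nbr_sup_edge a1.symm hx.2.1.symm]
    ext y
    change (G.Adj u y ∧ ¬ (u = u ∧ y = w) ∧ ¬ (u = w ∧ y = u)) ↔ y = v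
    rw [n2]
    constructor
    · tauto
    · rintro rfl; tauto
  · rw [nbr_sup_edge a2.symm hx.2.2.symm]
    ext y
    change (G.Adj w y ∧ ¬ (w = u ∧ y = w) ∧ ¬ (w = w ∧ y = u)) ↔ y = v
    rw [n3]
    constructor
    · tauto
    · rintro rfl; tauto
  · ext y
    rw [mem_neighborSet, sup_adj, edge_adj]
    change (G.Adj v y ∧ ¬ (v = u ∧ y = w) ∧ ¬ (v = w ∧ y = u)) ∨ _ ↔ y = u ∨ y = w ∨ y = x
    rw [n1]
    constructor
    · tauto
    · rintro (rfl | rfl | rfl)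
      · tauto
      · tauto
      · exact Or.inr ⟨Or.inl ⟨rfl, rfl⟩, hx.1.symm⟩

/-- Move 3: in a triangle component `v u w`, delete `uw` and join `v` to another component. -/
theorem move_tri (n m q a : ℕ) :
    {G ∈ lowSet n m q | a ≤ (triComp G).ncard}.ncard * (a * (n - 3)) ≤
      (lowSet n m (q + 4)).ncard * ((q + 4) * (q + 4)) := by
  have hch : ∀ (G : SimpleGraph (Fin n)) (v : Fin n), ∃ p : Fin n × Fin n, v ∈ triComp G →
      G.neighborSet v = {p.1, p.2} ∧ G.neighborSet p.1 = {v, p.2} ∧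
        G.neighborSet p.2 = {v, p.1} := by
    intro G v
    by_cases hv : v ∈ triComp G
    · obtain ⟨u, w, h⟩ := hv
      exact ⟨(u, w), fun _ => h⟩
    · exact ⟨(v, v), fun h => absurd h hv⟩
  choose f hf using hch
  refine double_count _
    (fun G => {p : Fin n × Fin n | p.1 ∈ triComp G ∧
      p.2 ∈ {x | x ≠ p.1 ∧ x ≠ (f G p.1).1 ∧ x ≠ (f G p.1).2}}) _
    (fun H => leaves H ×ˢ leaves H)
    (fun G p => cut G (f G p.1).1 (f G p.1).2 ⊔ edge p.1 p.2)
    (fun G p => f G p.1) _ _ ?_ ?_ ?_ ?_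
  · rintro G ⟨-, ha⟩
    exact (Nat.mul_le_mul_right _ ha).trans
      (ncard_dep_ge (triComp G) (fun v => {x : Fin n | x ≠ v ∧ x ≠ (f G v).1 ∧ x ≠ (f G v).2}) (n - 3)
        (fun v _ => ncard_ne3 v _ _))
  · rintro H ⟨-, hm, hl⟩
    rw [Set.ncard_prod]
    exact Nat.mul_le_mul hl hl
  · rintro G ⟨⟨hp, hm, hl⟩, -⟩ ⟨v, x⟩ ⟨hv, hx⟩
    obtain ⟨h1, h2, h3⟩ := hf G v hv
    dsimp only at hx ⊢
    generalize f G v = p at *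
    obtain ⟨u, w⟩ := p
    dsimp only at *
    replace hx : x ≠ v ∧ x ≠ u ∧ x ≠ w := hx
    obtain ⟨t1, t2, t3⟩ := tri_nbr h1 h2 h3 hx
    have huw : G.Adj u w := by change w ∈ G.neighborSet u; rw [h2]; simp
    have hnr : ¬ (cut G u w).Reachable v x := fun h =>
      tri_not_reachable h1 h2 h3 hx (h.mono (cut_le _ _ _))
    refine ⟨⟨?_, ?_, ?_⟩, ?_, ?_⟩
    · exact planar_bridge (planar_mono hp (cut_le _ _ _)) hnr
    · rw [edgeCount_sup_edge hx.1.symm (fun h => hnr h.reachable), edgeCount_cut huw, hm]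
    · refine (leaves_le_add (G := G) {v, x, u, w} 4 (ncard_four_le _ _ _ _) ?_).trans (by omega)
      intro z hz
      simp only [Set.mem_insert_iff, Set.mem_singleton_iff, not_or] at hz
      rw [nbr_sup_edge hz.1 hz.2.1, nbr_cut hz.2.2.1 hz.2.2.2]
    · change ((cut G u w ⊔ edge v x).neighborSet u).ncard = 1
      rw [t1, Set.ncard_singleton]
    · change ((cut G u w ⊔ edge v x).neighborSet w).ncard = 1
      rw [t2, Set.ncard_singleton]
  · rintro G - ⟨v, x⟩ ⟨hv, hx⟩ G' - ⟨v', x'⟩ ⟨hv', hx'⟩ he hc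
    obtain ⟨h1, h2, h3⟩ := hf G v hv
    obtain ⟨h1', h2', h3'⟩ := hf G' v' hv'
    dsimp only at he hc hx hx'
    rw [← hc] at h1' h2' h3' he hx'
    generalize f G v = p at *
    obtain ⟨u, w⟩ := p
    dsimp only at *
    replace hx : x ≠ v ∧ x ≠ u ∧ x ≠ w := hx
    replace hx' : x' ≠ v' ∧ x' ≠ u ∧ x' ≠ w := hx'
    obtain ⟨t1, t2, t3⟩ := tri_nbr h1 h2 h3 hx
    obtain ⟨t1', t2', t3'⟩ := tri_nbr h1' h2' h3' hx'
    rw [he, t1', Set.singleton_eq_singleton_iff] at t1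
    subst t1
    rw [he, t3'] at t3
    have hxx : x = x' := by
      have : x ∈ ({u, w, x'} : Set (Fin n)) := by rw [t3]; simp
      simp only [Set.mem_insert_iff, Set.mem_singleton_iff] at this
      tauto
    subst hxx
    have huw : G.Adj u w := by change w ∈ G.neighborSet u; rw [h2]; simp
    have huw' : G'.Adj u w := by change w ∈ G'.neighborSet u; rw [h2']; simp
    refine ⟨cut_inj huw huw' (sup_edge_cancel (fun h => ?_) (fun h => ?_) he), rfl⟩
    · exact tri_not_reachable h1 h2 h3 hx (h.reachable.mono (cut_le _ _ _))
    · exact tri_not_reachable h1' h2' h3' hx' (h.reachable.mono (cut_le _ _ _))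

/-! ### Sparse graphs: one of the local moves always applies -/

/-- Vertices of degree two all of whose neighbours have degree two. -/
def deepTwo {V : Type*} (G : SimpleGraph V) : Set V :=
  {v | vertexDegree G v = 2 ∧ ∀ u, G.Adj v u → vertexDegree G u = 2}

theorem deepTwo_subset {V : Type*} (G : SimpleGraph V) : deepTwo G ⊆ pathMid G ∪ triComp G := by
  have key : ∀ a b c : V, G.Adj a b → G.Adj a c → b ≠ c → vertexDegree G a = 2 →
      G.neighborSet a = {b, c} := by
    intro a b c hb hc hne h2
    obtain ⟨x, y, hxy, e⟩ := Set.ncard_eq_two.mp h2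
    have h1 : b ∈ G.neighborSet a := hb
    have h3 : c ∈ G.neighborSet a := hc
    rw [e] at h1 h3 ⊢
    rcases h1 with rfl | h1 <;> rcases h3 with rfl | h3
    · exact absurd rfl hne
    · rw [Set.mem_singleton_iff.mp h3]
    · rw [Set.mem_singleton_iff.mp h1, Set.pair_comm]
    · exact absurd ((Set.mem_singleton_iff.mp h1).trans (Set.mem_singleton_iff.mp h3).symm) hne
  rintro v ⟨h2, h⟩
  obtain ⟨u, w, hne, e⟩ := Set.ncard_eq_two.mp h2
  have hu : G.Adj v u := by change u ∈ G.neighborSet v; rw [e]; simp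
  have hw : G.Adj v w := by change w ∈ G.neighborSet v; rw [e]; simp
  by_cases huw : G.Adj u w
  · exact Or.inr ⟨u, w, e, key u v w hu.symm huw hw.ne (h u hu),
      key w v u hw.symm huw.symm hu.ne (h w hw)⟩
  · exact Or.inl ⟨u, w, hne, e, huw⟩

/-- A vertex outside `deepTwo G` is, or has a neighbour, of degree different from two; these are
few because `1 + d ≤ 4 (d - 2) + 9 [d = 0] + 6 [d = 1]` for `d ≠ 2`. -/
theorem compl_deepTwo_le {n : ℕ} (G : SimpleGraph (Fin n)) :
    (((deepTwo G)ᶜ).ncard : ℤ) + 8 * n ≤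
      8 * edgeCount G + 9 * (iso G).ncard + 6 * (leaves G).ncard := by
  classical
  have h1 : ((deepTwo G)ᶜ).ncard ≤
      ∑ z : Fin n, (if vertexDegree G z = 2 then 0 else 1 + vertexDegree G z) := by
    have hsub : (deepTwo G)ᶜ ⊆ ((Finset.univ.biUnion fun z : Fin n =>
        (if vertexDegree G z = 2 then (∅ : Finset (Fin n))
          else (insert z (G.neighborSet z)).toFinset) : Finset (Fin n)) : Set (Fin n)) := by
      intro v hv
      rw [Finset.mem_coe, Finset.mem_biUnion]
      by_cases h2 : vertexDegree G v = 2
      · have : ∃ u, G.Adj v u ∧ vertexDegree G u ≠ 2 := by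
          by_contra hcon
          push Not at hcon
          exact hv ⟨h2, hcon⟩
        obtain ⟨u, hu, hu2⟩ := this
        refine ⟨u, Finset.mem_univ _, ?_⟩
        rw [if_neg hu2, Set.mem_toFinset]
        exact Or.inr hu.symm
      · refine ⟨v, Finset.mem_univ _, ?_⟩
        rw [if_neg h2, Set.mem_toFinset]
        exact Or.inl rfl
    refine (Set.ncard_le_ncard hsub).trans ?_
    rw [Set.ncard_coe_finset]
    refine Finset.card_biUnion_le.trans (Finset.sum_le_sum fun z _ => ?_)
    split_ifs
    · simp
    · rw [← Set.ncard_eq_toFinset_card']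
      have := Set.ncard_insert_le z (G.neighborSet z)
      rw [vertexDegree]
      omega
  have hdeg0 : ∀ z, vertexDegree G z = 0 ↔ z ∈ iso G := by
    intro z
    rw [vertexDegree, Set.ncard_eq_zero, Set.eq_empty_iff_forall_notMem]
    rfl
  have h2 : ∑ z : Fin n, ((if vertexDegree G z = 2 then 0 else 1 + vertexDegree G z : ℕ) : ℤ) ≤
      ∑ z : Fin n, (4 * ((vertexDegree G z : ℤ) - 2) + 9 * (if z ∈ iso G then 1 else 0) +
        6 * (if z ∈ leaves G then 1 else 0)) := by
    refine Finset.sum_le_sum fun z _ => ?_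
    have hl : z ∈ leaves G ↔ vertexDegree G z = 1 := Iff.rfl
    simp only [← hdeg0, hl]
    split_ifs <;> push_cast <;> omega
  have hc : ∀ S : Set (Fin n), ∑ z : Fin n, (if z ∈ S then (1 : ℤ) else 0) = S.ncard := by
    intro S
    rw [Set.ncard_eq_toFinset_card', ← Finset.sum_filter, Finset.sum_const, nsmul_one]
    congr 2
    ext x; simp
  have h3 : ∑ z : Fin n, (vertexDegree G z : ℤ) = 2 * edgeCount G := by
    have := dc_eq_sum G
    rw [dc_eq] at this
    exact_mod_cast this.symm
  rw [Finset.sum_add_distrib, Finset.sum_add_distrib, ← Finset.mul_sum, ← Finset.mul_sum,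
    ← Finset.mul_sum, Finset.sum_sub_distrib, hc, hc, h3] at h2
  simp only [Finset.sum_const, Finset.card_univ, Fintype.card_fin, nsmul_eq_mul] at h2
  have h4 : (((deepTwo G)ᶜ).ncard : ℤ) ≤
      ∑ z : Fin n, ((if vertexDegree G z = 2 then 0 else 1 + vertexDegree G z : ℕ) : ℤ) := by
    exact_mod_cast h1
  linarith

/-- A sparse graph with few leaves has linearly many places to apply one of the three moves. -/
theorem some_move {n m : ℕ} {G : SimpleGraph (Fin n)} (hm : edgeCount G = m)
    (h1 : 100 * m ≤ 101 * n) (h2 : 100 * (leaves G).ncard ≤ n) :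
    n / 100 ≤ (iso G).ncard ∨ n / 4 ≤ (pathMid G).ncard ∨ n / 4 ≤ (triComp G).ncard := by
  by_contra hcon
  push Not at hcon
  obtain ⟨c1, c2, c3⟩ := hcon
  have k1 := compl_deepTwo_le G
  have k2 := Set.ncard_add_ncard_compl (deepTwo G)
  rw [Nat.card_eq_fintype_card, Fintype.card_fin] at k2
  have k3 := (Set.ncard_le_ncard (deepTwo_subset G)).trans (Set.ncard_union_le _ _)
  omega

/-- One round of switching: allowing four more leaves gains a factor of order `n / (q + 4)`. -/
theorem local_step (b : ℝ) (hb : 0 < b) : ∃ C : ℝ, 0 < C ∧ ∀ n m q : ℕ, 1000 ≤ n →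
    b * n ≤ m → 100 * m ≤ 101 * n → 100 * (q + 4) ≤ n →
    ((lowSet n m q).ncard : ℝ) * n ≤ C * (q + 4 : ℕ) * (lowSet n m (q + 4)).ncard := by
  refine ⟨200 / b + 40, by positivity, fun n m q hn hbm hm hq => ?_⟩
  have hfin : ∀ S : Set (SimpleGraph (Fin n)), S.Finite := fun S => Set.toFinite S
  have hsplit : (lowSet n m q).ncard ≤ {G ∈ lowSet n m q | n / 100 ≤ (iso G).ncard}.ncard +
      ({G ∈ lowSet n m q | n / 4 ≤ (pathMid G).ncard}.ncard +
      {G ∈ lowSet n m q | n / 4 ≤ (triComp G).ncard}.ncard) := by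
    refine le_trans (Set.ncard_le_ncard (t := {G ∈ lowSet n m q | n / 100 ≤ (iso G).ncard} ∪
      ({G ∈ lowSet n m q | n / 4 ≤ (pathMid G).ncard} ∪
      {G ∈ lowSet n m q | n / 4 ≤ (triComp G).ncard})) ?_ (hfin _)) ?_
    · intro G hG
      rcases some_move hG.2.1 hm (by have := hG.2.2; omega) with h | h | h
      · exact Or.inl ⟨hG, h⟩
      · exact Or.inr (Or.inl ⟨hG, h⟩)
      · exact Or.inr (Or.inr ⟨hG, h⟩)
    · exact (Set.ncard_union_le _ _).trans (Nat.add_le_add_left (Set.ncard_union_le _ _) _)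
  have e1 := move_iso n m q (n / 100)
  have e2 := move_path n m q (n / 4)
  have e3 := move_tri n m q (n / 4)
  generalize {G ∈ lowSet n m q | n / 100 ≤ (iso G).ncard}.ncard = x at *
  generalize {G ∈ lowSet n m q | n / 4 ≤ (pathMid G).ncard}.ncard = y at *
  generalize {G ∈ lowSet n m q | n / 4 ≤ (triComp G).ncard}.ncard = z at *
  generalize (lowSet n m q).ncard = A at *
  generalize (lowSet n m (q + 4)).ncard = D at *
  generalize hs : q + 4 = s at *
  have hnR : (1000 : ℝ) ≤ n := by exact_mod_cast hn
  have a1 : (n : ℝ) / 150 ≤ (n / 100 : ℕ) := by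
    have : n ≤ 150 * (n / 100) := by omega
    have : (n : ℝ) ≤ 150 * (n / 100 : ℕ) := by exact_mod_cast this
    linarith
  have a2 : (n : ℝ) / 5 ≤ (n / 4 : ℕ) := by
    have : n ≤ 5 * (n / 4) := by omega
    have : (n : ℝ) ≤ 5 * (n / 4 : ℕ) := by exact_mod_cast this
    linarith
  have a3 : (n : ℝ) * (9 / 10) ≤ (n - 1 : ℕ) := by
    rw [Nat.cast_sub (by omega)]; push_cast; linarith
  have a4 : (n : ℝ) * (9 / 10) ≤ (n - 3 : ℕ) := by
    rw [Nat.cast_sub (by omega)]; push_cast; linarith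
  have hmR : 100 * (m : ℝ) ≤ 101 * n := by exact_mod_cast hm
  have hsR : 100 * (s : ℝ) ≤ n := by exact_mod_cast hq
  have hn0 : (0 : ℝ) < n := by linarith
  have e1' : (x : ℝ) * ((n / 100 : ℕ) * (n - 1 : ℕ) * (2 * m)) ≤ D * (s * (n * n)) := by
    exact_mod_cast e1
  have e2' : (y : ℝ) * ((n / 4 : ℕ) * (n - 1 : ℕ)) ≤ D * (s * (2 * m)) := by exact_mod_cast e2
  have e3' : (z : ℝ) * ((n / 4 : ℕ) * (n - 3 : ℕ)) ≤ D * (s * s) := by exact_mod_cast e3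
  have f1 : (x : ℝ) * n ≤ 200 / b * s * D := by
    have l1 : (n : ℝ) / 150 * (n * (9 / 10)) * (2 * (b * n)) ≤
        (n / 100 : ℕ) * (n - 1 : ℕ) * (2 * m) := by gcongr
    have l2 := (mul_le_mul_of_nonneg_left l1 (Nat.cast_nonneg (α := ℝ) x)).trans e1'
    have l3 : (x : ℝ) * n * (b * 3 / 250) * (n * n) ≤ D * s * (n * n) := by linarith
    have l4 := le_of_mul_le_mul_right l3 (by positivity)
    have l5 : (x : ℝ) * n * b ≤ 200 * s * D := by
      have : (0 : ℝ) ≤ D * s := by positivity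
      linarith
    rw [div_mul_eq_mul_div, div_mul_eq_mul_div, le_div_iff₀ hb]
    exact l5
  have f2 : (y : ℝ) * n ≤ 20 * s * D := by
    have l1 : (n : ℝ) / 5 * (n * (9 / 10)) ≤ (n / 4 : ℕ) * (n - 1 : ℕ) := by gcongr
    have l2 := (mul_le_mul_of_nonneg_left l1 (Nat.cast_nonneg (α := ℝ) y)).trans e2'
    have l6 : (D : ℝ) * (s * (2 * m)) ≤ D * (s * (2 * (101 / 100 * n))) := by
      gcongr; linarith
    have l3 : (y : ℝ) * n * n ≤ (20 * s * D) * n := by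
      have : (0 : ℝ) ≤ D * s * n := by positivity
      linarith
    exact le_of_mul_le_mul_right l3 hn0
  have f3 : (z : ℝ) * n ≤ 20 * s * D := by
    have l1 : (n : ℝ) / 5 * (n * (9 / 10)) ≤ (n / 4 : ℕ) * (n - 3 : ℕ) := by gcongr
    have l2 := (mul_le_mul_of_nonneg_left l1 (Nat.cast_nonneg (α := ℝ) z)).trans e3'
    have l6 : (D : ℝ) * (s * s) ≤ D * (s * n) := by
      gcongr
      have : (0 : ℝ) ≤ s := by positivity
      linarith
    have l3 : (z : ℝ) * n * n ≤ (20 * s * D) * n := by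
      have : (0 : ℝ) ≤ D * s * n := by positivity
      linarith
    exact le_of_mul_le_mul_right l3 hn0
  have hs2 : (A : ℝ) ≤ x + (y + z) := by exact_mod_cast hsplit
  have := mul_le_mul_of_nonneg_right hs2 hn0.le
  linarith

/-- Iteration of `local_step` over `k` rounds. -/
theorem local_iter (b : ℝ) (hb : 0 < b) : ∃ C : ℝ, 0 < C ∧ ∀ n m q k : ℕ, 1000 ≤ n →
    b * n ≤ m → 100 * m ≤ 101 * n → 100 * (q + 4 * k) ≤ n →
    ((lowSet n m q).ncard : ℝ) ≤ (C * (q + 4 * k : ℕ) / n) ^ k * (planarSet n m).ncard := by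
  obtain ⟨C, hC, h⟩ := local_step b hb
  refine ⟨C, hC, fun n m q k hn hbm hm => ?_⟩
  have hn0 : (0 : ℝ) < n := by
    have : (1000 : ℝ) ≤ n := by exact_mod_cast hn
    linarith
  induction k generalizing q with
  | zero =>
    intro _
    simpa using lowSet_le_planarSet n m q
  | succ k ih =>
    intro hq
    have h1 := h n m q hn hbm hm (by omega)
    have h2 := ih (q + 4) (by omega)
    have e : q + 4 * (k + 1) = q + 4 + 4 * k := by ring
    rw [e]
    generalize hT : C * (q + 4 + 4 * k : ℕ) / (n : ℝ) = T at *
    have h3 : C * (q + 4 : ℕ) / (n : ℝ) ≤ T := by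
      rw [← hT]
      have : ((q + 4 : ℕ) : ℝ) ≤ (q + 4 + 4 * k : ℕ) := Nat.cast_le.mpr (Nat.le_add_right _ _)
      exact div_le_div_of_nonneg_right (mul_le_mul_of_nonneg_left this hC.le) hn0.le
    have h4 : ((lowSet n m q).ncard : ℝ) ≤ C * (q + 4 : ℕ) / n * (lowSet n m (q + 4)).ncard := by
      rw [div_mul_eq_mul_div, le_div_iff₀ hn0]
      exact h1
    have hT0 : 0 ≤ T := by rw [← hT]; positivity
    calc ((lowSet n m q).ncard : ℝ) ≤ T * (lowSet n m (q + 4)).ncard :=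
          h4.trans (mul_le_mul_of_nonneg_right h3 (Nat.cast_nonneg _))
      _ ≤ T * (T ^ k * (planarSet n m).ncard) := mul_le_mul_of_nonneg_left h2 hT0
      _ = _ := by ring

theorem local_case (b : ℝ) (hb : 0 < b) : ∃ α : ℝ, 0 < α ∧ ∃ N : ℕ, ∀ n m q : ℕ, N ≤ n →
    b * n ≤ m → (m : ℝ) ≤ (1 + 1 / 100) * n → (q : ℝ) ≤ α * n →
    ((lowSet n m q).ncard : ℝ) ≤ Real.exp (-(α * n)) * (planarSet n m).ncard := by
  obtain ⟨C, hC, h⟩ := local_iter b hb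
  -- the base `C * 5 * δ` of the `k`-th power is at most `exp (-2)`, with `k` about `δ * n`
  obtain ⟨δ, hδ, hδ1, hδ2⟩ : ∃ δ : ℝ, 0 < δ ∧ δ ≤ 1 / 500 ∧ C * (5 * δ) ≤ Real.exp (-2) := by
    refine ⟨min (1 / 500) (Real.exp (-2) / (5 * C)), by positivity, min_le_left _ _, ?_⟩
    have := min_le_right (1 / 500 : ℝ) (Real.exp (-2) / (5 * C))
    rw [le_div_iff₀ (by positivity)] at this
    linarith
  refine ⟨δ / 2, by positivity, max 1000 ⌈2 / δ⌉₊, fun n m q hn hbm hm hq => ?_⟩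
  have hn1 : 1000 ≤ n := (le_max_left _ _).trans hn
  have hn2 : 2 / δ ≤ n := (Nat.le_ceil _).trans (by exact_mod_cast (le_max_right _ _).trans hn)
  rw [div_le_iff₀ hδ] at hn2
  have hn0 : (0 : ℝ) < n := by
    have : (1000 : ℝ) ≤ n := by exact_mod_cast hn1
    linarith
  set k := ⌊δ * n⌋₊ with hk
  have hk1 : (k : ℝ) ≤ δ * n := Nat.floor_le (by positivity)
  have hk2 : δ * n < k + 1 := Nat.lt_floor_add_one _
  have hqk : (q + 4 * k : ℕ) ≤ 5 * δ * (n : ℝ) := by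
    push_cast
    have : 0 < δ * n := by positivity
    linarith
  have hm' : 100 * m ≤ 101 * n := by
    have : 100 * (m : ℝ) ≤ 101 * n := by linarith
    exact_mod_cast this
  have hq' : 100 * (q + 4 * k) ≤ n * 1 := by
    have h1 : 5 * δ * (n : ℝ) ≤ 5 * (1 / 500) * n := by gcongr
    have : 100 * ((q + 4 * k : ℕ) : ℝ) ≤ n * 1 := by linarith
    exact_mod_cast this
  refine (h n m q k hn1 hbm hm' (by omega)).trans ?_
  refine mul_le_mul_of_nonneg_right ?_ (Nat.cast_nonneg _)
  have hbase : C * (q + 4 * k : ℕ) / (n : ℝ) ≤ Real.exp (-2) := by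
    refine le_trans ?_ hδ2
    rw [div_le_iff₀ hn0]
    have := mul_le_mul_of_nonneg_left hqk hC.le
    linarith
  refine (pow_le_pow_left₀ (by positivity) hbase k).trans ?_
  rw [← Real.exp_nat_mul, Real.exp_le_exp]
  linarith

/-- Low-leaf planar graphs are exponentially rare throughout the range `b n ≤ m ≤ B n`. -/
theorem low_rare (b B : ℝ) (hb : 0 < b) (hB : B < 3) : ∃ α : ℝ, 0 < α ∧ ∃ N : ℕ, ∀ n m q : ℕ,
    N ≤ n → b * n ≤ m → (m : ℝ) ≤ B * n → (q : ℝ) ≤ α * n →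
    ((lowSet n m q).ncard : ℝ) ≤ Real.exp (-(α * n)) * (planarSet n m).ncard := by
  obtain ⟨α₁, h1, N₁, H1⟩ := global_case (max B 1) (1 / 100) (le_max_right _ _)
    (max_lt hB (by norm_num)) (by norm_num)
  obtain ⟨α₂, h2, N₂, H2⟩ := local_case b hb
  refine ⟨min α₁ α₂, lt_min h1 h2, max N₁ N₂, fun n m q hn hbm hm hq => ?_⟩
  have hn0 : (0 : ℝ) ≤ n := Nat.cast_nonneg n
  have g1 := mul_le_mul_of_nonneg_right (min_le_left α₁ α₂) hn0
  have g2 := mul_le_mul_of_nonneg_right (min_le_right α₁ α₂) hn0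
  rcases le_total ((1 + 1 / 100) * (n : ℝ)) m with hc | hc
  · refine (H1 n m q ((le_max_left _ _).trans hn) hc
      (hm.trans (mul_le_mul_of_nonneg_right (le_max_left _ _) hn0)) (hq.trans g1)).trans ?_
    exact mul_le_mul_of_nonneg_right (Real.exp_le_exp.mpr (by linarith)) (Nat.cast_nonneg _)
  · refine (H2 n m q ((le_max_right _ _).trans hn) hbm hc (hq.trans g2)).trans ?_
    exact mul_le_mul_of_nonneg_right (Real.exp_le_exp.mpr (by linarith)) (Nat.cast_nonneg _)

end PendantEdges

theorem pendant_edges_linear (b B : ℝ) (hb : 0 < b) (hB : B < 3) :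
    ∃ α : ℝ, 0 < α ∧
      ∀ m : ℕ → ℕ,
        (∀ᶠ n : ℕ in atTop, b * (n : ℝ) ≤ (m n : ℝ) ∧ (m n : ℝ) ≤ B * (n : ℝ)) →
        ∀ᶠ n : ℕ in atTop,
          planarProb n (m n) (fun G => (pendantCount G : ℝ) < α * n) <
            Real.exp (-(α * n)) := by
  obtain ⟨α, hα, N, H⟩ := PendantEdges.low_rare b B hb hB
  refine ⟨α / 2, by positivity, fun m hm => ?_⟩
  filter_upwards [hm, eventually_ge_atTop N, eventually_ge_atTop 1] with n hmn hN h1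
  have hn0 : (0 : ℝ) < n := by exact_mod_cast h1
  have hq : ((⌊α * n⌋₊ : ℕ) : ℝ) ≤ α * n := Nat.floor_le (by positivity)
  have h2 := H n (m n) ⌊α * n⌋₊ hN hmn.1 hmn.2 hq
  have hsub : ({G ∈ planarSet n (m n) | (pendantCount G : ℝ) < α / 2 * n}.ncard : ℝ) ≤
      (PendantEdges.lowSet n (m n) ⌊α * n⌋₊).ncard := by
    norm_cast
    refine Set.ncard_le_ncard ?_ (Set.toFinite _)
    rintro G ⟨⟨hp, he⟩, hlt⟩
    refine ⟨hp, he, Nat.le_floor ?_⟩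
    have : ((PendantEdges.leaves G).ncard : ℝ) ≤ 2 * pendantCount G := by
      exact_mod_cast PendantEdges.leaves_le_pendant G
    linarith
  have hlt : Real.exp (-(α * n)) < Real.exp (-(α / 2 * n)) := by
    rw [Real.exp_lt_exp]
    have : 0 < α * n := by positivity
    linarith
  refine lt_of_le_of_lt ?_ hlt
  exact div_le_of_le_mul₀ (Nat.cast_nonneg _) (Real.exp_pos _).le (hsub.trans h2)
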